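/- The Hochschild homology HH_k(A^pol_{2n}) of the polynomial Weyl algebra (with coefficients in the bimodule A^pol_{2n}) vanishes for every k ≠ 2n, and HH_{2n}(A^pol_{2n}) is a free K-module of rank one, generated by the class of the cycle c_{2n} = ∑_{σ∈S_{2n}} sign(σ) 1⊗y_{σ(1)}⊗⋯⊗y_{σ(2n)} in the normalized Hochschild chain complex. -/

import Mathlib

noncomputable section
open MvPolynomial MeasureTheory

/-- The ground ring `K = ℂ[ε,ε⁻¹]` of Laurent polynomials in `ε`. -/
abbrev Kc : Type := LaurentPolynomial ℂ

/-- The element `ε ∈ K`. -/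
def eps : Kc := LaurentPolynomial.T 1

/-- The underlying space of the polynomial Weyl algebra `A^pol_{2n}`:
polynomials in the variables `y_1, …, y_{2n}` (with `y_{2r-1} = p_r`, `y_{2r} = q_r`,
`0`-indexed below) over `K`. -/
abbrev Apol (n : ℕ) : Type := MvPolynomial (Fin (2*n)) Kc

/-- The `k`-fold tensor power `A^{⊗k}` of `A = A^pol_{2n}` over `K`, realized as the
polynomial ring in `k` groups of `2n` variables. -/
abbrev Tens (n k : ℕ) : Type := MvPolynomial (Fin k × Fin (2*n)) Kc

/-- index of `p_r` among the variables `y` (0-indexed). -/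
def pVar (n : ℕ) (r : Fin n) : Fin (2*n) := ⟨2*r.1, by have := r.2; omega⟩
/-- index of `q_r` among the variables `y` (0-indexed). -/
def qVar (n : ℕ) (r : Fin n) : Fin (2*n) := ⟨2*r.1+1, by have := r.2; omega⟩

/-- Partial derivative in the variable `y_v` of the `i`-th tensor factor, as a `K`-linear
endomorphism of `A^{⊗k}`. -/
def Dop (n k : ℕ) (i : Fin k) (v : Fin (2*n)) : Module.End Kc (Tens n k) :=
  (pderiv (i, v)).toLinearMap

/-- The operator `α_{ij}` on `A^{⊗k}`:
`α_{ij} = (1/2) ∑_r (∂_{p_r}⊗∂_{q_r} − ∂_{q_r}⊗∂_{p_r})` acting on factors `i` and `j`.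
By construction `α_{ji} = −α_{ij}`. -/
def alphaOp (n k : ℕ) (i j : Fin k) : Module.End Kc (Tens n k) :=
  algebraMap ℂ Kc (1/2) • ∑ r : Fin n,
    (Dop n k i (pVar n r) * Dop n k j (qVar n r) - Dop n k i (qVar n r) * Dop n k j (pVar n r))

/-- The operator `π_{2n}` on `A^{⊗(2n+1)}`:
`π_{2n}(a_0⊗⋯⊗a_{2n}) = ∑_{σ∈S_{2n}} sign(σ) a_0⊗∂_{y_{σ(1)}}a_1⊗⋯⊗∂_{y_{σ(2n)}}a_{2n}`. -/
def piOp (n : ℕ) : Module.End Kc (Tens n (2*n+1)) :=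
  ∑ σ : Equiv.Perm (Fin (2*n)),
    (Equiv.Perm.sign σ : ℤ) •
      (List.ofFn (fun m : Fin (2*n) => Dop n (2*n+1) m.succ (σ m))).prod

/-- Pairs `i < j` in `Fin m`. -/
abbrev Pairs (m : ℕ) : Type := {p : Fin m × Fin m // p.1 < p.2}

/-- The simplex `Δ_m = {0 ≤ u_1 ≤ ⋯ ≤ u_m ≤ 1}` in `ℝ^m`. -/
def simplexSet (m : ℕ) : Set (Fin m → ℝ) :=
  {u | (∀ i, 0 ≤ u i ∧ u i ≤ 1) ∧ ∀ i j : Fin m, i ≤ j → u i ≤ u j}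

/-- Extension of `u : ℝ^m` to `ℝ^{m+1}` by the convention `u_0 = 0`. -/
def cons0 (m : ℕ) (u : Fin m → ℝ) : Fin (m+1) → ℝ := Fin.cons 0 u

/-- The (commuting) product `∏_{i<j} α_{ij}^{K(i,j)}`. -/
def alphaPowProd (n k : ℕ) (K : Pairs k → ℕ) : Module.End Kc (Tens n k) :=
  (Finset.univ.toList.map (fun p : Pairs k => alphaOp n k p.1.1 p.1.2 ^ (K p))).prod

/-- The Hochschild cochain `τ_{2n} : A^{⊗(2n+1)} → K`,
`τ_{2n}(a) = μ_{2n} ∫_{Δ_{2n}} ∏_{0≤i<j≤2n} e^{ε(2u_i−2u_j+1)α_{ij}} π_{2n}(a) du`,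
with the exponentials expanded as (locally finite) Taylor series and integrated term by
term; `μ` takes the product of the constant terms of the factors. -/
def tau (n : ℕ) (a : Tens n (2*n+1)) : Kc :=
  ∑ K ∈ Fintype.piFinset (fun _ : Pairs (2*n+1) => Finset.range (a.totalDegree + 1)),
    (algebraMap ℂ Kc
        ((((∫ u in simplexSet (2*n),
            ∏ p : Pairs (2*n+1),
              (2 * cons0 (2*n) u p.1.1 - 2 * cons0 (2*n) u p.1.2 + 1) ^ (K p)) : ℝ) : ℂ)
          * (∏ p : Pairs (2*n+1), ((K p).factorial : ℂ))⁻¹)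
        * eps ^ (∑ p : Pairs (2*n+1), K p)) •
      constantCoeff (alphaPowProd n (2*n+1) K (piOp n a))

/-- The embedding of `A` as the `i`-th tensor factor of `A^{⊗k}`. -/
def embA (n k : ℕ) (i : Fin k) : Apol n →ₐ[Kc] Tens n k :=
  rename (fun v => (i, v))

/-- The elementary tensor `a_0 ⊗ ⋯ ⊗ a_{k-1} ∈ A^{⊗k}`. -/
def elemT {n k : ℕ} (a : Fin k → Apol n) : Tens n k :=
  ∏ i : Fin k, embA n k i (a i)

/-- `exp(ε f)` applied to `a`, for a locally nilpotent operator `f` that strictly decreases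
total degree (so that the series is finite on every argument). -/
def expEps {n k : ℕ} (f : Module.End Kc (Tens n k)) (a : Tens n k) : Tens n k :=
  ∑ m ∈ Finset.range (a.totalDegree + 1),
    (algebraMap ℂ Kc ((m.factorial : ℂ)⁻¹) * eps ^ m) • (f ^ m) a

/-- The Moyal star product `f ⋆ g = m(exp(εα)(f⊗g))` on `A^pol_{2n}`. -/
def moyal (n : ℕ) (f g : Apol n) : Apol n :=
  aeval (fun v : Fin 2 × Fin (2*n) => (X v.2 : Apol n))
    (expEps (alphaOp n 2 0 1) (elemT ![f, g]))

/-- The bracket `[f,g]_ε = (1/ε)(f⋆g − g⋆f)`. -/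
def brkt (n : ℕ) (f g : Apol n) : Apol n :=
  (LaurentPolynomial.T (-1) : Kc) • (moyal n f g - moyal n g f)

/-- `sp_{2n}`, identified with the space of homogeneous quadratic polynomials in the `y`'s
with complex coefficients, as a ℂ-submodule of `A^pol_{2n}`. -/
def spSub (n : ℕ) : Submodule ℂ (Apol n) :=
  Submodule.span ℂ {f : Apol n | ∃ i j : Fin (2*n), f = X i * X j}


/-- Index map merging tensor factors `j` and `j+1` of `A^{⊗(k+2)}` into factor `j`. -/
def mergeIdx (k : ℕ) (j : Fin (k+1)) (s : Fin (k+2)) : Fin (k+1) :=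
  if h : s.1 ≤ j.1 then ⟨s.1, by have := j.2; omega⟩ else ⟨s.1 - 1, by have := s.2; omega⟩

/-- Index map merging the last tensor factor of `A^{⊗(k+2)}` into factor `0`. -/
def cycIdx (k : ℕ) (s : Fin (k+2)) : Fin (k+1) :=
  if h : s.1 = k+1 then ⟨0, by omega⟩ else ⟨s.1, by have := s.2; omega⟩

/-- `a_0⊗⋯⊗a_{k+1} ↦ a_0⊗⋯⊗(a_j ⋆ a_{j+1})⊗⋯⊗a_{k+1}`: Moyal multiplication of the
adjacent tensor factors `j, j+1` (twist by `exp(εα_{j,j+1})`, then merge the variables). -/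
def mulAt (n k : ℕ) (j : Fin (k+1)) (P : Tens n (k+2)) : Tens n (k+1) :=
  aeval (fun v : Fin (k+2) × Fin (2*n) => (X (mergeIdx k j v.1, v.2) : Tens n (k+1)))
    (expEps (alphaOp n (k+2) j.castSucc j.succ) P)

/-- `a_0⊗⋯⊗a_{k+1} ↦ (a_{k+1} ⋆ a_0)⊗a_1⊗⋯⊗a_k`: Moyal multiplication of the last
factor onto the first. -/
def mulCyc (n k : ℕ) (P : Tens n (k+2)) : Tens n (k+1) :=
  aeval (fun v : Fin (k+2) × Fin (2*n) => (X (cycIdx k v.1, v.2) : Tens n (k+1)))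
    (expEps (alphaOp n (k+2) (Fin.last (k+1)) 0) P)

/-- The Hochschild boundary `d_Hoch : C_{k+1}(A) = A^{⊗(k+2)} → C_k(A) = A^{⊗(k+1)}`. -/
def dH (n k : ℕ) (P : Tens n (k+2)) : Tens n (k+1) :=
  (∑ j : Fin (k+1), ((-1:ℤ)^j.1) • mulAt n k j P) + ((-1:ℤ)^(k+1)) • mulCyc n k P

/-- Substitute `0` for all variables of the tensor factors in `S` (i.e. apply the counit
`a ↦ a(0)` on those factors). -/
def setZeroS (n k : ℕ) (S : Finset (Fin k)) : Tens n k →ₐ[Kc] Tens n k :=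
  aeval (fun v : Fin k × Fin (2*n) => if v.1 ∈ S then 0 else X v)

/-- The projection of `C_k(A) = A^{⊗(k+1)}` onto the normalized subcomplex
`A ⊗ I^{⊗k}` (`I` = augmentation ideal), along the degenerate part; it realizes the
quotient `C̄_k(A) = A⊗(A/K1)^{⊗k}`. -/
def projI (n k : ℕ) (P : Tens n (k+1)) : Tens n (k+1) :=
  ∑ S ∈ (Finset.univ : Finset (Finset (Fin (k+1)))).filter (fun S => (0 : Fin (k+1)) ∉ S),
    ((-1:ℤ)^S.card) • setZeroS n (k+1) S P

/-- `P ∈ A ⊗ I^{⊗k}`, the realization of the normalized chains `C̄_k(A) = A⊗(A/K1)^{⊗k}`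
inside `A^{⊗(k+1)}`: each factor `i ≥ 1` has vanishing constant term. -/
def IsNormT (n k : ℕ) (P : Tens n (k+1)) : Prop :=
  ∀ i : Fin (k+1), i ≠ 0 → setZeroS n (k+1) {i} P = 0

/-- `P` is a cycle in the normalized Hochschild complex. -/
def IsCycleT (n : ℕ) : (k : ℕ) → Tens n (k+1) → Prop
  | 0, _ => True
  | (m+1), P => projI n m (dH n m P) = 0

/-- The cycle `c_{2n} = ∑_{σ∈S_{2n}} sign(σ) 1⊗y_{σ(1)}⊗⋯⊗y_{σ(2n)}`. -/
def c2n (n : ℕ) : Tens n (2*n+1) :=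
  ∑ σ : Equiv.Perm (Fin (2*n)), (Equiv.Perm.sign σ : ℤ) •
    elemT (Fin.cons 1 (fun i : Fin (2*n) => (X (σ i) : Apol n)))

namespace HW

/-- polynomials in `k` groups (slots) of variables. -/
abbrev T (R V : Type) [CommRing R] (k : ℕ) : Type := MvPolynomial (Fin k × V) R

section slots
variable {R V : Type} [CommRing R]

/-- set the variables of the slots in `S` to zero -/
def sz {k : ℕ} (S : Finset (Fin k)) : T R V k →ₐ[R] T R V k :=
  aeval (fun v : Fin k × V => if v.1 ∈ S then 0 else X v)

/-- rename slots -/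
def rn {a b : ℕ} (f : Fin a → Fin b) : T R V a →ₐ[R] T R V b :=
  rename (fun x : Fin a × V => (f x.1, x.2))

@[simp] lemma rn_X {a b : ℕ} (f : Fin a → Fin b) (x : Fin a × V) :
    rn f (X x : T R V a) = X (f x.1, x.2) := by simp [rn]

lemma sz_X {k : ℕ} (S : Finset (Fin k)) (x : Fin k × V) :
    sz S (X x : T R V k) = if x.1 ∈ S then 0 else X x := by simp [sz]

lemma sz_sz {k : ℕ} (S S' : Finset (Fin k)) (P : T R V k) :
    sz S (sz S' P) = sz (S ∪ S') P := by
  have : (sz S).comp (sz S') = (sz (S ∪ S') : T R V k →ₐ[R] T R V k) := by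
    apply MvPolynomial.algHom_ext
    intro x
    simp only [AlgHom.comp_apply, sz_X, Finset.mem_union]
    by_cases h : x.1 ∈ S' <;> by_cases h' : x.1 ∈ S <;> simp [h, h', sz_X]
  exact congrArg (fun f => f P) this

lemma sz_empty {k : ℕ} (P : T R V k) : sz ∅ P = P := by
  have : (sz ∅ : T R V k →ₐ[R] T R V k) = AlgHom.id R _ := by
    apply MvPolynomial.algHom_ext
    intro x
    simp [sz_X]
  exact congrArg (fun f => f P) this

open Classical in
lemma coeff_sz {k : ℕ} (S : Finset (Fin k)) (P : T R V k) (e : Fin k × V →₀ ℕ) :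
    coeff e (sz S P) = if (∀ s ∈ S, ∀ v, e (s, v) = 0) then coeff e P else 0 := by
  induction P using MvPolynomial.induction_on' with
  | add p q hp hq => rw [map_add, coeff_add, hp, hq, coeff_add]; split_ifs <;> simp
  | monomial u r =>
    have key : sz S (monomial u r : T R V k) =
        if (∀ s ∈ S, ∀ v, u (s, v) = 0) then monomial u r else 0 := by
      split_ifs with h
      · rw [sz, aeval_monomial, monomial_eq, algebraMap_eq]
        congr 1
        apply Finsupp.prod_congr
        intro x hx
        have : x.1 ∉ S := fun hS => by
          have := h x.1 hS x.2
          simp at hx; exact hx this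
        simp [this]
      · push Not at h
        obtain ⟨s, hs, v, hv⟩ := h
        rw [sz, aeval_monomial, Finsupp.prod]
        rw [Finset.prod_eq_zero (i := (s, v))]
        · simp
        · simpa using hv
        · simp [hs, hv]
    rw [key]
    by_cases hu : u = e
    · subst hu; split_ifs <;> simp
    · split_ifs <;> simp [coeff_monomial, hu]

/-- polynomials not depending on slot `s` -/
def Indep {k : ℕ} (s : Fin k) : Submodule R (T R V k) :=
  LinearMap.ker ((sz {s} : T R V k →ₐ[R] T R V k).toLinearMap - LinearMap.id)

lemma mem_Indep {k : ℕ} {s : Fin k} {P : T R V k} : P ∈ Indep s ↔ sz {s} P = P := by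
  simp [Indep, sub_eq_zero]

/-- degenerate chains -/
def Deg (R V : Type) [CommRing R] (k : ℕ) : Submodule R (T R V k) :=
  ⨆ s : {s : Fin k // s.val ≠ 0}, Indep s.1

lemma Indep_le_Deg {k : ℕ} {s : Fin k} (hs : s.val ≠ 0) : Indep s ≤ Deg R V k :=
  le_iSup (fun s : {s : Fin k // s.val ≠ 0} => (Indep s.1 : Submodule R (T R V k))) ⟨s, hs⟩

/-- normalized chains -/
def Nm (R V : Type) [CommRing R] (k : ℕ) : Submodule R (T R V k) :=
  ⨅ s : {s : Fin k // s.val ≠ 0}, LinearMap.ker (sz {s.1} : T R V k →ₐ[R] T R V k).toLinearMap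

lemma mem_Nm {k : ℕ} {P : T R V k} : P ∈ Nm R V k ↔ ∀ s : Fin k, s.val ≠ 0 → sz {s} P = 0 := by
  simp [Nm]

/-- the set of admissible subsets -/
def adm (k : ℕ) : Finset (Finset (Fin k)) := Finset.univ.filter (fun S => ∀ s ∈ S, s.val ≠ 0)

lemma mem_adm {k : ℕ} {S : Finset (Fin k)} : S ∈ adm k ↔ ∀ s ∈ S, s.val ≠ 0 := by
  simp [adm]

/-- projection onto normalized chains -/
def proj (R V : Type) [CommRing R] (k : ℕ) : T R V k →ₗ[R] T R V k :=
  ∑ S ∈ adm k, ((-1 : ℤ) ^ S.card) • (sz S : T R V k →ₐ[R] T R V k).toLinearMap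

lemma proj_apply {k : ℕ} (P : T R V k) :
    proj R V k P = ∑ S ∈ adm k, ((-1 : ℤ) ^ S.card) • sz S P := by
  simp only [proj, LinearMap.sum_apply, LinearMap.smul_apply, AlgHom.toLinearMap_apply]

lemma alt_sum_zero {k : ℕ} {s : Fin k} (hs : s.val ≠ 0) (P : T R V k) :
    ∑ S ∈ adm k, ((-1 : ℤ) ^ S.card) • sz (S ∪ {s}) P = 0 := by
  classical
  apply Finset.sum_involution (fun S _ => if s ∈ S then S.erase s else insert s S)
  · intro S hS
    split_ifs with h
    · have h1 : S.erase s ∪ {s} = S ∪ {s} := by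
        ext x; by_cases hx : x = s <;> simp [hx]
      rw [h1, Finset.card_erase_of_mem h]
      have : S.card = (S.card - 1) + 1 := by
        have := Finset.card_pos.2 ⟨s, h⟩; omega
      rw [this]; simp [pow_succ]
    · have h1 : insert s S ∪ {s} = S ∪ {s} := by
        ext x; by_cases hx : x = s <;> simp [hx]
      rw [h1, Finset.card_insert_of_notMem h]
      simp [pow_succ]
  · intro S hS hne heq
    split_ifs at heq with h
    · rw [Finset.erase_eq_self] at heq; exact heq h
    · rw [Finset.insert_eq_self] at heq; exact h heq
  · intro S hS
    by_cases h : s ∈ S <;> simp [h]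
  · intro S hS
    rw [mem_adm] at *
    intro x hx
    split_ifs at hx with h
    · exact hS x (Finset.mem_of_mem_erase hx)
    · rcases Finset.mem_insert.1 hx with rfl | hx
      · exact hs
      · exact hS x hx

lemma proj_Deg {k : ℕ} {P : T R V k} (hP : P ∈ Deg R V k) : proj R V k P = 0 := by
  have : Deg R V k ≤ LinearMap.ker (proj R V k) := by
    apply iSup_le
    rintro ⟨s, hs⟩ P hP
    rw [mem_Indep] at hP
    rw [LinearMap.mem_ker, proj_apply, ← alt_sum_zero hs P]
    apply Finset.sum_congr rfl
    intro S _
    rw [← sz_sz, hP]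
  exact this hP

lemma sub_proj_mem {k : ℕ} (P : T R V k) : P - proj R V k P ∈ Deg R V k := by
  have h0 : (∅ : Finset (Fin k)) ∈ adm k := by simp [mem_adm]
  rw [proj_apply, ← Finset.add_sum_erase _ _ h0]
  simp only [Finset.card_empty, pow_zero, one_smul, sz_empty, sub_add_cancel_left]
  apply Submodule.neg_mem
  apply Submodule.sum_mem
  intro S hS
  rw [Finset.mem_erase, mem_adm] at hS
  obtain ⟨s, hs⟩ := Finset.nonempty_iff_ne_empty.2 hS.1
  apply zsmul_mem
  apply Indep_le_Deg (hS.2 s hs)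
  rw [mem_Indep, sz_sz, Finset.union_eq_right.2 (by simpa using hs)]

lemma proj_mem_Nm {k : ℕ} (P : T R V k) : proj R V k P ∈ Nm R V k := by
  rw [mem_Nm]
  intro s hs
  rw [proj_apply, map_sum, ← alt_sum_zero hs P]
  apply Finset.sum_congr rfl
  intro S _
  rw [map_zsmul, sz_sz, Finset.union_comm]

lemma proj_of_Nm {k : ℕ} {P : T R V k} (hP : P ∈ Nm R V k) : proj R V k P = P := by
  rw [mem_Nm] at hP
  have h0 : (∅ : Finset (Fin k)) ∈ adm k := by simp [mem_adm]
  rw [proj_apply, ← Finset.add_sum_erase _ _ h0, Finset.sum_eq_zero]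
  · simp [sz_empty]
  intro S hS
  rw [Finset.mem_erase, mem_adm] at hS
  obtain ⟨s, hs⟩ := Finset.nonempty_iff_ne_empty.2 hS.1
  have : S = S ∪ {s} := by
    ext x; simp; rintro rfl; exact hs
  rw [this, ← sz_sz, hP s (hS.2 s hs)]; simp

lemma Nm_Deg_eq_zero {k : ℕ} {P : T R V k} (hP : P ∈ Nm R V k) (h : P ∈ Deg R V k) : P = 0 := by
  rw [← proj_of_Nm hP, proj_Deg h]

lemma Deg_of_proj {k : ℕ} {P : T R V k} (h : proj R V k P = 0) : P ∈ Deg R V k := by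
  have := sub_proj_mem P
  rwa [h, sub_zero] at this

/-- Any additive map which maps independent things into degenerate ones. -/
lemma map_Deg {R' : Type} [CommRing R'] {a b : ℕ} (f : T R V a →+ T R' V b)
    (h : ∀ s : Fin a, s.val ≠ 0 → ∀ P ∈ (Indep s : Submodule R (T R V a)), f P ∈ Deg R' V b)
    {P : T R V a} (hP : P ∈ Deg R V a) : f P ∈ Deg R' V b := by
  refine Submodule.iSup_induction _ (motive := fun P => f P ∈ Deg R' V b) hP ?_ ?_ ?_
  · rintro ⟨s, hs⟩ P hP; exact h s hs P hP
  · simp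
  · intro p q hp hq; rw [map_add]; exact add_mem hp hq

end slots

/-- cancellation in double alternating sums -/
lemma alt_double_sum {M : Type*} [AddCommGroup M] (k : ℕ) (F : Fin (k+1) → Fin (k+2) → M)
    (hF : ∀ (i : Fin (k+1)) (j : Fin (k+2)) (h : j.1 ≤ i.1),
      F i j = F ⟨j.1, by omega⟩ i.succ) :
    ∑ i : Fin (k+1), ∑ j : Fin (k+2), ((-1 : ℤ)^i.1 * (-1 : ℤ)^j.1) • F i j = 0 := by
  rw [← Finset.sum_product']
  let P := Fin (k + 1) × Fin (k + 2)
  let S : Finset P := {ij : P | (ij.2 : ℕ) ≤ (ij.1 : ℕ)}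
  rw [Finset.univ_product_univ, ← Finset.sum_add_sum_compl S, ← eq_neg_iff_add_eq_zero,
    ← Finset.sum_neg_distrib]
  let φ : ∀ ij : P, ij ∈ S → P := fun ij hij =>
    (Fin.castLT ij.2 (lt_of_le_of_lt (Finset.mem_filter.mp hij).right (Fin.is_lt ij.1)), ij.1.succ)
  apply Finset.sum_bij φ
  · intro ij hij
    simp_rw [S, φ, Finset.compl_filter, Finset.mem_filter_univ, Fin.val_succ,
      Fin.val_castLT] at hij ⊢
    lia
  · rintro ⟨i, j⟩ hij ⟨i', j'⟩ hij' h
    rw [Prod.mk_inj]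
    exact ⟨by simpa [φ] using! congr_arg Prod.snd h,
      by simpa [φ, Fin.castSucc_castLT] using! congr_arg Fin.castSucc (congr_arg Prod.fst h)⟩
  · rintro ⟨i', j'⟩ hij'
    simp_rw [S, Finset.compl_filter, Finset.mem_filter_univ, not_le] at hij'
    refine ⟨(j'.pred <| ?_, Fin.castSucc i'), ?_, ?_⟩
    · rintro rfl
      simp only [Fin.val_zero, not_lt_zero] at hij'
    · simpa [S] using! Nat.le_sub_one_of_lt hij'
    · simp only [φ, Fin.castLT_castSucc, Fin.succ_pred]
  · rintro ⟨i, j⟩ hij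
    have h : j.1 ≤ i.1 := by simpa [S] using hij
    dsimp only
    rw [hF i j h, ← neg_smul]
    congr 1
    simp only [φ, Fin.val_succ, pow_add, pow_one, mul_neg, neg_neg, mul_one, Fin.val_castLT]
    apply mul_comm

end HW

namespace HW

section shift
variable {R σ τ υ : Type} [CommRing R]

/-- `L` lowers the degree by exactly `r`. -/
def Shift (r : ℕ) (L : MvPolynomial σ R →ₗ[R] MvPolynomial τ R) : Prop :=
  ∀ e P, homogeneousComponent e (L P) = L (homogeneousComponent (e + r) P)

lemma Shift.of {r : ℕ} {L : MvPolynomial σ R →ₗ[R] MvPolynomial τ R}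
    (h1 : ∀ N P, P.IsHomogeneous (N + r) → (L P).IsHomogeneous N)
    (h2 : ∀ N P, N < r → P.IsHomogeneous N → L P = 0) : Shift r L := by
  intro e P
  induction P using MvPolynomial.induction_on' with
  | add p q hp hq => simp only [map_add, hp, hq]
  | monomial u a =>
    have hu : (monomial u a : MvPolynomial σ R).IsHomogeneous u.degree :=
      isHomogeneous_monomial a rfl
    rw [homogeneousComponent_of_mem hu]
    by_cases hlt : u.degree < r
    · rw [h2 _ _ hlt hu, map_zero, if_neg (by omega), map_zero]
    · obtain ⟨N, hN⟩ := Nat.exists_eq_add_of_le (not_lt.1 hlt)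
      rw [hN, add_comm r N] at hu
      rw [homogeneousComponent_of_mem (h1 N _ hu)]
      by_cases h : e = N
      · subst h; simp [hN, add_comm]
      · rw [if_neg h, if_neg (by omega), map_zero]

lemma Shift.comp {r s : ℕ} {L : MvPolynomial σ R →ₗ[R] MvPolynomial τ R}
    {L' : MvPolynomial τ R →ₗ[R] MvPolynomial υ R} (h : Shift r L) (h' : Shift s L') :
    Shift (s + r) (L'.comp L) := by
  intro e P
  simp only [LinearMap.comp_apply]
  rw [h', h, add_assoc]

lemma Shift.add {r : ℕ} {L L' : MvPolynomial σ R →ₗ[R] MvPolynomial τ R} (h : Shift r L)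
    (h' : Shift r L') : Shift r (L + L') := by
  intro e P; simp only [LinearMap.add_apply, map_add, h e P, h' e P]

lemma Shift.sub {r : ℕ} {L L' : MvPolynomial σ R →ₗ[R] MvPolynomial τ R} (h : Shift r L)
    (h' : Shift r L') : Shift r (L - L') := by
  intro e P; simp only [LinearMap.sub_apply, map_sub, h e P, h' e P]

lemma Shift.smul {r : ℕ} {L : MvPolynomial σ R →ₗ[R] MvPolynomial τ R} (h : Shift r L)
    (c : R) : Shift r (c • L) := by
  intro e P; simp only [LinearMap.smul_apply, map_smul, h e P]

lemma Shift.zsmul {r : ℕ} {L : MvPolynomial σ R →ₗ[R] MvPolynomial τ R} (h : Shift r L)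
    (c : ℤ) : Shift r (c • L) := by
  intro e P; simp only [LinearMap.smul_apply, map_zsmul, h e P]

lemma Shift.zero {r : ℕ} : Shift r (0 : MvPolynomial σ R →ₗ[R] MvPolynomial τ R) := by
  intro e P; simp

lemma Shift.sum {ι : Type*} {r : ℕ} {L : ι → MvPolynomial σ R →ₗ[R] MvPolynomial τ R}
    (s : Finset ι) (h : ∀ i ∈ s, Shift r (L i)) : Shift r (∑ i ∈ s, L i) := by
  intro e P
  simp only [LinearMap.sum_apply, map_sum]
  exact Finset.sum_congr rfl fun i hi => h i hi e P

lemma Shift.pow {r : ℕ} {L : Module.End R (MvPolynomial σ R)} (h : Shift r L) (m : ℕ) :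
    Shift (r * m) (L ^ m) := by
  induction m with
  | zero => intro e P; simp
  | succ m ih =>
    rw [pow_succ]
    have := h.comp ih
    rw [Nat.mul_succ]; exact this

lemma Shift.algHom (f : MvPolynomial σ R →ₐ[R] MvPolynomial τ R)
    (hf : ∀ x, (f (X x)).IsHomogeneous 1) : Shift 0 f.toLinearMap := by
  apply Shift.of
  · intro N P hP
    have h1 := hP.aeval (fun x => f (X x)) hf
    rw [one_mul] at h1
    have : aeval (fun x => f (X x)) = f := by
      apply MvPolynomial.algHom_ext; intro x; simp
    rw [this] at h1
    exact h1
  · intro N P h; omega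

lemma Shift.pderiv (i : σ) : Shift 1 (pderiv i : Derivation R (MvPolynomial σ R) _).toLinearMap := by
  apply Shift.of
  · intro N P hP
    simpa using hP.pderiv (i := i)
  · intro N P hN hP
    obtain rfl : N = 0 := by omega
    rw [← totalDegree_zero_iff_isHomogeneous, totalDegree_eq_zero_iff_eq_C] at hP
    rw [hP]
    simp

lemma hc_ext {P Q : MvPolynomial σ R}
    (h : ∀ e, homogeneousComponent e P = homogeneousComponent e Q) : P = Q := by
  ext d
  have := congrArg (coeff d) (h d.degree)
  simpa [coeff_homogeneousComponent] using this

lemma hom_iff {P : MvPolynomial σ R} {N : ℕ} :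
    P.IsHomogeneous N ↔ ∀ e, e ≠ N → homogeneousComponent e P = 0 := by
  constructor
  · intro h e he
    rw [homogeneousComponent_of_mem h, if_neg he]
  · intro h
    have : P = homogeneousComponent N P := by
      apply hc_ext
      intro e
      by_cases he : e = N
      · subst he; rw [homogeneousComponent_of_mem (homogeneousComponent_isHomogeneous e P)]; simp
      · rw [h e he, homogeneousComponent_of_mem (homogeneousComponent_isHomogeneous N P), if_neg he]
    rw [this]; exact homogeneousComponent_isHomogeneous N P

lemma hom_degree {P : MvPolynomial σ R} {N : ℕ} (h : P.IsHomogeneous N) {e : σ →₀ ℕ}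
    (he : coeff e P ≠ 0) : e.degree = N := by
  rw [Finsupp.degree_eq_weight_one]; exact h he

lemma Shift.hom {r : ℕ} {L : MvPolynomial σ R →ₗ[R] MvPolynomial τ R} (h : Shift r L) {N : ℕ}
    {P : MvPolynomial σ R} (hP : P.IsHomogeneous (N + r)) : (L P).IsHomogeneous N := by
  rw [hom_iff] at *
  intro e he
  rw [h, hP _ (by omega), map_zero]

lemma Shift.hom_zero {r : ℕ} {L : MvPolynomial σ R →ₗ[R] MvPolynomial τ R} (h : Shift r L) {N : ℕ}
    {P : MvPolynomial σ R} (hP : P.IsHomogeneous N) (hN : N < r) : L P = 0 := by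
  apply hc_ext
  intro e
  rw [h, hom_iff.1 hP _ (by omega)]; simp

end shift

section faces
variable {R V : Type} [CommRing R]

lemma rn_rn {a b c : ℕ} (f : Fin b → Fin c) (g : Fin a → Fin b) (P : T R V a) :
    rn f (rn g P) = rn (f ∘ g) P := by
  simp [rn, rename_rename, Function.comp_def]

lemma rn_id {a : ℕ} {f : Fin a → Fin a} (hf : ∀ s, f s = s) (P : T R V a) :
    rn f P = P := by
  obtain rfl : f = id := funext hf
  have h : (rn id : T R V a →ₐ[R] T R V a) = AlgHom.id R _ := by
    apply MvPolynomial.algHom_ext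
    intro x
    simp
  exact congrArg (fun f => f P) h

lemma sz_rn {a b : ℕ} (f : Fin a → Fin b) (S : Finset (Fin b)) (P : T R V a) :
    sz S (rn f P) = rn f (sz (Finset.univ.filter (fun s => f s ∈ S)) P) := by
  have : (sz S).comp (rn f) = (rn f).comp
      (sz (Finset.univ.filter (fun s => f s ∈ S)) : T R V a →ₐ[R] T R V a) := by
    apply MvPolynomial.algHom_ext
    intro x
    simp only [AlgHom.comp_apply, sz_X, rn_X, Finset.mem_filter, Finset.mem_univ, true_and]
    split_ifs <;> simp
  exact congrArg (fun f => f P) this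

lemma rn_sz_congr {a b : ℕ} (f g : Fin a → Fin b) (S : Finset (Fin a)) (h : ∀ s, s ∉ S → f s = g s)
    (P : T R V a) : rn f (sz S P) = rn g (sz S P) := by
  have : (rn f).comp (sz S) = (rn g).comp (sz S : T R V a →ₐ[R] T R V a) := by
    apply MvPolynomial.algHom_ext
    intro x
    simp only [AlgHom.comp_apply, sz_X]
    split_ifs with hx
    · simp
    · simp [h _ hx]
  exact congrArg (fun f => f P) this

lemma shift_sz {k : ℕ} (S : Finset (Fin k)) :
    Shift 0 (sz S : T R V k →ₐ[R] T R V k).toLinearMap := by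
  apply Shift.algHom
  intro x
  rw [sz_X]
  split_ifs
  · exact isHomogeneous_zero _ _ _
  · exact isHomogeneous_X _ _

lemma shift_rn {a b : ℕ} (f : Fin a → Fin b) : Shift 0 (rn f : T R V a →ₐ[R] _).toLinearMap := by
  apply Shift.algHom
  intro x
  rw [rn_X]
  exact isHomogeneous_X _ _

lemma sz_eq_zero_of_mem {k : ℕ} {S : Finset (Fin k)} {s : Fin k} (hs : s ∈ S) {P : T R V k}
    (h : sz {s} P = 0) : sz S P = 0 := by
  have : S = S ∪ {s} := by
    ext x; simp; rintro rfl; exact hs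
  rw [this, ← sz_sz, h, map_zero]

lemma rn_Nm {a b : ℕ} (f : Fin a → Fin b) (hf : ∀ i : Fin b, i.val ≠ 0 → ∃ s, s.val ≠ 0 ∧ f s = i)
    {P : T R V a} (hP : P ∈ Nm R V a) : rn f P ∈ Nm R V b := by
  rw [mem_Nm] at *
  intro i hi
  obtain ⟨s, hs, rfl⟩ := hf i hi
  rw [sz_rn, sz_eq_zero_of_mem (s := s) (by simp) (hP s hs), map_zero]

lemma hc_Nm {k : ℕ} {P : T R V k} (hP : P ∈ Nm R V k) (e : ℕ) :
    homogeneousComponent e P ∈ Nm R V k := by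
  rw [mem_Nm] at *
  intro s hs
  have := shift_sz {s} e P
  simp only [AlgHom.toLinearMap_apply, hP s hs, map_zero, add_zero] at this
  exact this.symm

lemma hc_Deg {k : ℕ} {P : T R V k} (hP : P ∈ Deg R V k) (e : ℕ) :
    homogeneousComponent e P ∈ Deg R V k := by
  refine map_Deg (homogeneousComponent e).toAddMonoidHom ?_ hP
  intro s hs P hP
  apply Indep_le_Deg hs
  rw [mem_Indep] at *
  have := shift_sz {s} e P
  simp only [AlgHom.toLinearMap_apply, hP, add_zero] at this
  exact this.symm

/-- a monomial of a normalized polynomial involves every slot `≠ 0` -/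
lemma Nm_exists {k : ℕ} {P : T R V k} (hP : P ∈ Nm R V k) {e : Fin k × V →₀ ℕ}
    (he : coeff e P ≠ 0) (s : Fin k) (hs : s.val ≠ 0) : ∃ v, e (s, v) ≠ 0 := by
  by_contra hcon
  push Not at hcon
  rw [mem_Nm] at hP
  have := congrArg (coeff e) (hP s hs)
  rw [coeff_sz, if_pos (by simpa using hcon)] at this
  exact he (by simpa using this)

lemma Nm_degree {k : ℕ} {P : T R V (k+1)} (hP : P ∈ Nm R V (k+1)) {e : Fin (k+1) × V →₀ ℕ}
    (he : coeff e P ≠ 0) : k ≤ e.degree := by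
  classical
  choose v hv using fun i : Fin k => Nm_exists hP he i.succ (by simp)
  let E : Fin (k+1) × V →₀ ℕ := ∑ i : Fin k, Finsupp.single (i.succ, v i) 1
  have h1 : E ≤ e := by
    intro x
    simp only [E, Finsupp.finsetSum_apply, Finsupp.single_apply]
    rw [Finset.sum_ite, Finset.sum_const_zero, add_zero, Finset.sum_const, smul_eq_mul, mul_one]
    by_cases hx : ∃ i, (Fin.succ i, v i) = x
    · obtain ⟨i, rfl⟩ := hx
      have : (Finset.univ.filter fun j : Fin k => (j.succ, v j) = (i.succ, v i)).card ≤ 1 := by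
        rw [Finset.card_le_one]
        intro a ha b hb
        simp only [Finset.mem_filter, Prod.mk.injEq, Fin.succ_inj] at ha hb
        rw [ha.2.1, hb.2.1]
      have := hv i
      omega
    · push Not at hx
      rw [Finset.filter_false_of_mem (by simpa using hx)]; simp
  have h2 : E.degree = k := by
    simp [E, map_sum]
  exact h2.ge.trans (Finsupp.degree_mono h1)

lemma Nm_low {k N : ℕ} {P : T R V (k+1)} (hP : P ∈ Nm R V (k+1)) (hN : P.IsHomogeneous N)
    (h : N < k) : P = 0 := by
  ext e
  rw [coeff_zero]
  by_contra he
  have := Nm_degree hP he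
  have := hom_degree hN he
  omega

end faces

end HW

namespace HW

section bar
variable {R V : Type} [CommRing R]

/-- the bar differential -/
def bd : (k : ℕ) → T R V (k+1) →ₗ[R] T R V k
  | 0 => 0
  | (k+1) => ∑ j : Fin (k+1), ((-1 : ℤ)^j.1) • (rn (mergeIdx k j) : T R V (k+2) →ₐ[R] _).toLinearMap

lemma bd_succ (k : ℕ) (P : T R V (k+2)) :
    bd (k+1) P = ∑ j : Fin (k+1), ((-1 : ℤ)^j.1) • rn (mergeIdx k j) P := by
  simp only [bd, LinearMap.sum_apply, LinearMap.smul_apply, AlgHom.toLinearMap_apply]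

lemma mergeIdx_val (k : ℕ) (j : Fin (k+1)) (s : Fin (k+2)) :
    (mergeIdx k j s).1 = if s.1 ≤ j.1 then s.1 else s.1 - 1 := by
  unfold mergeIdx; split_ifs <;> rfl

lemma shift_bd (k : ℕ) : Shift 0 (bd k : T R V (k+1) →ₗ[R] T R V k) := by
  cases k with
  | zero => exact Shift.zero
  | succ k => exact Shift.sum _ fun j _ => (shift_rn _).zsmul _

lemma bd_bd (k : ℕ) (P : T R V (k+2)) : bd k (bd (k+1) P) = 0 := by
  cases k with
  | zero => rfl
  | succ k =>
    rw [bd_succ, bd_succ]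
    simp only [map_sum, map_zsmul, Finset.smul_sum, smul_smul, rn_rn]
    apply alt_double_sum k (fun i j => rn (mergeIdx k i ∘ mergeIdx (k+1) j) P)
    intro i j h
    congr 2
    funext s
    apply Fin.ext
    simp only [Function.comp, mergeIdx_val, Fin.val_succ]
    split_ifs <;> omega

lemma bd_Nm (k : ℕ) {P : T R V (k+1)} (hP : P ∈ Nm R V (k+1)) : bd k P ∈ Nm R V k := by
  cases k with
  | zero => simp [bd]
  | succ k =>
    rw [bd_succ]
    refine Submodule.sum_mem _ fun j _ => zsmul_mem (rn_Nm _ ?_ hP) _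
    intro i hi
    by_cases h : i.1 ≤ j.1
    · refine ⟨i.castSucc, by simpa using hi, ?_⟩
      apply Fin.ext; simp [mergeIdx_val, h]
    · refine ⟨i.succ, by simp, ?_⟩
      apply Fin.ext
      simp only [mergeIdx_val, Fin.val_succ]
      rw [if_neg (by omega)]; omega

open Classical in
/-- set the variables `v ∈ J` of slot `0` to zero -/
def rho (J : Finset V) {k : ℕ} : T R V k →ₐ[R] T R V k :=
  aeval (fun x : Fin k × V => if x.1.val = 0 ∧ x.2 ∈ J then 0 else X x)

open Classical in
lemma rho_X (J : Finset V) {k : ℕ} (x : Fin k × V) :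
    rho J (X x : T R V k) = if x.1.val = 0 ∧ x.2 ∈ J then 0 else X x := by
  simp [rho]

open Classical in
lemma rho_rho (J J' : Finset V) {k : ℕ} (P : T R V k) : rho J (rho J' P) = rho (J ∪ J') P := by
  have : (rho J).comp (rho J') = (rho (J ∪ J') : T R V k →ₐ[R] T R V k) := by
    apply MvPolynomial.algHom_ext
    intro x
    simp only [AlgHom.comp_apply, rho_X, Finset.mem_union]
    by_cases h : x.1.val = 0 ∧ x.2 ∈ J' <;> by_cases h' : x.1.val = 0 ∧ x.2 ∈ J
    · simp [h, h']
    · simp [h]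
    · rw [if_neg h, rho_X, if_pos h', if_pos (by tauto)]
    · rw [if_neg h, rho_X, if_neg h', if_neg (by tauto)]
  exact congrArg (fun f => f P) this

lemma rho_empty {k : ℕ} (P : T R V k) : rho ∅ P = P := by
  have : (rho ∅ : T R V k →ₐ[R] T R V k) = AlgHom.id R _ := by
    apply MvPolynomial.algHom_ext
    intro x
    simp [rho_X]
  exact congrArg (fun f => f P) this

lemma shift_rho (J : Finset V) {k : ℕ} :
    Shift 0 (rho J : T R V k →ₐ[R] T R V k).toLinearMap := by
  apply Shift.algHom
  intro x
  rw [rho_X]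
  split_ifs
  · exact isHomogeneous_zero _ _ _
  · exact isHomogeneous_X _ _

lemma sz_rho (J : Finset V) {k : ℕ} (S : Finset (Fin k)) (P : T R V k) :
    sz S (rho J P) = rho J (sz S P) := by
  have : (sz S).comp (rho J) = (rho J).comp (sz S : T R V k →ₐ[R] T R V k) := by
    apply MvPolynomial.algHom_ext
    intro x
    simp only [AlgHom.comp_apply, rho_X, sz_X]
    split_ifs with h1 h2 h2 <;> simp [sz_X, rho_X, h1, h2]
  exact congrArg (fun f => f P) this

lemma rho_Nm (J : Finset V) {k : ℕ} {P : T R V k} (hP : P ∈ Nm R V k) : rho J P ∈ Nm R V k := by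
  rw [mem_Nm] at *
  intro s hs
  rw [sz_rho, hP s hs, map_zero]

lemma rho_Deg (J : Finset V) {k : ℕ} {P : T R V k} (hP : P ∈ Deg R V k) : rho J P ∈ Deg R V k := by
  refine map_Deg (rho J : T R V k →ₐ[R] T R V k).toLinearMap.toAddMonoidHom ?_ hP
  intro s hs P hP
  apply Indep_le_Deg hs
  rw [mem_Indep] at *
  change sz {s} (rho J P) = rho J P
  rw [sz_rho, hP]

lemma rho_rn_rho (J : Finset V) {a b : ℕ} (f : Fin a → Fin b)
    (hf : ∀ s, s.val = 0 → (f s).val = 0) (P : T R V a) :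
    rho J (rn f (rho J P)) = rho J (rn f P) := by
  have : ((rho J).comp (rn f)).comp (rho J) = (rho J).comp (rn f : T R V a →ₐ[R] T R V b) := by
    apply MvPolynomial.algHom_ext
    intro x
    simp only [AlgHom.comp_apply, rho_X, rn_X]
    by_cases h1 : x.1.val = 0 ∧ x.2 ∈ J
    · simp [h1, hf x.1 h1.1]
    · simp [h1, rho_X]
  exact congrArg (fun f => f P) this

lemma rho_bd_rho (J : Finset V) (k : ℕ) (P : T R V (k+1)) :
    rho J (bd k (rho J P)) = rho J (bd k P) := by
  cases k with
  | zero => simp [bd]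
  | succ k =>
    rw [bd_succ, bd_succ]
    simp only [map_sum, map_zsmul]
    refine Finset.sum_congr rfl fun j _ => ?_
    rw [rho_rn_rho]
    intro s hs
    simp [mergeIdx_val, hs]

/-- multiplication by a slot-zero variable commutes with the differential -/
lemma bd_X_mul (k : ℕ) (v : V) (P : T R V (k+2)) :
    bd (k+1) (X (0, v) * P) = X (0, v) * bd (k+1) P := by
  rw [bd_succ, bd_succ, Finset.mul_sum]
  refine Finset.sum_congr rfl fun j _ => ?_
  rw [map_mul, rn_X, mul_smul_comm]
  congr 3

lemma X_dvd_of_rho {k : ℕ} (v : V) (P : T R V (k+1)) (h : rho {v} P = 0) :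
    ∃ w, P = X (0, v) * w := by
  let I : Ideal (T R V (k+1)) := Ideal.span {X (0, v)}
  have : (Ideal.Quotient.mkₐ R I).comp (rho {v}) = Ideal.Quotient.mkₐ R I := by
    apply MvPolynomial.algHom_ext
    intro x
    simp only [AlgHom.comp_apply, rho_X, Finset.mem_singleton]
    split_ifs with hx
    · rw [map_zero]
      symm
      simp only [Ideal.Quotient.mkₐ_eq_mk]
      rw [Ideal.Quotient.eq_zero_iff_mem]
      have : x = (0, v) := by
        apply Prod.ext
        · apply Fin.ext; simpa using hx.1
        · simpa using hx.2
      rw [this]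
      exact Ideal.mem_span_singleton_self _
    · rfl
  have h2 := congrArg (fun f => f P) this
  simp only [AlgHom.comp_apply, h, map_zero, Ideal.Quotient.mkₐ_eq_mk] at h2
  have h3 := Ideal.Quotient.eq_zero_iff_mem.1 h2.symm
  obtain ⟨w, hw⟩ := Ideal.mem_span_singleton.1 h3
  exact ⟨w, hw⟩

lemma X_cancel {k : ℕ} {x : Fin k × V} {P Q : T R V k} (h : X x * P = X x * Q) : P = Q :=
  X_mul_cancel_left_iff.1 h

/-- contraction of the bar resolution -/
lemma koszul_base (m N : ℕ) (hN : N ≠ m) (P : T R V (m+1)) (hP : P.IsHomogeneous N)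
    (hn : P ∈ Nm R V (m+1)) (hc : bd m P = 0) :
    ∃ Q : T R V (m+2), Q.IsHomogeneous N ∧ Q ∈ Nm R V (m+2) ∧ bd (m+1) Q = P := by
  refine ⟨rn Fin.succ (P - sz {0} P), ?_, ?_, ?_⟩
  · apply (shift_rn Fin.succ).hom
    apply IsHomogeneous.sub (n := N) hP
    exact (shift_sz {0}).hom hP
  · rw [mem_Nm]
    intro s hs
    obtain ⟨t, rfl⟩ : ∃ t, s = Fin.succ t := ⟨s.pred (by rintro rfl; simp at hs), by simp⟩
    rw [sz_rn]
    have : (Finset.univ.filter fun s : Fin (m+1) => s.succ ∈ ({t.succ} : Finset (Fin (m+2)))) = {t} := by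
      ext x; simp
    rw [this, map_sub, sz_sz]
    by_cases ht : t = 0
    · subst ht; simp
    · rw [mem_Nm] at hn
      have h0 : t.val ≠ 0 := fun h => ht (Fin.ext h)
      rw [hn t h0, sz_eq_zero_of_mem (s := t) (by simp) (hn t h0)]; simp
  · rw [bd_succ, Fin.sum_univ_succ, rn_rn, rn_id]
    swap
    · intro s; apply Fin.ext; simp [mergeIdx_val]
    cases m with
    | zero =>
      have : sz {0} P = 0 := by
        classical
        ext e
        rw [coeff_sz, coeff_zero]
        split_ifs with h
        · have : e = 0 := by
            ext ⟨s, v⟩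
            obtain rfl : s = 0 := Fin.ext (by have := s.2; simp only [Fin.val_zero]; omega)
            exact h 0 (by simp) v
          by_contra he
          have := hom_degree hP he
          subst e
          simp at this
          exact hN this.symm
        · rfl
      simp [this]
    | succ m =>
      have e1 : ∑ i : Fin (m+1), (-1 : ℤ)^(i.succ).1 •
          rn (mergeIdx (m+1) i.succ) (rn Fin.succ (P - sz {0} P)) =
          - rn Fin.succ (bd (m+1) (P - sz {0} P)) := by
        rw [bd_succ, map_sum, ← Finset.sum_neg_distrib]
        refine Finset.sum_congr rfl fun j _ => ?_
        rw [rn_rn, map_zsmul, rn_rn, ← neg_smul]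
        congr 1
        · simp [pow_succ]
        · congr 2
          funext s
          apply Fin.ext
          simp only [Function.comp, mergeIdx_val, Fin.val_succ]
          split_ifs <;> omega
      have hz : ∀ j : Fin (m+1), j ≠ 0 → rn (mergeIdx m j) (sz {0} P) =
          sz {0} (rn (mergeIdx m j) P) := by
        intro j hj
        rw [sz_rn]
        have hj0 : j.val ≠ 0 := fun h => hj (Fin.ext h)
        have hS : (Finset.univ.filter fun s : Fin (m+2) =>
            mergeIdx m j s ∈ ({0} : Finset (Fin (m+1)))) = {0} := by
          ext s
          rw [Finset.mem_filter, Finset.mem_singleton, Finset.mem_singleton, Fin.ext_iff,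
            Fin.ext_iff, mergeIdx_val, Fin.val_zero, Fin.val_zero]
          simp only [Finset.mem_univ, true_and]
          split_ifs <;> omega
        rw [hS]
      have h01 : sz {0} (rn (mergeIdx m 0) P) = 0 := by
        rw [sz_rn, sz_eq_zero_of_mem (s := 1), map_zero]
        · refine Finset.mem_filter.2 ⟨Finset.mem_univ _, ?_⟩
          rw [Finset.mem_singleton]
          apply Fin.ext
          rw [mergeIdx_val]
          simp
        · exact (mem_Nm.1 hn) 1 (by simp)
      have e2 : bd (m+1) (sz {0} P) = rn (mergeIdx m 0) (sz {0} P) := by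
        have h3 : sz {0} (bd (m+1) P) = 0 := by rw [hc, map_zero]
        rw [bd_succ, Fin.sum_univ_succ, map_add, map_zsmul, h01, smul_zero, zero_add, map_sum] at h3
        rw [bd_succ, Fin.sum_univ_succ]
        simp only [Fin.val_zero, pow_zero, one_smul, add_eq_left]
        rw [← h3]
        refine Finset.sum_congr rfl fun j _ => ?_
        rw [hz _ (Fin.succ_ne_zero j), map_zsmul]
      rw [e1, map_sub, hc, zero_sub, map_neg, neg_neg, e2, rn_rn,
        rn_sz_congr _ id, rn_id]
      · simp
      · simp
      · intro s hs
        apply Fin.ext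
        have : s.val ≠ 0 := fun h => hs (by simp [Fin.ext_iff, h])
        have h0 : ¬ s.1 ≤ (0:Fin (m+1)).1 := by rw [Fin.val_zero]; omega
        change (Fin.succ (mergeIdx m 0 s)).val = s.val
        rw [Fin.val_succ, mergeIdx_val, if_neg h0]; omega

/-- the higher homology of the bar complex is concentrated on the diagonal -/
theorem koszul (J : Finset V) : ∀ (m N : ℕ), N ≠ m → ∀ P : T R V (m+1), P.IsHomogeneous N →
    P ∈ Nm R V (m+1) → rho J P = P → rho J (bd m P) = 0 →
    ∃ Q : T R V (m+2), Q.IsHomogeneous N ∧ Q ∈ Nm R V (m+2) ∧ rho J (bd (m+1) Q) = P := by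
  classical
  induction J using Finset.induction_on with
  | empty =>
    intro m N hN P hP hn _ hc
    rw [rho_empty] at hc
    obtain ⟨Q, h1, h2, h3⟩ := koszul_base m N hN P hP hn hc
    exact ⟨Q, h1, h2, by rw [rho_empty, h3]⟩
  | insert v J hv ih =>
    intro m N hN P hP hn hr hc
    rcases Nat.lt_or_ge N m with hlt | hge
    · have := Nm_low hn hP hlt
      subst this
      exact ⟨0, isHomogeneous_zero _ _ _, zero_mem _, by simp⟩
    have hJP : rho J P = P := by
      conv_lhs => rw [← hr]
      rw [rho_rho, show J ∪ insert v J = insert v J by simp, hr]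
    have hins : ∀ {k : ℕ} (Q : T R V k), rho (insert v J) Q = rho {v} (rho J Q) := by
      intro k Q; rw [rho_rho]; rfl
    -- find a correction
    obtain ⟨u, hu1, hu2, hu3, hu4⟩ : ∃ u : T R V (m+1), (X (0, v) * u).IsHomogeneous N ∧
        u ∈ Nm R V (m+1) ∧ rho J u = u ∧ rho J (bd m (P - X (0, v) * u)) = 0 := by
      cases m with
      | zero =>
        refine ⟨0, by simpa using isHomogeneous_zero _ _ _, zero_mem _, by simp, by simp [bd]⟩
      | succ m =>
        rw [hins] at hc
        obtain ⟨w, hw⟩ := X_dvd_of_rho v _ hc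
        have hXJ : ∀ {k : ℕ} (Q : T R V (k+1)), rho J (X (0, v) * Q) = X (0, v) * rho J Q := by
          intro k Q
          rw [map_mul, rho_X, if_neg (by simp [hv])]
        have hwr : rho J w = w := by
          apply X_cancel (x := ((0 : Fin (m+1)), v))
          rw [← hXJ, ← hw, rho_rho, Finset.union_self]
        have hwn : w ∈ Nm R V (m+1) := by
          have h1 : X (0, v) * w ∈ Nm R V (m+1) := by
            rw [← hw]; exact rho_Nm _ (bd_Nm _ hn)
          rw [mem_Nm] at *
          intro s hs
          apply X_cancel (x := ((0 : Fin (m+1)), v))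
          have := h1 s hs
          rw [map_mul, sz_X, if_neg] at this
          · rw [this]; simp
          · simp only [Finset.mem_singleton]; rintro rfl; simp at hs
        have hwh : w.IsHomogeneous (N - 1) := by
          have h1 : (X (0, v) * w).IsHomogeneous N := by
            rw [← hw]; exact (shift_rho J).hom ((shift_bd _).hom hP)
          intro e he
          have h2 : coeff (Finsupp.single (0, v) 1 + e) (X (0, v) * w) ≠ 0 := by
            rwa [coeff_X_mul]
          have h3 := hom_degree h1 h2
          have h4 : e.degree = N - 1 := by
            rw [map_add] at h3
            simp at h3
            omega
          rw [Finsupp.degree_eq_weight_one] at h4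
          exact h4
        have hwc : rho J (bd m w) = 0 := by
          cases m with
          | zero => simp [bd]
          | succ m =>
            apply X_cancel (x := ((0 : Fin (m+1)), v))
            rw [← hXJ, ← bd_X_mul, ← hw, rho_bd_rho, bd_bd]; simp
        obtain ⟨u, h1, h2, h3⟩ := ih m (N-1) (by omega) w hwh hwn hwr hwc
        refine ⟨rho J u, ?_, rho_Nm _ h2, by rw [rho_rho, Finset.union_self], ?_⟩
        · have := (isHomogeneous_X R ((0 : Fin (m+2)), v)).mul ((shift_rho J).hom (N := N-1) h1)
          rwa [show 1 + (N-1) = N by omega] at this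
        · rw [map_sub, map_sub, bd_X_mul, hXJ, rho_bd_rho, h3, hw, sub_self]
    have hX : X (0, v) * u ∈ Nm R V (m+1) := by
      rw [mem_Nm] at *
      intro s hs
      rw [map_mul, hu2 s hs, mul_zero]
    obtain ⟨Q, h1, h2, h3⟩ := ih m N hN (P - X (0, v) * u) (hP.sub hu1) (sub_mem hn hX)
      (by rw [map_sub, hJP, map_mul, hu3, rho_X, if_neg (by simp [hv])]) hu4
    refine ⟨Q, h1, h2, ?_⟩
    have hvP : rho {v} P = P := by
      have := hins P
      rw [hJP, hr] at this
      exact this.symm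
    rw [hins, h3, map_sub, hvP, map_mul, rho_X]
    simp

end bar

end HW

namespace HW

/-- the face maps on indices, including the cyclic one -/
def fidx (k : ℕ) (j s : Fin (k+2)) : Fin (k+1) :=
  ⟨if j.1 = k+1 ∧ s.1 = k+1 then 0 else if s.1 ≤ j.1 then s.1 else s.1 - 1, by
    have := s.2; have := j.2; split_ifs <;> omega⟩

lemma fidx_val (k : ℕ) (j s : Fin (k+2)) : (fidx k j s).1 =
    if j.1 = k+1 ∧ s.1 = k+1 then 0 else if s.1 ≤ j.1 then s.1 else s.1 - 1 := rfl

/-- cyclic successor -/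
def nx {k : ℕ} (j : Fin (k+1)) : Fin (k+1) :=
  ⟨if j.1 = k then 0 else j.1 + 1, by have := j.2; split_ifs <;> omega⟩

lemma nx_val {k : ℕ} (j : Fin (k+1)) : (nx j).1 = if j.1 = k then 0 else j.1 + 1 := rfl

lemma fidx_castSucc (k : ℕ) (j : Fin (k+1)) : fidx k j.castSucc = mergeIdx k j := by
  funext s
  apply Fin.ext
  have := j.2
  rw [fidx_val, mergeIdx_val]
  simp only [Fin.val_castSucc]
  rw [if_neg (by omega)]

lemma fidx_last (k : ℕ) : fidx k (Fin.last (k+1)) = cycIdx k := by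
  funext s
  apply Fin.ext
  have := s.2
  rw [fidx_val]
  unfold cycIdx
  simp only [Fin.val_last, true_and]
  split_ifs
  · rfl
  · rfl
  · omega

lemma nx_castSucc {k : ℕ} (j : Fin (k+1)) : nx j.castSucc = j.succ := by
  apply Fin.ext
  rw [nx_val]
  have := j.2
  simp only [Fin.val_castSucc, Fin.val_succ]
  rw [if_neg (by omega)]

lemma nx_last (k : ℕ) : nx (Fin.last k) = 0 := by
  apply Fin.ext
  simp [nx_val]

section facesum
variable {R V : Type} [CommRing R]

lemma face_indep {k : ℕ} {s j : Fin (k+2)} (hs : s.1 ≠ 0) (h1 : j.1 ≠ s.1) (h2 : j.1 + 1 ≠ s.1)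
    {P : T R V (k+2)} (hP : P ∈ Indep s) : rn (fidx k j) P ∈ Deg R V (k+1) := by
  have hs2 := s.2
  have hj2 := j.2
  refine Indep_le_Deg (s := fidx k j s) ?_ ?_
  · rw [fidx_val]; split_ifs <;> omega
  · rw [mem_Indep] at *
    rw [sz_rn]
    have : (Finset.univ.filter fun u => fidx k j u ∈ ({fidx k j s} : Finset (Fin (k+1)))) = {s} := by
      ext u
      have hu := u.2
      rw [Finset.mem_filter, Finset.mem_singleton, Finset.mem_singleton, Fin.ext_iff, Fin.ext_iff,
        fidx_val, fidx_val]
      simp only [Finset.mem_univ, true_and]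
      constructor
      · split_ifs <;> omega
      · intro h; rw [h]
    rw [this, hP]

/-- alternating sums of faces of degenerate elements -/
lemma face_sum {k : ℕ} (s : Fin (k+2)) (hs : s.1 ≠ 0) (G : Fin (k+2) → T R V (k+2))
    (hG : ∀ j, G j ∈ Indep s) (hGs : ∀ j : Fin (k+2), j.1 + 1 = s.1 → G j = G s) :
    ∑ j, ((-1 : ℤ)^j.1) • rn (fidx k j) (G j) ∈ Deg R V (k+1) := by
  have hs2 := s.2
  let r : Fin (k+2) := ⟨s.1 - 1, by omega⟩
  have hrs : r ≠ s := by intro h; have := congrArg Fin.val h; simp only [r] at this; omega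
  rw [← Finset.add_sum_erase _ _ (Finset.mem_univ s),
    ← Finset.add_sum_erase _ _ (Finset.mem_erase.2 ⟨hrs, Finset.mem_univ r⟩), ← add_assoc]
  apply add_mem
  · have e : G r = G s := hGs r (by simp only [r]; omega)
    have e2 : rn (fidx k r) (G s) = rn (fidx k s) (G s) := by
      have := mem_Indep.1 (hG s)
      rw [← this]
      apply rn_sz_congr
      intro u hu
      have hu' : u.1 ≠ s.1 := fun h => hu (by rw [Finset.mem_singleton]; exact Fin.ext h)
      apply Fin.ext
      have := u.2
      simp only [fidx_val, r]
      split_ifs <;> omega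
    have e3 : (-1 : ℤ)^s.1 = - (-1 : ℤ)^r.1 := by
      have : s.1 = r.1 + 1 := by simp only [r]; omega
      rw [this, pow_succ]; ring
    rw [e, e2, e3, neg_smul, neg_add_cancel]
    exact zero_mem _
  · refine Submodule.sum_mem _ fun j hj => zsmul_mem (face_indep hs ?_ ?_ (hG j)) _
    · intro h
      have : j = s := Fin.ext h
      subst this; simp at hj
    · intro h
      have : j = r := Fin.ext (by simp only [r]; omega)
      subst this; simp at hj

end facesum

section ops
variable {n : ℕ}

lemma pderiv_comm {R σ : Type} [CommRing R] (i j : σ) (P : MvPolynomial σ R) :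
    pderiv i (pderiv j P) = pderiv j (pderiv i P) := by
  classical
  have : ⁅(pderiv i : Derivation R (MvPolynomial σ R) (MvPolynomial σ R)),
      (pderiv j : Derivation R (MvPolynomial σ R) (MvPolynomial σ R))⁆ = 0 := by
    apply derivation_ext
    intro x
    rw [Derivation.commutator_apply]
    simp only [pderiv_X, Pi.single_apply, Derivation.zero_apply]
    split_ifs <;> simp
  have h := congrArg (fun D => D P) this
  simp only [Derivation.commutator_apply, Derivation.zero_apply] at h
  exact sub_eq_zero.1 h

lemma Dop_apply {k : ℕ} (i : Fin k) (v : Fin (2*n)) (P : Tens n k) :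
    Dop n k i v P = pderiv (i, v) P := rfl

lemma Dop_comm {k : ℕ} (i j : Fin k) (v w : Fin (2*n)) : Commute (Dop n k i v) (Dop n k j w) := by
  change Dop n k i v * Dop n k j w = Dop n k j w * Dop n k i v
  refine LinearMap.ext fun P => ?_
  rw [Module.End.mul_apply, Module.End.mul_apply, Dop_apply, Dop_apply, Dop_apply, Dop_apply,
    pderiv_comm]

lemma end_sub_comm {R M : Type} [CommRing R] [AddCommGroup M] [Module R M] {a b c : Module.End R M}
    (h : Commute a c) (h' : Commute b c) : Commute (a - b) c := by
  refine LinearMap.ext fun x => ?_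
  have h1 := LinearMap.congr_fun h x
  have h2 := LinearMap.congr_fun h' x
  simp only [Module.End.mul_apply, LinearMap.sub_apply, map_sub] at *
  rw [h1, h2]

lemma alpha_comm {k : ℕ} (i j i' j' : Fin k) : Commute (alphaOp n k i j) (alphaOp n k i' j') := by
  unfold alphaOp
  apply Commute.smul_left
  apply Commute.smul_right
  apply Commute.sum_left
  intro r _
  apply Commute.sum_right
  intro r' _
  have h : ∀ (a b : Fin k) (v w : Fin (2*n)) (c d : Fin k) (x y : Fin (2*n)),
    Commute (Dop n k a v * Dop n k b w) (Dop n k c x * Dop n k d y) := fun a b v w c d x y =>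
    ((Dop_comm _ _ _ _).mul_left (Dop_comm _ _ _ _)).mul_right
      ((Dop_comm _ _ _ _).mul_left (Dop_comm _ _ _ _))
  exact end_sub_comm (end_sub_comm (h _ _ _ _ _ _ _ _) (h _ _ _ _ _ _ _ _)).symm
    (end_sub_comm (h _ _ _ _ _ _ _ _) (h _ _ _ _ _ _ _ _)).symm |>.symm

lemma shift_alpha {k : ℕ} (i j : Fin k) : Shift 2 (alphaOp n k i j) := by
  unfold alphaOp
  apply Shift.smul
  apply Shift.sum
  intro r _
  exact Shift.sub ((Shift.pderiv _).comp (Shift.pderiv _)) ((Shift.pderiv _).comp (Shift.pderiv _))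

lemma Dop_indep {k : ℕ} {s : Fin k} {v : Fin (2*n)} {P : Tens n k}
    (hP : P ∈ (Indep s : Submodule Kc _)) : Dop n k s v P = 0 := by
  classical
  rw [mem_Indep] at hP
  refine MvPolynomial.ext _ _ fun e => ?_
  rw [Dop_apply, coeff_pderiv, ← hP, coeff_sz, if_neg]
  · simp
  · intro h
    have := h s (by simp) v
    simp at this

lemma Dop_sz {k : ℕ} (S : Finset (Fin k)) (s : Fin k) (hs : s ∉ S) (v : Fin (2*n)) (P : Tens n k) :
    Dop n k s v (sz S P) = sz S (Dop n k s v P) := by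
  classical
  refine MvPolynomial.ext _ _ fun e => ?_
  rw [Dop_apply, Dop_apply, coeff_pderiv, coeff_sz, coeff_sz, coeff_pderiv]
  have : (∀ t ∈ S, ∀ w, (e + Finsupp.single (s, v) 1 : Fin k × Fin (2*n) →₀ ℕ) (t, w) = 0) ↔
      (∀ t ∈ S, ∀ w, e (t, w) = 0) := by
    refine forall_congr' fun t => forall_congr' fun ht => forall_congr' fun w => ?_
    have : s ≠ t := by rintro rfl; exact hs ht
    simp [Finsupp.single_apply, this]
  by_cases h : (∀ t ∈ S, ∀ w, e (t, w) = 0)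
  · rw [if_pos (this.2 h), if_pos h]
  · rw [if_neg (fun h' => h (this.1 h')), if_neg h, zero_mul]

lemma Dop_mem_indep {k : ℕ} {s t : Fin k} {v : Fin (2*n)} {P : Tens n k}
    (hP : P ∈ (Indep s : Submodule Kc _)) : Dop n k t v P ∈ (Indep s : Submodule Kc _) := by
  by_cases h : t = s
  · subst h; rw [Dop_indep hP]; exact zero_mem _
  · rw [mem_Indep] at *
    rw [← Dop_sz _ _ (by simpa using h), hP]

lemma alpha_apply {k : ℕ} (i j : Fin k) (P : Tens n k) : alphaOp n k i j P =
    algebraMap ℂ Kc (1/2) • ∑ r : Fin n,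
    (Dop n k i (pVar n r) (Dop n k j (qVar n r) P) - Dop n k i (qVar n r) (Dop n k j (pVar n r) P)) := by
  simp only [alphaOp, LinearMap.smul_apply, LinearMap.sum_apply, LinearMap.sub_apply,
    Module.End.mul_apply]

lemma alpha_mem_indep {k : ℕ} {s : Fin k} (i j : Fin k) {P : Tens n k}
    (hP : P ∈ (Indep s : Submodule Kc _)) : alphaOp n k i j P ∈ (Indep s : Submodule Kc _) := by
  rw [alpha_apply]
  exact Submodule.smul_mem _ _ (Submodule.sum_mem _ fun r _ =>
    sub_mem (Dop_mem_indep (Dop_mem_indep hP)) (Dop_mem_indep (Dop_mem_indep hP)))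

lemma alpha_pow_mem_indep {k : ℕ} {s : Fin k} (i j : Fin k) (m : ℕ) {P : Tens n k}
    (hP : P ∈ (Indep s : Submodule Kc _)) :
    (alphaOp n k i j ^ m) P ∈ (Indep s : Submodule Kc _) := by
  induction m with
  | zero => simpa using hP
  | succ m ih => rw [pow_succ', Module.End.mul_apply]; exact alpha_mem_indep _ _ ih

lemma alpha_indep_left {k : ℕ} (i j : Fin k) {P : Tens n k}
    (hP : P ∈ (Indep i : Submodule Kc _)) : alphaOp n k i j P = 0 := by
  rw [alpha_apply]
  simp only [Dop_indep (Dop_mem_indep hP), sub_zero, Finset.sum_const_zero, smul_zero]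

lemma alpha_indep_right {k : ℕ} (i j : Fin k) {P : Tens n k}
    (hP : P ∈ (Indep j : Submodule Kc _)) : alphaOp n k i j P = 0 := by
  rw [alpha_apply]
  simp only [Dop_indep hP, map_zero, sub_zero, Finset.sum_const_zero, smul_zero]

lemma pderiv_rn {R V : Type} [CommRing R] {a b : ℕ} (f : Fin a → Fin b) (i : Fin b) (v : V)
    (P : T R V a) :
    pderiv (i, v) (rn f P) = rn f (∑ s, if f s = i then pderiv (s, v) P else 0) := by
  classical
  induction P using MvPolynomial.induction_on with
  | C c => 
    rw [algHom_C]
    simp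
  | add P Q hP hQ =>
    rw [map_add, map_add, hP, hQ, ← map_add, ← Finset.sum_add_distrib]
    congr 2
    funext s
    split_ifs <;> simp
  | mul_X P x hP =>
    rw [map_mul, Derivation.leibniz, hP, rn_X]
    have : ∀ s : Fin a, (if f s = i then pderiv (s, v) (P * X x) else 0) =
       P * (if f s = i then pderiv (s, v) (X x) else 0) + 
       X x * (if f s = i then pderiv (s, v) P else 0) := by
      intro s
      split_ifs
      · rw [Derivation.leibniz]; rfl
      · simp
    rw [Finset.sum_congr rfl fun s _ => this s, Finset.sum_add_distrib, ← Finset.mul_sum,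
      ← Finset.mul_sum, map_add, map_mul, map_mul, rn_X]
    congr 1
    rw [smul_eq_mul]
    congr 1
    obtain ⟨t, w⟩ := x
    simp only [pderiv_X, Pi.single_apply, Prod.mk.injEq]
    rw [Finset.sum_eq_single t]
    · simp only [true_and]
      split_ifs <;> simp_all
    · intro s _ hs
      have : ¬ (t = s ∧ w = v) := fun h => hs h.1.symm
      simp [this]
    · simp

lemma Dop_rn {a b : ℕ} (f : Fin a → Fin b) (i : Fin b) (v : Fin (2*n)) (P : Tens n a) :
    Dop n b i v (rn f P) = rn f (∑ s, if f s = i then Dop n a s v P else 0) :=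
  pderiv_rn f i v P

lemma alpha_rn {a b : ℕ} (f : Fin a → Fin b) (i j : Fin b) (P : Tens n a) :
    alphaOp n b i j (rn f P) =
      rn f ((∑ s, ∑ t, (if f s = i ∧ f t = j then (1:ℤ) else 0) • alphaOp n a s t) P) := by
  have h1 : ∀ v w, Dop n b i v (Dop n b j w (rn f P)) =
      rn f (∑ s, ∑ t, (if f s = i ∧ f t = j then (1:ℤ) else 0) • Dop n a s v (Dop n a t w P)) := by
    intro v w
    rw [Dop_rn, Dop_rn]
    congr 1
    refine Finset.sum_congr rfl fun s _ => ?_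
    by_cases h : f s = i
    · simp only [h, if_true, true_and, map_sum]
      refine Finset.sum_congr rfl fun t _ => ?_
      split_ifs <;> simp
    · simp [h]
  rw [alpha_apply]
  simp only [h1, ← map_sub, ← map_sum, ← map_smul]
  congr 1
  simp only [LinearMap.sum_apply, LinearMap.smul_apply, alpha_apply]
  simp only [← Finset.sum_sub_distrib, ← smul_sub]
  rw [Finset.sum_comm, Finset.smul_sum]
  refine Finset.sum_congr rfl fun s _ => ?_
  rw [Finset.sum_comm, Finset.smul_sum]
  refine Finset.sum_congr rfl fun t _ => ?_
  rw [← Finset.smul_sum, smul_comm]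

lemma alpha_pow_rn {a b : ℕ} (f : Fin a → Fin b) (i j : Fin b) (m : ℕ) (P : Tens n a) :
    (alphaOp n b i j ^ m) (rn f P) =
    rn f (((∑ s, ∑ t, (if f s = i ∧ f t = j then (1:ℤ) else 0) • alphaOp n a s t) ^ m) P) := by
  induction m with
  | zero => simp
  | succ m ih => rw [pow_succ', Module.End.mul_apply, ih, alpha_rn, pow_succ', Module.End.mul_apply]

end ops

end HW

namespace HW

section diff
variable {n : ℕ}

/-- the order `m` part of the Hochschild differential -/
def dm (n m : ℕ) : (k : ℕ) → Tens n (k+1) →ₗ[Kc] Tens n k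
  | 0 => 0
  | (k+1) => ∑ j : Fin (k+2), ((-1 : ℤ)^j.1) •
      (rn (fidx k j) : Tens n (k+2) →ₐ[Kc] _).toLinearMap.comp (alphaOp n (k+2) j (nx j) ^ m)

lemma dm_succ (m k : ℕ) (P : Tens n (k+2)) : dm n m (k+1) P =
    ∑ j : Fin (k+2), ((-1 : ℤ)^j.1) • rn (fidx k j) ((alphaOp n (k+2) j (nx j) ^ m) P) := by
  simp only [dm, LinearMap.sum_apply, LinearMap.smul_apply, AlgHom.toLinearMap_apply,
    LinearMap.comp_apply]

lemma shift_dm (m k : ℕ) : Shift (2*m) (dm n m k) := by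
  cases k with
  | zero => exact Shift.zero
  | succ k =>
    refine Shift.sum _ fun j _ => Shift.zsmul ?_ _
    have := ((shift_alpha (n := n) j (nx j)).pow m).comp (shift_rn (fidx k j))
    rwa [zero_add] at this

lemma dm_high (m k : ℕ) (P : Tens n (k+1)) (h : P.totalDegree < 2*m) : dm n m k P = 0 := by
  apply hc_ext
  intro e
  rw [shift_dm m k e P, homogeneousComponent_eq_zero _ _ (by omega)]
  simp

lemma dm_Deg (m k : ℕ) {P : Tens n (k+1)} (hP : P ∈ Deg Kc (Fin (2*n)) (k+1)) :
    dm n m k P ∈ Deg Kc (Fin (2*n)) k := by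
  cases k with
  | zero => exact zero_mem _
  | succ k =>
    refine map_Deg (dm n m (k+1)).toAddMonoidHom ?_ hP
    intro s hs P hP
    change dm n m (k+1) P ∈ _
    rw [dm_succ]
    refine face_sum s hs (fun j => (alphaOp n (k+2) j (nx j) ^ m) P) ?_ ?_
    · intro j; exact alpha_pow_mem_indep _ _ _ hP
    · intro j hj
      cases m with
      | zero => simp
      | succ m =>
        have : nx j = s := by
          apply Fin.ext
          rw [nx_val, if_neg]
          · exact hj
          · have := s.2; omega
        simp only [pow_succ, Module.End.mul_apply]
        rw [alpha_indep_left s _ hP, this, alpha_indep_right _ s hP]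
        simp

/-- the coefficient of the exponential series -/
def cm (m : ℕ) : Kc := algebraMap ℂ Kc ((m.factorial : ℂ)⁻¹) * eps ^ m

/-- the truncated differential is independent of the truncation -/
lemma dd_trunc (k M : ℕ) (P : Tens n (k+1)) (h : P.totalDegree < M) :
    ∑ m ∈ Finset.range (P.totalDegree + 1), cm m • dm n m k P =
    ∑ m ∈ Finset.range M, cm m • dm n m k P := by
  apply Finset.sum_subset
  · intro x; simp; omega
  · intro x _ hx
    rw [dm_high, smul_zero]
    simp at hx; omega

/-- the Hochschild differential -/
def dd (n k : ℕ) : Tens n (k+1) →ₗ[Kc] Tens n k where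
  toFun P := ∑ m ∈ Finset.range (P.totalDegree + 1), cm m • dm n m k P
  map_add' P Q := by
    have h := totalDegree_add P Q
    rw [dd_trunc k (max P.totalDegree Q.totalDegree + 1) P (by omega),
      dd_trunc k (max P.totalDegree Q.totalDegree + 1) Q (by omega),
      dd_trunc k (max P.totalDegree Q.totalDegree + 1) (P + Q) (by omega)]
    simp only [map_add, smul_add, Finset.sum_add_distrib]
  map_smul' c P := by
    have h := totalDegree_smul_le c P
    rw [dd_trunc k (P.totalDegree + 1) (c • P) (by omega)]
    simp only [map_smul, Finset.smul_sum, RingHom.id_apply]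
    exact Finset.sum_congr rfl fun m _ => smul_comm _ _ _

lemma dd_eq (k M : ℕ) (P : Tens n (k+1)) (h : P.totalDegree < M) :
    dd n k P = ∑ m ∈ Finset.range M, cm m • dm n m k P := dd_trunc k M P h

lemma dd_Deg (k : ℕ) {P : Tens n (k+1)} (hP : P ∈ Deg Kc (Fin (2*n)) (k+1)) :
    dd n k P ∈ Deg Kc (Fin (2*n)) k := by
  rw [dd_eq k _ P (Nat.lt_succ_self _)]
  exact Submodule.sum_mem _ fun m _ => Submodule.smul_mem _ _ (dm_Deg _ _ hP)

lemma dd_zero (P : Tens n 1) : dd n 0 P = 0 := by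
  rw [dd_eq 0 _ P (Nat.lt_succ_self _)]
  simp [dm]

lemma rn_eq (a b : ℕ) (f : Fin a → Fin b) (P : Tens n a) :
    aeval (fun v : Fin a × Fin (2*n) => (X (f v.1, v.2) : Tens n b)) P = rn f P := by
  have : (aeval (fun v : Fin a × Fin (2*n) => (X (f v.1, v.2) : Tens n b)) : _ →ₐ[Kc] _) = rn f := by
    apply MvPolynomial.algHom_ext
    intro x
    rw [aeval_X, rn_X]
  rw [this]

lemma dH_eq (k : ℕ) (P : Tens n (k+2)) : dH n k P = dd n (k+1) P := by
  rw [dd_eq (k+1) _ P (Nat.lt_succ_self _)]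
  simp only [dm_succ]
  unfold dH mulAt mulCyc
  simp only [rn_eq, expEps]
  simp only [Fin.sum_univ_castSucc (n := k+1), fidx_castSucc, nx_castSucc, fidx_last, nx_last,
    Fin.val_castSucc, Fin.val_last, smul_add, Finset.sum_add_distrib, map_sum, map_smul,
    Finset.smul_sum]
  congr 1
  · rw [Finset.sum_comm]
    refine Finset.sum_congr rfl fun m _ => Finset.sum_congr rfl fun j _ => ?_
    rw [smul_comm]; rfl
  · refine Finset.sum_congr rfl fun m _ => ?_
    rw [smul_comm]; rfl

end diff
section dsq
variable {n : ℕ}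

/-- operator for the double face -/
def dblOp (n k : ℕ) (i : Fin (k+2)) (j : Fin (k+3)) : Module.End Kc (Tens n (k+3)) :=
  ∑ s, ∑ t, ((if fidx (k+1) j s = i ∧ fidx (k+1) j t = nx i then (1:ℤ) else 0) +
    (if s = j ∧ t = nx j then (1:ℤ) else 0)) • alphaOp n (k+3) s t

lemma dbl_eq (n k : ℕ) (i : Fin (k+2)) (j : Fin (k+3)) : dblOp n k i j =
    (∑ s, ∑ t, (if fidx (k+1) j s = i ∧ fidx (k+1) j t = nx i then (1:ℤ) else 0) •
      alphaOp n (k+3) s t) + alphaOp n (k+3) j (nx j) := by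
  unfold dblOp
  simp only [add_smul, Finset.sum_add_distrib]
  congr 1
  rw [Finset.sum_eq_single j, Finset.sum_eq_single (nx j)]
  · simp
  · intro t _ ht; simp [ht]
  · simp
  · intro s _ hs; simp [hs]
  · simp

set_option maxHeartbeats 2000000 in
lemma idx_num (k i j s t : ℕ) (hi : i < k+2) (hj : j ≤ i) (hs : s < k+3) (ht : t < k+3) :
    ∀ a b c d e f g : ℕ,
    a = (if j = k+2 ∧ s = k+2 then 0 else if s ≤ j then s else s - 1) →
    b = (if j = k+2 ∧ t = k+2 then 0 else if t ≤ j then t else t - 1) →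
    c = (if i = k+1 then 0 else i + 1) → 
    d = (if j = k+2 then 0 else j + 1) →
    e = (if i+1 = k+2 ∧ s = k+2 then 0 else if s ≤ i+1 then s else s - 1) →
    f = (if i+1 = k+2 ∧ t = k+2 then 0 else if t ≤ i+1 then t else t - 1) →
    g = (if j = k+1 then 0 else j + 1) →
    ∀ h, h = (if i+1 = k+2 then 0 else i + 1 + 1) →
    s ≠ t →
    (if a = i ∧ b = c then (1:ℤ) else 0) + (if s = j ∧ t = d then (1:ℤ) else 0) =
    (if e = j ∧ f = g then (1:ℤ) else 0) + (if s = i+1 ∧ t = h then (1:ℤ) else 0) := by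
  intro a b c d e f g ha hb hc hd he hf hg h hh hst
  rw [if_neg (by omega)] at ha hb hd
  rcases Nat.lt_or_ge i (k+1) with h1 | h1
  · rw [if_neg (by omega)] at hc he hf hg hh
    subst hc hd hg hh
    split_ifs at ha hb he hf <;> subst ha hb he hf <;> split_ifs <;> omega
  · rw [if_pos (by omega)] at hc hh
    subst hc hd hh
    obtain rfl : i = k+1 := by omega
    simp only [true_and] at he hf
    rcases Nat.lt_or_ge j (k+1) with h2 | h2
    · rw [if_neg (by omega)] at hg
      subst hg
      split_ifs at ha hb he hf <;> subst ha hb he hf <;> split_ifs <;> first | omega | (exfalso; simp_all; done)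
    · rw [if_pos (by omega)] at hg
      obtain rfl : j = k+1 := by omega
      subst hg
      split_ifs at ha hb he hf <;> subst ha hb he hf <;> split_ifs <;> first | omega | (exfalso; simp_all; done)

lemma alpha_self (k : ℕ) (s : Fin k) : alphaOp n k s s = 0 := by
  refine LinearMap.ext fun P => ?_
  rw [alpha_apply]
  simp only [Dop_apply, pderiv_comm (s, pVar n _), sub_self, Finset.sum_const_zero, smul_zero,
    LinearMap.zero_apply]

lemma dbl_comm (k : ℕ) (i : Fin (k+2)) (j : Fin (k+3)) (h : j.1 ≤ i.1) :
    dblOp n k i j = dblOp n k ⟨j.1, by omega⟩ i.succ := by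
  unfold dblOp
  refine Finset.sum_congr rfl fun s _ => Finset.sum_congr rfl fun t _ => ?_
  by_cases hst : s = t
  · subst hst; rw [alpha_self, smul_zero, smul_zero]
  congr 1
  simp only [Fin.ext_iff, Fin.val_succ]
  refine idx_num k i.1 j.1 s.1 t.1 i.2 h s.2 t.2 _ _ _ _ _ _ _ (fidx_val _ _ _) (fidx_val _ _ _)
    (nx_val _) (nx_val _) (fidx_val _ _ _) (fidx_val _ _ _) (nx_val _) _ (nx_val _)
    (fun h => hst (Fin.ext h))

lemma fidx_comm (k : ℕ) (i : Fin (k+2)) (j : Fin (k+3)) (h : j.1 ≤ i.1) :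
    fidx k i ∘ fidx (k+1) j = fidx k ⟨j.1, by omega⟩ ∘ fidx (k+1) i.succ := by
  funext s
  apply Fin.ext
  have := i.2
  have := s.2
  simp only [Function.comp, fidx_val, Fin.val_succ]
  split_ifs <;> omega

lemma dm_dm (k a b : ℕ) (P : Tens n (k+3)) : dm n a (k+1) (dm n b (k+2) P) =
    ∑ i : Fin (k+2), ∑ j : Fin (k+3), ((-1 : ℤ)^i.1 * (-1 : ℤ)^j.1) •
      rn (fidx k i ∘ fidx (k+1) j)
      (((∑ s, ∑ t, (if fidx (k+1) j s = i ∧ fidx (k+1) j t = nx i then (1:ℤ) else 0) •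
        alphaOp n (k+3) s t) ^ a) ((alphaOp n (k+3) j (nx j) ^ b) P)) := by
  rw [dm_succ, dm_succ]
  refine Finset.sum_congr rfl fun i _ => ?_
  rw [map_sum, map_sum, Finset.smul_sum]
  refine Finset.sum_congr rfl fun j _ => ?_
  rw [map_zsmul, map_zsmul, smul_smul, alpha_pow_rn, rn_rn]

lemma dm_anti (k m : ℕ) (P : Tens n (k+2)) :
    ∑ x ∈ Finset.HasAntidiagonal.antidiagonal m, (m.choose x.1) • dm n x.1 k (dm n x.2 (k+1) P) = 0 := by
  cases k with
  | zero => simp [dm]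
  | succ k =>
    simp only [dm_dm, Finset.smul_sum]
    rw [Finset.sum_comm]
    rw [Finset.sum_congr rfl fun i _ => Finset.sum_comm]
    refine Eq.trans ?_ (alt_double_sum (k+1)
      (fun i j => rn (fidx k i ∘ fidx (k+1) j) ((dblOp n k i j ^ m) P)) ?_)
    · refine Finset.sum_congr rfl fun i _ => Finset.sum_congr rfl fun j _ => ?_
      have hc : Commute (∑ s, ∑ t, (if fidx (k+1) j s = i ∧ fidx (k+1) j t = nx i then (1:ℤ) else 0) •
        alphaOp n (k+3) s t) (alphaOp n (k+3) j (nx j)) := by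
        apply Commute.sum_left
        intro s _
        apply Commute.sum_left
        intro t _
        split_ifs
        · rw [one_smul]; exact alpha_comm _ _ _ _
        · rw [zero_smul]; exact Commute.zero_left _
      rw [dbl_eq, hc.add_pow']
      simp only [LinearMap.sum_apply, map_sum, Finset.smul_sum]
      refine Finset.sum_congr rfl fun x _ => ?_
      rw [LinearMap.smul_apply, Module.End.mul_apply, map_nsmul, smul_comm]
    · intro i j h
      simp only [dbl_comm k i j h, fidx_comm k i j h]

lemma cm_mul (a b : ℕ) : cm a * cm b = cm (a+b) * ((a+b).choose a : Kc) := by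
  unfold cm
  have h : ((a.factorial : ℂ)⁻¹) * ((b.factorial : ℂ)⁻¹) = (((a+b).factorial : ℂ)⁻¹) * ((a+b).choose a : ℂ) := by
    have h1 : (a.factorial : ℂ) ≠ 0 := Nat.cast_ne_zero.2 (Nat.factorial_ne_zero _)
    have h2 : (b.factorial : ℂ) ≠ 0 := Nat.cast_ne_zero.2 (Nat.factorial_ne_zero _)
    have h3 : ((a+b).factorial : ℂ) ≠ 0 := Nat.cast_ne_zero.2 (Nat.factorial_ne_zero _)
    have h4 := Nat.add_choose_mul_factorial_mul_factorial a b
    rw [← Nat.choose_symm_add] at h4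
    have h5 : (((a+b).choose a : ℕ) : ℂ) * a.factorial * b.factorial = (a+b).factorial := by
      exact_mod_cast h4
    field_simp
    rw [← h5]; ring
  have h' := congrArg (algebraMap ℂ Kc) h
  rw [map_mul, map_mul, map_natCast] at h'
  rw [pow_add]
  linear_combination eps^a * eps^b * h'

theorem dd_dd (k : ℕ) (P : Tens n (k+2)) : dd n k (dd n (k+1) P) = 0 := by
  obtain ⟨M, h1, h2⟩ : ∃ M, P.totalDegree < M ∧ (dd n (k+1) P).totalDegree < M :=
    ⟨P.totalDegree + (dd n (k+1) P).totalDegree + 1, by omega, by omega⟩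
  rw [dd_eq k M _ h2, dd_eq (k+1) M P h1]
  simp only [map_sum, map_smul, Finset.smul_sum, smul_smul]
  rw [← Finset.sum_product']
  have hz : ∀ x ∈ Finset.range M ×ˢ Finset.range M,
      x ∉ (Finset.range M ×ˢ Finset.range M).filter (fun x => x.1 + x.2 < M) →
      (cm x.1 * cm x.2) • dm n x.1 k (dm n x.2 (k+1) P) = 0 := by
    intro x hx hx'
    simp only [Finset.mem_filter, hx, true_and, not_lt] at hx'
    have : dm n x.1 k (dm n x.2 (k+1) P) = 0 := by
      apply hc_ext
      intro e
      rw [shift_dm x.1 k e, shift_dm x.2 (k+1), homogeneousComponent_eq_zero _ _ (by omega)]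
      simp
    rw [this, smul_zero]
  rw [← Finset.sum_subset (Finset.filter_subset _ _) hz]
  rw [← Finset.sum_fiberwise_of_maps_to (g := fun x : ℕ × ℕ => x.1 + x.2) (t := Finset.range M)]
  · apply Finset.sum_eq_zero
    intro m hm
    have : ((Finset.range M ×ˢ Finset.range M).filter (fun x => x.1 + x.2 < M)).filter
        (fun x => x.1 + x.2 = m) = Finset.HasAntidiagonal.antidiagonal m := by
      ext x
      simp at *
      omega
    rw [this]
    have h3 := congrArg (fun y => cm m • y) (dm_anti k m P)
    simp only [smul_zero, Finset.smul_sum] at h3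
    rw [← h3]
    refine Finset.sum_congr rfl fun x hx => ?_
    have hx := Finset.HasAntidiagonal.mem_antidiagonal.1 hx
    rw [cm_mul, hx, mul_smul, Nat.cast_smul_eq_nsmul]
  · intro x hx
    simp at *; omega

end dsq
end HW

namespace HW

section hkr
variable {R V : Type} [CommRing R]

/-- the commutative Hochschild differential -/
def d0 : (k : ℕ) → T R V (k+1) →ₗ[R] T R V k
  | 0 => 0
  | (k+1) => ∑ j : Fin (k+2), ((-1 : ℤ)^j.1) • (rn (fidx k j) : T R V (k+2) →ₐ[R] _).toLinearMap

lemma d0_succ (k : ℕ) (P : T R V (k+2)) :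
    d0 (k+1) P = ∑ j : Fin (k+2), ((-1 : ℤ)^j.1) • rn (fidx k j) P := by
  simp only [d0, LinearMap.sum_apply, LinearMap.smul_apply, AlgHom.toLinearMap_apply]

lemma dm_zero_eq (n k : ℕ) : dm n 0 k = d0 k := by
  cases k with
  | zero => rfl
  | succ k =>
    refine LinearMap.ext fun P => ?_
    rw [dm_succ, d0_succ]
    simp

lemma shift_d0 (k : ℕ) : Shift 0 (d0 k : T R V (k+1) →ₗ[R] T R V k) := by
  cases k with
  | zero => exact Shift.zero
  | succ k => exact Shift.sum _ fun j _ => (shift_rn _).zsmul _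

lemma d0_Deg (k : ℕ) {P : T R V (k+1)} (hP : P ∈ Deg R V (k+1)) : d0 k P ∈ Deg R V k := by
  cases k with
  | zero => exact zero_mem _
  | succ k =>
    refine map_Deg (d0 (k+1) : T R V (k+2) →ₗ[R] _).toAddMonoidHom ?_ hP
    intro s hs P hP
    change d0 (k+1) P ∈ _
    rw [d0_succ]
    exact face_sum s hs (fun _ => P) (fun _ => hP) fun _ _ => rfl

lemma d0_bd (k : ℕ) (P : T R V (k+2)) :
    d0 (k+1) P = bd (k+1) P + (-1 : ℤ)^(k+1) • rn (fidx k (Fin.last (k+1))) P := by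
  rw [d0_succ, bd_succ, Fin.sum_univ_castSucc]
  simp only [fidx_castSucc, Fin.val_castSucc, Fin.val_last]

variable [Fintype V]

lemma rho_univ {k : ℕ} (P : T R V (k+1)) : rho Finset.univ P = sz {0} P := by
  have : (rho Finset.univ : T R V (k+1) →ₐ[R] _) = sz {0} := by
    apply MvPolynomial.algHom_ext
    intro x
    rw [rho_X, sz_X]
    by_cases h : x.1.val = 0
    · rw [if_pos ⟨h, Finset.mem_univ _⟩, if_pos (Finset.mem_singleton.2 (Fin.ext h))]
    · rw [if_neg (fun h' => h h'.1), if_neg]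
      intro h'
      exact h (by rw [Finset.mem_singleton.1 h']; rfl)
  rw [this]

lemma rho_d0 (k : ℕ) {P : T R V (k+1)} (hP : P ∈ Nm R V (k+1)) :
    rho Finset.univ (d0 k P) = rho Finset.univ (bd k P) := by
  cases k with
  | zero => rfl
  | succ k =>
    rw [d0_bd, map_add, map_zsmul]
    have : rho Finset.univ (rn (fidx k (Fin.last (k+1))) P) = 0 := by
      rw [rho_univ, sz_rn, sz_eq_zero_of_mem (s := Fin.last (k+1)), map_zero]
      · refine Finset.mem_filter.2 ⟨Finset.mem_univ _, ?_⟩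
        rw [Finset.mem_singleton]
        apply Fin.ext
        rw [fidx_val]; simp
      · exact mem_Nm.1 hP _ (by simp)
    rw [this, smul_zero, add_zero]

end hkr

section psi
variable {K V : Type} [CommRing K]

/-- translation of the variables by slot zero -/
def Psi {k : ℕ} : T K V k →ₐ[K] T (MvPolynomial V K) V k :=
  aeval (fun x => if x.1.val = 0 then C (X x.2) else C (X x.2) + X x)

/-- inverse translation -/
def Psi' {k : ℕ} : T (MvPolynomial V K) V (k+1) →+* T K V (k+1) :=
  eval₂Hom (rename (fun v => ((0 : Fin (k+1)), v)) : MvPolynomial V K →ₐ[K] _).toRingHom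
    (fun x => if x.1.val = 0 then 0 else X x - X (0, x.2))

lemma Psi_X {k : ℕ} (x : Fin k × V) : Psi (X x : T K V k) =
    if x.1.val = 0 then C (X x.2) else C (X x.2) + X x := by
  simp [Psi]

lemma Psi_C {k : ℕ} (c : K) : Psi (C c : T K V k) = C (C c) := by
  rw [algHom_C]; rfl

lemma Psi'_X {k : ℕ} (x : Fin (k+1) × V) : Psi' (X x : T (MvPolynomial V K) V (k+1)) =
    if x.1.val = 0 then 0 else X x - X (0, x.2) := by
  simp [Psi']

lemma Psi'_C {k : ℕ} (f : MvPolynomial V K) : Psi' (C f : T (MvPolynomial V K) V (k+1)) =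
    rename (fun v => ((0 : Fin (k+1)), v)) f := by
  simp [Psi']

lemma Psi'_Psi {k : ℕ} (P : T K V (k+1)) : Psi' (Psi P) = P := by
  have : Psi'.comp (Psi : T K V (k+1) →ₐ[K] _).toRingHom = RingHom.id _ := by
    apply MvPolynomial.ringHom_ext
    · intro c
      change Psi' (Psi (C c)) = C c
      rw [Psi_C, Psi'_C, rename_C]
    · intro x
      change Psi' (Psi (X x)) = X x
      rw [Psi_X]
      split_ifs with h
      · rw [Psi'_C, rename_X]
        congr 1
        apply Prod.ext
        · exact Fin.ext (by simp [h])
        · rfl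
      · rw [map_add, Psi'_C, rename_X, Psi'_X, if_neg h]; ring
  exact congrArg (fun f => f P) this

lemma Psi_Deg {k : ℕ} {P : T K V k} (hP : P ∈ Deg K V k) : Psi P ∈ Deg (MvPolynomial V K) V k := by
  classical
  refine map_Deg (Psi : T K V k →ₐ[K] _).toLinearMap.toAddMonoidHom ?_ hP
  intro s hs P hP
  apply Indep_le_Deg hs
  rw [mem_Indep] at *
  change sz {s} (Psi P) = Psi P
  have : (sz {s} : T (MvPolynomial V K) V k →ₐ[_] _).toRingHom.comp
      ((Psi : T K V k →ₐ[K] _).toRingHom.comp (sz {s} : T K V k →ₐ[K] _).toRingHom) =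
      (Psi : T K V k →ₐ[K] _).toRingHom.comp (sz {s} : T K V k →ₐ[K] _).toRingHom := by
    apply MvPolynomial.ringHom_ext
    · intro c
      change sz {s} (Psi (sz {s} (C c))) = Psi (sz {s} (C c))
      rw [algHom_C (sz {s})]
      change sz {s} (Psi (C c)) = Psi (C c)
      rw [Psi_C, algHom_C]; rfl
    · intro x
      change sz {s} (Psi (sz {s} (X x))) = Psi (sz {s} (X x))
      rw [sz_X]
      split_ifs with h
      · simp
      · rw [Psi_X]
        split_ifs
        · rw [algHom_C]; rfl
        · rw [map_add, algHom_C, sz_X, if_neg h]; rfl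
  have h2 := congrArg (fun f => f P) this
  simp only [RingHom.comp_apply] at h2
  change sz {s} (Psi (sz {s} P)) = Psi (sz {s} P) at h2
  rwa [hP] at h2

lemma Psi'_Deg {k : ℕ} {P : T (MvPolynomial V K) V (k+1)} (hP : P ∈ Deg (MvPolynomial V K) V (k+1)) :
    Psi' P ∈ Deg K V (k+1) := by
  classical
  refine map_Deg (Psi' : T (MvPolynomial V K) V (k+1) →+* T K V (k+1)).toAddMonoidHom ?_ hP
  intro s hs P hP
  apply Indep_le_Deg hs
  rw [mem_Indep] at *
  change sz {s} (Psi' P) = Psi' P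
  have hs0 : s ≠ 0 := by rintro rfl; simp at hs
  have : (sz {s} : T K V (k+1) →ₐ[_] _).toRingHom.comp
      ((Psi').comp (sz {s} : T (MvPolynomial V K) V (k+1) →ₐ[_] _).toRingHom) =
      (Psi').comp (sz {s} : T (MvPolynomial V K) V (k+1) →ₐ[_] _).toRingHom := by
    apply MvPolynomial.ringHom_ext
    · intro c
      change sz {s} (Psi' (sz {s} (C c))) = Psi' (sz {s} (C c))
      rw [algHom_C (sz {s})]
      change sz {s} (Psi' (C c)) = Psi' (C c)
      rw [Psi'_C]
      have h3 : (sz {s}).comp (rename (fun v => ((0 : Fin (k+1)), v))) =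
          (rename (fun v => ((0 : Fin (k+1)), v)) : MvPolynomial V K →ₐ[K] T K V (k+1)) := by
        apply MvPolynomial.algHom_ext
        intro v
        rw [AlgHom.comp_apply, rename_X, sz_X, if_neg (by simpa using hs0.symm)]
      exact congrArg (fun f => f c) h3
    · intro x
      change sz {s} (Psi' (sz {s} (X x))) = Psi' (sz {s} (X x))
      rw [sz_X]
      split_ifs with h
      · simp
      · rw [Psi'_X]
        split_ifs
        · simp
        · rw [map_sub, sz_X, sz_X, if_neg h, if_neg (by simpa using hs0.symm)]
  have h2 := congrArg (fun f => f P) this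
  simp only [RingHom.comp_apply] at h2
  change sz {s} (Psi' (sz {s} P)) = Psi' (sz {s} P) at h2
  rwa [hP] at h2

lemma Psi'_rn {a b : ℕ} (f : Fin (a+1) → Fin (b+1)) (hf : f 0 = 0)
    (P : T (MvPolynomial V K) V (a+1)) : Psi' (rn f P) = rn f (Psi' P) := by
  have : Psi'.comp (rn f : T (MvPolynomial V K) V (a+1) →ₐ[_] _).toRingHom =
      (rn f : T K V (a+1) →ₐ[_] _).toRingHom.comp Psi' := by
    apply MvPolynomial.ringHom_ext
    · intro c
      change Psi' (rn f (C c)) = rn f (Psi' (C c))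
      rw [algHom_C]
      change Psi' (C c) = rn f (Psi' (C c))
      rw [Psi'_C, Psi'_C]
      have h3 : (rn f).comp (rename (fun v => ((0 : Fin (a+1)), v))) =
          (rename (fun v => ((0 : Fin (b+1)), v)) : MvPolynomial V K →ₐ[K] T K V (b+1)) := by
        apply MvPolynomial.algHom_ext
        intro v
        rw [AlgHom.comp_apply, rename_X, rn_X, hf, rename_X]
      exact (congrArg (fun f => f c) h3).symm
    · intro x
      change Psi' (rn f (X x)) = rn f (Psi' (X x))
      rw [rn_X, Psi'_X, Psi'_X]
      by_cases hx : x.1.val = 0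
      · have : x.1 = 0 := Fin.ext hx
        rw [this, hf]; simp
      · rw [if_neg hx, map_sub, rn_X, rn_X, hf]
        split_ifs with h
        · have : f x.1 = 0 := Fin.ext h
          rw [this]; simp
        · rfl
  exact congrArg (fun f => f P) this

lemma Psi_rn [Fintype V] {a b : ℕ} (f : Fin (a+1) → Fin (b+1)) (hf : f 0 = 0)
    (P : T K V (a+1)) : Psi (rn f P) = rho Finset.univ (rn f (Psi P)) := by
  have : (Psi : T K V (b+1) →ₐ[K] _).toRingHom.comp (rn f : T K V (a+1) →ₐ[_] _).toRingHom =
      (rho Finset.univ : T (MvPolynomial V K) V (b+1) →ₐ[_] _).toRingHom.comp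
      ((rn f : T (MvPolynomial V K) V (a+1) →ₐ[_] _).toRingHom.comp
        (Psi : T K V (a+1) →ₐ[K] _).toRingHom) := by
    apply MvPolynomial.ringHom_ext
    · intro c
      change Psi (rn f (C c)) = rho Finset.univ (rn f (Psi (C c)))
      rw [Psi_C, algHom_C, algHom_C]
      change Psi (C c) = rho Finset.univ (C (C c))
      rw [Psi_C, algHom_C]; rfl
    · intro x
      change Psi (rn f (X x)) = rho Finset.univ (rn f (Psi (X x)))
      rw [rn_X, Psi_X, Psi_X]
      by_cases hx : x.1.val = 0
      · have : x.1 = 0 := Fin.ext hx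
        rw [this, hf, if_pos (by simp), if_pos (by simp), algHom_C]
        change _ = rho Finset.univ (C (X x.2))
        rw [algHom_C]; rfl
      · rw [if_neg hx, map_add, rn_X, map_add, algHom_C, rho_X]
        have : rho Finset.univ (algebraMap (MvPolynomial V K) (T (MvPolynomial V K) V (b+1)) (X x.2))
          = C (X x.2) := by
          change rho Finset.univ (C (X x.2)) = _
          rw [algHom_C]; rfl
        rw [this]
        simp only [Finset.mem_univ, and_true]
        split_ifs with h
        · rw [add_zero]
        · rfl
  exact congrArg (fun f => f P) this

lemma Psi'_rho [Fintype V] {k : ℕ} (P : T (MvPolynomial V K) V (k+1)) :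
    Psi' (rho Finset.univ P) = Psi' P := by
  have : Psi'.comp (rho Finset.univ : T (MvPolynomial V K) V (k+1) →ₐ[_] _).toRingHom = Psi' := by
    apply MvPolynomial.ringHom_ext
    · intro c
      change Psi' (rho Finset.univ (C c)) = _
      rw [algHom_C]; rfl
    · intro x
      change Psi' (rho Finset.univ (X x)) = _
      rw [rho_X]
      simp only [Finset.mem_univ, and_true]
      split_ifs with h
      · rw [map_zero, Psi'_X, if_pos h]
      · rfl
  exact congrArg (fun f => f P) this

lemma Psi_Psi' [Fintype V] {k : ℕ} (P : T (MvPolynomial V K) V (k+1)) :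
    Psi (Psi' P) = rho Finset.univ P := by
  have : (Psi : T K V (k+1) →ₐ[K] _).toRingHom.comp Psi' =
      (rho Finset.univ : T (MvPolynomial V K) V (k+1) →ₐ[_] _).toRingHom := by
    apply MvPolynomial.ringHom_ext
    · intro c
      change Psi (Psi' (C c)) = rho Finset.univ (C c)
      rw [Psi'_C, algHom_C]
      have h3 : (Psi : T K V (k+1) →ₐ[K] _).comp (rename (fun v => ((0 : Fin (k+1)), v))) =
          (Algebra.ofId (MvPolynomial V K) (T (MvPolynomial V K) V (k+1))).restrictScalars K := by
        apply MvPolynomial.algHom_ext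
        intro v
        rw [AlgHom.comp_apply, rename_X, Psi_X, if_pos (by simp)]; rfl
      exact (congrArg (fun f => f c) h3)
    · intro x
      change Psi (Psi' (X x)) = rho Finset.univ (X x)
      rw [Psi'_X, rho_X]
      simp only [Finset.mem_univ, and_true]
      split_ifs with h
      · simp
      · rw [map_sub, Psi_X, Psi_X, if_neg h, if_pos (by simp)]; ring
  exact congrArg (fun f => f P) this

lemma fidx_zero (k : ℕ) (j : Fin (k+2)) : fidx k j 0 = 0 := by
  apply Fin.ext; rw [fidx_val]; simp

lemma Psi'_d0 (k : ℕ) (P : T (MvPolynomial V K) V (k+2)) :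
    Psi' (d0 (k+1) P) = d0 (k+1) (Psi' P) := by
  rw [d0_succ, d0_succ, map_sum]
  refine Finset.sum_congr rfl fun j _ => ?_
  rw [map_zsmul, Psi'_rn _ (fidx_zero k j)]

lemma Psi_d0 [Fintype V] (k : ℕ) (P : T K V (k+2)) :
    Psi (d0 (k+1) P) = rho Finset.univ (d0 (k+1) (Psi P)) := by
  rw [d0_succ, d0_succ, map_sum, map_sum]
  refine Finset.sum_congr rfl fun j _ => ?_
  rw [map_zsmul, map_zsmul, Psi_rn _ (fidx_zero k j)]

lemma rho_Psi [Fintype V] {k : ℕ} (P : T K V (k+1)) : rho Finset.univ (Psi P) = Psi P := by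
  rw [← Psi_Psi', Psi'_Psi]

end psi
end HW

namespace HW

section forms
variable {K V : Type} [CommRing K]

/-- exponents of multilinear monomials -/
def Ex {k b : ℕ} (f : Fin k → Fin b) (v : Fin k → V) : Fin b × V →₀ ℕ :=
  ∑ i, Finsupp.single (f i, v i) 1

lemma mono_Ex {R : Type} [CommRing R] {k b : ℕ} (f : Fin k → Fin b) (v : Fin k → V) (c : R) :
    (monomial (Ex f v) c : T R V b) = C c * ∏ i, X (f i, v i) := by
  unfold Ex
  rw [monomial_sum_index]; rfl

lemma rn_mono {R : Type} [CommRing R] {k b b' : ℕ} (f : Fin k → Fin b) (g : Fin b → Fin b')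
    (v : Fin k → V) (c : R) :
    rn g (monomial (Ex f v) c : T R V b) = monomial (Ex (g ∘ f) v) c := by
  rw [mono_Ex, mono_Ex, map_mul, map_prod, algHom_C]
  simp only [rn_X]; rfl

lemma Ex_apply [DecidableEq V] {k b : ℕ} (f : Fin k → Fin b) (v : Fin k → V) (s : Fin b) (x : V) :
    Ex f v (s, x) = ∑ i, if f i = s ∧ v i = x then 1 else 0 := by
  unfold Ex
  rw [Finsupp.finsetSum_apply]
  refine Finset.sum_congr rfl fun i _ => ?_
  rw [Finsupp.single_apply]
  simp only [Prod.mk.injEq]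

lemma Ex_exists {k b : ℕ} {f : Fin k → Fin b} {u v : Fin k → V} (h : Ex f u = Ex f v) (a : Fin k) :
    ∃ c, f c = f a ∧ u c = v a := by
  classical
  by_contra hcon
  push Not at hcon
  have h1 := congrArg (fun e => e (f a, v a)) h
  simp only [Ex_apply] at h1
  rw [Finset.sum_eq_zero (fun i _ => if_neg fun hh => hcon i hh.1 hh.2)] at h1
  have h2 := (Finset.sum_eq_zero_iff_of_nonneg (fun _ _ => Nat.zero_le _)).1 h1.symm a
    (Finset.mem_univ a)
  simp at h2

lemma Ex_inj {k : ℕ} {u v : Fin k → V} (h : Ex Fin.succ u = Ex Fin.succ v) : u = v := by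
  funext i
  obtain ⟨c, hc, h⟩ := Ex_exists h i
  rw [Fin.succ_injective _ hc] at h
  exact h

lemma Ex_degree {k b : ℕ} (f : Fin k → Fin b) (v : Fin k → V) : (Ex f v).degree = k := by
  unfold Ex
  rw [map_sum]
  simp

lemma Ex_swap {k b : ℕ} {f : Fin k → Fin b} {p q : Fin k} (h : f p = f q) (v : Fin k → V) :
    Ex f (v ∘ Equiv.swap p q) = Ex f v := by
  unfold Ex
  rw [← Equiv.sum_comp (Equiv.swap p q)]
  refine Finset.sum_congr rfl fun i _ => ?_
  simp only [Function.comp_apply, Equiv.swap_apply_self]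
  congr 2
  rcases eq_or_ne i p with rfl | hp
  · rw [Equiv.swap_apply_left, h]
  rcases eq_or_ne i q with rfl | hq
  · rw [Equiv.swap_apply_right, h]
  rw [Equiv.swap_apply_of_ne_of_ne hp hq]

lemma Ex_merge_eq {m : ℕ} {j j' : Fin (m+1)} {u v : Fin (m+1) → V}
    (h : Ex (mergeIdx m j ∘ Fin.succ) u = Ex (mergeIdx m j' ∘ Fin.succ) v) : j = j' := by
  have key : ∀ (j : Fin (m+1)) (u : Fin (m+1) → V),
      Finsupp.weight (fun x : Fin (m+1) × V => x.1.val) (Ex (mergeIdx m j ∘ Fin.succ) u) =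
      ∑ a : Fin (m+1), if a.val + 1 ≤ j.val then a.val + 1 else a.val := by
    intro j u
    unfold Ex
    rw [map_sum]
    refine Finset.sum_congr rfl fun a _ => ?_
    rw [Finsupp.weight_single]
    simp [mergeIdx_val]
  have hlt : ∀ j j' : Fin (m+1), j < j' → 
      (∑ a : Fin (m+1), if a.val + 1 ≤ j.val then a.val + 1 else a.val) <
      ∑ a : Fin (m+1), if a.val + 1 ≤ j'.val then a.val + 1 else a.val := by
    intro j j' hj
    have hj' : j.val < j'.val := hj
    apply Finset.sum_lt_sum
    · intro a _; split_ifs <;> omega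
    · exact ⟨j, Finset.mem_univ _, by rw [if_neg (by omega), if_pos (by omega)]; omega⟩
  have h1 := congrArg (Finsupp.weight (fun x : Fin (m+1) × V => x.1.val)) h
  rw [key, key] at h1
  rcases lt_trichotomy j j' with h2 | h2 | h2
  · exact absurd h1 (hlt _ _ h2).ne
  · exact h2
  · exact absurd h1 (hlt _ _ h2).ne'

lemma merge_eq_iff {m : ℕ} (i : Fin m) (a c : Fin (m+1)) (h : mergeIdx m i.succ a.succ =
    mergeIdx m i.succ c.succ) : a = c ∨ (a = i.castSucc ∧ c = i.succ) ∨
      (a = i.succ ∧ c = i.castSucc) := by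
  have h1 := congrArg Fin.val h
  rw [mergeIdx_val, mergeIdx_val] at h1
  simp only [Fin.ext_iff, Fin.val_succ, Fin.val_castSucc] at *
  split_ifs at h1 <;> omega

lemma Ex_pair {m : ℕ} (i : Fin m) {u v : Fin (m+1) → V}
    (h : Ex (mergeIdx m i.succ ∘ Fin.succ) u = Ex (mergeIdx m i.succ ∘ Fin.succ) v) :
    u = v ∨ u = v ∘ Equiv.swap i.castSucc i.succ := by
  have hex : ∀ u v : Fin (m+1) → V,
      Ex (mergeIdx m i.succ ∘ Fin.succ) u = Ex (mergeIdx m i.succ ∘ Fin.succ) v → ∀ a,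
      u a = v a ∨ (a = i.castSucc ∧ u i.succ = v a) ∨ (a = i.succ ∧ u i.castSucc = v a) := by
    intro u v h a
    obtain ⟨c, hc, hu⟩ := Ex_exists h a
    rcases merge_eq_iff i c a hc with rfl | ⟨rfl, rfl⟩ | ⟨rfl, rfl⟩
    · exact Or.inl hu
    · exact Or.inr (Or.inr ⟨rfl, hu⟩)
    · exact Or.inr (Or.inl ⟨rfl, hu⟩)
  have h1 := hex u v h
  have h2 := hex v u h.symm
  have hne : i.castSucc ≠ i.succ := by
    intro hh; have := congrArg Fin.val hh; simp at this
  have h3 : (u i.castSucc = v i.castSucc ∧ u i.succ = v i.succ) ∨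
      (u i.castSucc = v i.succ ∧ u i.succ = v i.castSucc) := by
    have a1 := h1 i.castSucc
    have a2 := h1 i.succ
    have a3 := h2 i.castSucc
    have a4 := h2 i.succ
    grind
  rcases h3 with ⟨h3, h4⟩ | ⟨h3, h4⟩
  · left; funext a
    rcases h1 a with h | ⟨rfl, _⟩ | ⟨rfl, _⟩
    · exact h
    · exact h3
    · exact h4
  · right; funext a
    rcases eq_or_ne a i.castSucc with rfl | ha
    · simpa using h3
    rcases eq_or_ne a i.succ with rfl | ha'
    · simpa using h4
    rw [Function.comp_apply, Equiv.swap_apply_of_ne_of_ne ha ha']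
    rcases h1 a with h | ⟨h, _⟩ | ⟨h, _⟩
    · exact h
    · exact absurd h ha
    · exact absurd h ha'

/-- alternating families -/
def Alt {M : Type} [AddCommGroup M] {k : ℕ} (ω : (Fin k → V) → M) : Prop :=
  ∀ (σ : Equiv.Perm (Fin k)) (v : Fin k → V), ω (v ∘ σ) = (Equiv.Perm.sign σ : ℤ) • ω v

lemma Alt.of_adj {M : Type} [AddCommGroup M] {m : ℕ} {ω : (Fin (m+1) → V) → M}
    (h : ∀ (i : Fin m) v, ω (v ∘ Equiv.swap i.castSucc i.succ) = - ω v) : Alt ω := by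
  intro σ
  have hσ : σ ∈ Submonoid.closure (Set.range fun i : Fin m => Equiv.swap i.castSucc i.succ) := by
    rw [Equiv.Perm.mclosure_swap_castSucc_succ]; trivial
  induction hσ using Submonoid.closure_induction with
  | mem x hx =>
    obtain ⟨i, rfl⟩ := hx
    intro v
    rw [h, Equiv.Perm.sign_swap]
    · simp
    · intro hh; have := congrArg Fin.val hh; simp at this
  | one => intro v; simp
  | mul x y _ _ hx hy =>
    intro v
    rw [Equiv.Perm.coe_mul, ← Function.comp_assoc, hy, hx, smul_smul, Equiv.Perm.sign_mul]
    congr 1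
    push_cast
    ring

lemma Alt.of_zero {M : Type} [AddCommGroup M] (ω : (Fin 0 → V) → M) : Alt ω := by
  intro σ v
  obtain rfl : σ = 1 := Subsingleton.elim _ _
  simp

lemma Alt.eq_zero {M : Type} [AddCommGroup M] (hM : ∀ x : M, x = -x → x = 0) {k : ℕ}
    {ω : (Fin k → V) → M} (h : Alt ω) {v : Fin k → V} (hv : ¬ Function.Injective v) : ω v = 0 := by
  rw [Function.Injective] at hv
  push Not at hv
  obtain ⟨p, q, h1, h2⟩ := hv
  have h3 := h (Equiv.swap p q) v
  rw [Equiv.Perm.sign_swap h2] at h3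
  have h4 : v ∘ Equiv.swap p q = v := by
    funext i
    rw [Function.comp_apply]
    rcases eq_or_ne i p with rfl | hp
    · rw [Equiv.swap_apply_left, h1]
    rcases eq_or_ne i q with rfl | hq
    · rw [Equiv.swap_apply_right, h1]
    rw [Equiv.swap_apply_of_ne_of_ne hp hq]
  rw [h4] at h3
  apply hM
  simpa using h3

variable [Fintype V] [DecidableEq V]

/-- chains from forms -/
def jo {R : Type} [CommRing R] {k : ℕ} (ω : (Fin k → V) → R) : T R V (k+1) :=
  ∑ v, monomial (Ex Fin.succ v) (ω v)

lemma coeff_jo {R : Type} [CommRing R] {k : ℕ} (ω : (Fin k → V) → R) (v : Fin k → V) :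
    coeff (Ex Fin.succ v) (jo ω) = ω v := by
  unfold jo
  rw [coeff_sum, Finset.sum_eq_single v]
  · simp
  · intro u _ hu
    rw [coeff_monomial, if_neg fun h => hu (Ex_inj h)]
  · simp

lemma jo_hom {R : Type} [CommRing R] {k : ℕ} (ω : (Fin k → V) → R) : (jo ω).IsHomogeneous k := by
  unfold jo
  refine IsHomogeneous.sum _ _ _ fun v _ => isHomogeneous_monomial _ (Ex_degree _ _)

lemma jo_Nm {R : Type} [CommRing R] {k : ℕ} (ω : (Fin k → V) → R) : jo ω ∈ Nm R V (k+1) := by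
  rw [mem_Nm]
  intro s hs
  unfold jo
  rw [map_sum]
  refine Finset.sum_eq_zero fun v _ => ?_
  rw [mono_Ex, map_mul, map_prod]
  obtain ⟨i, rfl⟩ := Fin.exists_succ_eq.2 (fun h : s = 0 => hs (by rw [h]; rfl))
  rw [Finset.prod_eq_zero (Finset.mem_univ i), mul_zero]
  rw [sz_X, if_pos (by simp)]

lemma jo_rho {R : Type} [CommRing R] {k : ℕ} (ω : (Fin k → V) → R) :
    rho Finset.univ (jo ω) = jo ω := by
  unfold jo
  rw [map_sum]
  refine Finset.sum_congr rfl fun v _ => ?_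
  rw [mono_Ex, map_mul, map_prod, algHom_C]
  congr 1
  refine Finset.prod_congr rfl fun i _ => ?_
  rw [rho_X, if_neg]
  simp

lemma eq_jo {R : Type} [CommRing R] {k : ℕ} {P : T R V (k+1)} (hP : P ∈ Nm R V (k+1))
    (hk : P.IsHomogeneous k) : P = jo (fun v => coeff (Ex Fin.succ v) P) := by
  refine MvPolynomial.ext _ _ fun e => ?_
  by_cases he : ∃ v, e = Ex Fin.succ v
  · obtain ⟨v, rfl⟩ := he
    rw [coeff_jo]
  · have h1 : coeff e (jo (fun v => coeff (Ex Fin.succ v) P)) = 0 := by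
      unfold jo
      rw [coeff_sum]
      refine Finset.sum_eq_zero fun v _ => ?_
      rw [coeff_monomial, if_neg fun h => he ⟨v, h.symm⟩]
    rw [h1]
    by_contra hne
    apply he
    choose v hv using fun i : Fin k => Nm_exists hP hne i.succ (by simp)
    refine ⟨v, ?_⟩
    have h2 : Ex Fin.succ v ≤ e := by
      rintro ⟨s, x⟩
      rw [Ex_apply]
      by_cases hs : ∃ i : Fin k, i.succ = s ∧ v i = x
      · obtain ⟨i, rfl, rfl⟩ := hs
        rw [Finset.sum_eq_single i]
        · simpa using Nat.one_le_iff_ne_zero.2 (hv i)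
        · intro j _ hj
          rw [if_neg]
          intro h; exact hj (Fin.succ_injective _ h.1)
        · simp
      · rw [Finset.sum_eq_zero]
        · exact Nat.zero_le _
        · intro i _; rw [if_neg fun h => hs ⟨i, h⟩]
    obtain ⟨f, rfl⟩ := exists_add_of_le h2
    have h3 := hom_degree hk hne
    rw [map_add, Ex_degree] at h3
    have h4 : f.degree = 0 := by omega
    rw [Finsupp.degree_eq_zero_iff] at h4
    rw [h4, add_zero]

lemma jo_alt {R : Type} [CommRing R] {m : ℕ} {ω : (Fin (m+1) → V) → R}
    (h : rho Finset.univ (bd (m+1) (jo ω)) = 0) : Alt ω := by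
  apply Alt.of_adj
  intro i v
  have hpq : (mergeIdx m i.succ ∘ Fin.succ) i.castSucc = (mergeIdx m i.succ ∘ Fin.succ) i.succ := by
    apply Fin.ext
    simp only [Function.comp_apply, mergeIdx_val]
    simp
  have h1 := congrArg (coeff (Ex (mergeIdx m i.succ ∘ Fin.succ) v)) h
  rw [rho_univ, coeff_sz, if_pos, coeff_zero, bd_succ, coeff_sum, Finset.sum_eq_single i.succ] at h1
  · rw [coeff_smul] at h1
    have h2 : coeff (Ex (mergeIdx m i.succ ∘ Fin.succ) v) (rn (mergeIdx m i.succ) (jo ω)) = 0 := by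
      rcases neg_one_pow_eq_or ℤ (i.succ : Fin (m+1)).val with h3 | h3 <;> rw [h3] at h1 <;>
        simpa using h1
    unfold jo at h2
    simp only [map_sum, coeff_sum, rn_mono, coeff_monomial] at h2
    rw [← Finset.sum_filter] at h2
    by_cases hv : v ∘ Equiv.swap i.castSucc i.succ = v
    · have h4 : Finset.univ.filter (fun u : Fin (m+1) → V => Ex (mergeIdx m i.succ ∘ Fin.succ) u =
          Ex (mergeIdx m i.succ ∘ Fin.succ) v) = {v} := by
        ext u
        simp only [Finset.mem_filter, Finset.mem_univ, true_and, Finset.mem_singleton]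
        constructor
        · intro h
          rcases Ex_pair i h with h | h
          · exact h
          · rw [h, hv]
        · rintro rfl; rfl
      rw [h4, Finset.sum_singleton] at h2
      rw [hv, h2, neg_zero]
    · have h4 : Finset.univ.filter (fun u : Fin (m+1) → V => Ex (mergeIdx m i.succ ∘ Fin.succ) u =
          Ex (mergeIdx m i.succ ∘ Fin.succ) v) = {v ∘ Equiv.swap i.castSucc i.succ, v} := by
        ext u
        simp only [Finset.mem_filter, Finset.mem_univ, true_and, Finset.mem_singleton,
          Finset.mem_insert]
        constructor
        · intro h
          exact (Ex_pair i h).symm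
        · rintro (rfl | rfl)
          · exact Ex_swap hpq v
          · rfl
      rw [h4, Finset.sum_pair hv] at h2
      exact eq_neg_of_add_eq_zero_left h2
  · intro j _ hj
    rw [coeff_smul]
    unfold jo
    simp only [map_sum, coeff_sum, rn_mono, coeff_monomial]
    rw [Finset.sum_eq_zero, smul_zero]
    intro u _
    rw [if_neg fun h => hj (Ex_merge_eq h)]
  · simp
  · intro s hs x
    rw [Finset.mem_singleton] at hs
    rw [hs, Ex_apply]
    refine Finset.sum_eq_zero fun a _ => if_neg fun hh => ?_
    have := congrArg Fin.val hh.1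
    rw [Function.comp_apply, mergeIdx_val] at this
    simp only [Fin.val_succ, Fin.val_zero] at this
    split_ifs at this <;> omega

/-- chains from polynomial forms -/
def io {k : ℕ} (ω : (Fin k → V) → MvPolynomial V K) : T K V (k+1) :=
  ∑ v, rename (fun x => ((0 : Fin (k+1)), x)) (ω v) * ∏ i, X (Fin.succ i, v i)

lemma sz_rename {b : ℕ} (s : Fin (b+1)) (hs : s.val ≠ 0) (f : MvPolynomial V K) :
    sz {s} (rename (fun x => ((0 : Fin (b+1)), x)) f : T K V (b+1)) =
      rename (fun x => ((0 : Fin (b+1)), x)) f := by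
  have : (sz {s} : T K V (b+1) →ₐ[K] _).comp (rename (fun x => ((0 : Fin (b+1)), x))) =
      rename (fun x => ((0 : Fin (b+1)), x)) := by
    apply MvPolynomial.algHom_ext
    intro x
    rw [AlgHom.comp_apply, rename_X, sz_X, if_neg]
    rw [Finset.mem_singleton]
    rintro h
    exact hs (by rw [← h]; rfl)
  exact congrArg (fun g => g f) this

lemma prod_Deg {k : ℕ} (v : Fin k → V) (c : T K V (k+1)) (A : Fin k → T K V (k+1))
    (hc : ∀ i : Fin k, sz {i.succ} c = c) (hA : ∀ i j : Fin k, sz {i.succ} (A j) = A j) :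
    c * ∏ i, (X (Fin.succ i, v i) + A i) - c * ∏ i, X (Fin.succ i, v i) ∈ Deg K V (k+1) := by
  rw [Finset.prod_add, ← Finset.add_sum_erase _ _ (Finset.mem_powerset_self Finset.univ), mul_add]
  simp only [Finset.sdiff_self, Finset.prod_empty, mul_one, add_sub_cancel_left]
  rw [Finset.mul_sum]
  refine Submodule.sum_mem _ fun t ht => ?_
  rw [Finset.mem_erase] at ht
  obtain ⟨i, hi⟩ : ∃ i, i ∉ t := by
    by_contra hcon
    push Not at hcon
    exact ht.1 (Finset.eq_univ_iff_forall.2 hcon)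
  apply Indep_le_Deg (s := i.succ) (by simp)
  rw [mem_Indep, map_mul, map_mul, map_prod, map_prod, hc]
  congr 2
  · refine Finset.prod_congr rfl fun j hj => ?_
    rw [sz_X, if_neg]
    rw [Finset.mem_singleton]
    intro h
    exact hi (by rw [← Fin.succ_injective _ h]; exact hj)
  · exact Finset.prod_congr rfl fun j _ => hA i j

lemma Psi'_jo {k : ℕ} (ω : (Fin k → V) → MvPolynomial V K) : Psi' (jo ω) - io ω ∈ Deg K V (k+1) := by
  unfold jo io
  rw [map_sum, ← Finset.sum_sub_distrib]
  refine Submodule.sum_mem _ fun v _ => ?_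
  rw [mono_Ex, map_mul, map_prod, Psi'_C]
  have h : ∀ i : Fin k, Psi' (X (Fin.succ i, v i) : T (MvPolynomial V K) V (k+1)) =
      X (Fin.succ i, v i) + (- X (0, v i)) := by
    intro i
    rw [Psi'_X, if_neg (by simp), sub_eq_add_neg]
  rw [Finset.prod_congr rfl fun i _ => h i]
  apply prod_Deg
  · intro i; exact sz_rename _ (by simp) _
  · intro i j
    rw [map_neg, sz_X, if_neg]
    rw [Finset.mem_singleton]
    intro h; exact absurd h.symm (Fin.succ_ne_zero i)

lemma Psi_io {k : ℕ} (ω : (Fin k → V) → MvPolynomial V K) :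
    jo ω - Psi (io ω) ∈ Deg (MvPolynomial V K) V (k+1) := by
  have := Psi_Deg (Psi'_jo ω)
  rwa [map_sub, Psi_Psi', jo_rho] at this

end forms
end HW

namespace HW

section hkr2
variable {K V : Type} [CommRing K] [Fintype V] [DecidableEq V]

lemma rho_proj {R : Type} [CommRing R] (J : Finset V) {k : ℕ} (P : T R V k) :
    rho J (proj R V k P) = proj R V k (rho J P) := by
  rw [proj_apply, proj_apply, map_sum]
  refine Finset.sum_congr rfl fun S _ => ?_
  rw [map_zsmul, sz_rho]

lemma hkr_aux {R : Type} [CommRing R] {k : ℕ} {P : T R V (k+1)} (hN : P ∈ Nm R V (k+1))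
    (hr : rho Finset.univ P = P) (hb : rho Finset.univ (bd k P) = 0) :
    ∃ ω : (Fin k → V) → R, Alt ω ∧ ∃ Q : T R V (k+2),
      P = jo ω + rho Finset.univ (d0 (k+1) Q) := by
  have hr' : ∀ N, rho Finset.univ (homogeneousComponent N P) = homogeneousComponent N P := by
    intro N
    have := shift_rho (R := R) (Finset.univ : Finset V) (k := k+1) N P
    simp only [AlgHom.toLinearMap_apply, hr, add_zero] at this
    exact this.symm
  have hb' : ∀ N, rho Finset.univ (bd k (homogeneousComponent N P)) = 0 := by
    intro N
    have h1 := shift_bd (R := R) (V := V) k N P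
    have h2 := shift_rho (R := R) (Finset.univ : Finset V) (k := k) N (bd k P)
    simp only [AlgHom.toLinearMap_apply, add_zero] at h1 h2
    rw [← h1, ← h2, hb, map_zero]
  have hQ : ∀ N, ∃ Q : T R V (k+2), N ≠ k →
      (Q ∈ Nm R V (k+2) ∧ rho Finset.univ (bd (k+1) Q) = homogeneousComponent N P) := by
    intro N
    by_cases h : N = k
    · exact ⟨0, fun h' => absurd h h'⟩
    · obtain ⟨Q, _, h2, h3⟩ := koszul (Finset.univ : Finset V) k N h (homogeneousComponent N P)
        (homogeneousComponent_isHomogeneous _ _) (hc_Nm hN N) (hr' N) (hb' N)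
      exact ⟨Q, fun _ => ⟨h2, h3⟩⟩
  choose Q hQ using hQ
  have hω := eq_jo (hc_Nm hN k) (homogeneousComponent_isHomogeneous _ _)
  refine ⟨fun v => coeff (Ex Fin.succ v) (homogeneousComponent k P), ?_, ∑ N ∈ (Finset.range (P.totalDegree + 1)).filter (· ≠ k), Q N, ?_⟩
  · cases k with
    | zero => exact Alt.of_zero _
    | succ m =>
      apply jo_alt
      rw [← hω]
      exact hb' _
  · rw [← hω, map_sum, map_sum]
    have h3 : ∀ N ∈ (Finset.range (P.totalDegree + 1)).filter (· ≠ k),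
        rho Finset.univ (d0 (k+1) (Q N)) = homogeneousComponent N P := by
      intro N hN
      obtain ⟨h4, h5⟩ := hQ N (Finset.mem_filter.1 hN).2
      rw [rho_d0 _ h4, h5]
    rw [Finset.sum_congr rfl h3]
    conv_lhs => rw [← sum_homogeneousComponent P]
    rw [← Finset.sum_filter_add_sum_filter_not _ (fun N => N ≠ k)]
    refine (add_comm _ _).trans ?_
    congr 1
    by_cases hk : k < P.totalDegree + 1
    · have : (Finset.range (P.totalDegree + 1)).filter (fun N => ¬ N ≠ k) = {k} := by
        ext N
        simp only [Finset.mem_filter, Finset.mem_range, Finset.mem_singleton, ne_eq, not_not]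
        constructor
        · exact fun h => h.2
        · rintro rfl; exact ⟨hk, rfl⟩
      rw [this, Finset.sum_singleton]
    · rw [homogeneousComponent_eq_zero _ _ (by omega), Finset.sum_eq_zero]
      intro N hN
      simp only [Finset.mem_filter, Finset.mem_range, ne_eq, not_not] at hN
      omega

theorem hkr_surj {k : ℕ} {P : T K V (k+1)} (h : d0 k P ∈ Deg K V k) :
    ∃ ω : (Fin k → V) → MvPolynomial V K, Alt ω ∧ ∃ Q : T K V (k+2),
      P - io ω - d0 (k+1) Q ∈ Deg K V (k+1) := by
  set P' := proj (MvPolynomial V K) V (k+1) (Psi P) with hP'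
  have hN : P' ∈ Nm (MvPolynomial V K) V (k+1) := proj_mem_Nm _
  have hD : Psi P - P' ∈ Deg (MvPolynomial V K) V (k+1) := sub_proj_mem _
  have hr : rho Finset.univ P' = P' := by rw [hP', rho_proj, rho_Psi]
  have hb : rho Finset.univ (bd k P') = 0 := by
    apply Nm_Deg_eq_zero (rho_Nm _ (bd_Nm k hN))
    rw [← rho_d0 _ hN]
    cases k with
    | zero => 
      change rho Finset.univ 0 ∈ _
      rw [map_zero]; exact zero_mem _
    | succ m =>
      have h1 := Psi_Deg h
      rw [Psi_d0] at h1
      have h2 := rho_Deg Finset.univ (d0_Deg _ hD)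
      rw [map_sub, map_sub] at h2
      have h3 := sub_mem h1 h2
      rwa [sub_sub_cancel] at h3
  obtain ⟨ω, hω, Q, hQ⟩ := hkr_aux hN hr hb
  refine ⟨ω, hω, Psi' Q, ?_⟩
  have h1 := Psi'_Deg hD
  have h2 := Psi'_jo ω
  rw [map_sub, Psi'_Psi, hQ, map_add, Psi'_rho, Psi'_d0] at h1
  have h3 := add_mem h1 h2
  convert h3 using 1
  ring

theorem hkr_inj {k : ℕ} {ω : (Fin k → V) → MvPolynomial V K} {Q : T K V (k+2)}
    (h : io ω - d0 (k+1) Q ∈ Deg K V (k+1)) : ω = 0 := by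
  have h1 := Psi_Deg h
  rw [map_sub, Psi_d0] at h1
  have h2 := Psi_io ω
  have hN := proj_mem_Nm (Psi Q)
  have h3 := rho_Deg Finset.univ (d0_Deg _ (sub_proj_mem (Psi Q)))
  rw [map_sub, map_sub, rho_d0 _ hN] at h3
  have h4 : jo ω - rho Finset.univ (bd (k+1) (proj (MvPolynomial V K) V (k+2) (Psi Q))) = 0 := by
    apply Nm_Deg_eq_zero
    · exact sub_mem (jo_Nm ω) (rho_Nm _ (bd_Nm _ hN))
    · convert add_mem (add_mem h1 h2) h3 using 1
      ring
  have h5 : jo ω = 0 := by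
    rw [sub_eq_zero] at h4
    have h6 := congrArg (homogeneousComponent k) h4
    rw [homogeneousComponent_of_mem (jo_hom ω), if_pos rfl] at h6
    have h7 := shift_rho (R := MvPolynomial V K) (Finset.univ : Finset V) (k := k+1) k
      (bd (k+1) (proj (MvPolynomial V K) V (k+2) (Psi Q)))
    have h8 := shift_bd (R := MvPolynomial V K) (V := V) (k+1) k
      (proj (MvPolynomial V K) V (k+2) (Psi Q))
    simp only [AlgHom.toLinearMap_apply, add_zero] at h7 h8
    rw [h7, h8, Nm_low (hc_Nm hN k) (homogeneousComponent_isHomogeneous _ _) (by omega), map_zero,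
      map_zero] at h6
    exact h6
  funext v
  rw [← coeff_jo ω v, h5, coeff_zero]; rfl

end hkr2
end HW

namespace HW

section quantum
variable {K V : Type} [CommRing K] [Fintype V] [DecidableEq V]

/-- linear version of `io` -/
def ioL {k : ℕ} : ((Fin k → V) → MvPolynomial V K) →ₗ[K] T K V (k+1) where
  toFun := io
  map_add' ω η := by
    unfold io
    rw [← Finset.sum_add_distrib]
    refine Finset.sum_congr rfl fun v _ => ?_
    rw [Pi.add_apply, map_add, add_mul]
  map_smul' c ω := by
    unfold io
    rw [Finset.smul_sum]
    refine Finset.sum_congr rfl fun v _ => ?_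
    rw [Pi.smul_apply, map_smul, smul_mul_assoc]; rfl

lemma ioL_apply {k : ℕ} (ω : (Fin k → V) → MvPolynomial V K) : ioL ω = io ω := rfl

lemma io_zero {k : ℕ} : io (0 : (Fin k → V) → MvPolynomial V K) = 0 := ioL.map_zero

lemma io_add {k : ℕ} (ω η : (Fin k → V) → MvPolynomial V K) : io (ω + η) = io ω + io η :=
  ioL.map_add _ _

lemma io_smul {k : ℕ} (c : K) (η : (Fin k → V) → MvPolynomial V K) : io (c • η) = c • io η :=
  ioL.map_smul _ _

lemma ren_hc {b k : ℕ} (f : MvPolynomial V K) (M : T K V (b+1)) (hM : M.IsHomogeneous k) (N : ℕ) :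
    homogeneousComponent N (rename (fun x => ((0 : Fin (b+1)), x)) f * M) =
    if k ≤ N then rename (fun x => ((0 : Fin (b+1)), x)) (homogeneousComponent (N - k) f) * M else 0 := by
  induction f using MvPolynomial.induction_on' with
  | add p q hp hq => 
    rw [map_add, add_mul, map_add, hp, hq]
    split_ifs
    · rw [map_add, map_add, add_mul]
    · rw [add_zero]
  | monomial u r =>
    have h1 : (monomial u r : MvPolynomial V K).IsHomogeneous u.degree :=
      isHomogeneous_monomial _ rfl
    have h2 : (rename (fun x => ((0 : Fin (b+1)), x)) (monomial u r) * M).IsHomogeneous (u.degree + k) :=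
      (h1.rename_isHomogeneous).mul hM
    rw [homogeneousComponent_of_mem h2, homogeneousComponent_of_mem h1]
    by_cases hk : k ≤ N
    · rw [if_pos hk]
      by_cases hu : N = u.degree + k
      · rw [if_pos hu, if_pos (by omega)]
      · rw [if_neg hu, if_neg (by omega), map_zero, zero_mul]
    · rw [if_neg hk, if_neg (by omega)]

lemma hc_io {k : ℕ} (ω : (Fin k → V) → MvPolynomial V K) (N : ℕ) :
    homogeneousComponent N (io ω) =
    if k ≤ N then io (fun v => homogeneousComponent (N - k) (ω v)) else 0 := by
  unfold io
  rw [map_sum]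
  have : ∀ v : Fin k → V, (∏ i, X (Fin.succ i, v i) : T K V (k+1)).IsHomogeneous k := by
    intro v
    have := IsHomogeneous.prod Finset.univ (fun i : Fin k => (X (Fin.succ i, v i) : T K V (k+1)))
      (fun _ => 1) (fun i _ => isHomogeneous_X _ _)
    simpa using this
  simp only [fun v => ren_hc (ω v) _ (this v) N]
  split_ifs
  · rfl
  · simp

lemma io_hom {k a : ℕ} {ω : (Fin k → V) → MvPolynomial V K} (h : ∀ v, (ω v).IsHomogeneous a) :
    (io ω).IsHomogeneous (a + k) := by
  rw [hom_iff]
  intro e he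
  rw [hc_io]
  split_ifs with hk
  · have : (fun v => homogeneousComponent (e - k) (ω v)) = 0 := by
      funext v
      exact hom_iff.1 (h v) _ (by omega)
    rw [this, io_zero]
  · rfl

lemma pderiv_X_mul {σ : Type} [DecidableEq σ] (x y : σ) (G : MvPolynomial σ K) (hG : pderiv y G = 0) :
    pderiv y (X x * G) = if x = y then G else 0 := by
  rw [Derivation.leibniz, hG, smul_zero, zero_add, pderiv_X]
  by_cases h : x = y
  · subst h; simp
  · rw [if_neg h, Pi.single_eq_of_ne h, smul_zero]

lemma pderiv_ren {b : ℕ} (y : V) (f : MvPolynomial V K) (G : T K V (b+1))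
    (hG : pderiv ((0 : Fin (b+1)), y) G = 0) :
    pderiv ((0 : Fin (b+1)), y) (rename (fun x => ((0 : Fin (b+1)), x)) f * G) =
      rename (fun x => ((0 : Fin (b+1)), x)) (pderiv y f) * G := by
  rw [Derivation.leibniz, hG, smul_zero, zero_add, smul_eq_mul, mul_comm]
  congr 1
  exact (pderiv_rename (fun a b h => by simpa using h) y f)

lemma pderiv_ren' {b : ℕ} (s : Fin (b+1)) (hs : s.val ≠ 0) (y : V) (f : MvPolynomial V K) (G : T K V (b+1)) :
    pderiv (s, y) (rename (fun x => ((0 : Fin (b+1)), x)) f * G) =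
      rename (fun x => ((0 : Fin (b+1)), x)) f * pderiv (s, y) G := by
  rw [Derivation.leibniz]
  have : pderiv (s, y) (rename (fun x => ((0 : Fin (b+1)), x)) f : T K V (b+1)) = 0 := by
    induction f using MvPolynomial.induction_on with
    | C c => simp
    | add p q hp hq => rw [map_add, map_add, hp, hq, add_zero]
    | mul_X p x hp =>
      rw [map_mul, rename_X, Derivation.leibniz, hp, pderiv_X_of_ne]
      · simp
      · intro h; apply hs; have := congrArg Prod.fst h; simp only at this; rw [← this]; rfl
  rw [this, smul_zero, add_zero, smul_eq_mul]

lemma pderiv_prod {b k : ℕ} (s : Fin b) (y : V) (f : Fin k → Fin b) (hf : ∀ i, f i ≠ s) (u : Fin k → V) :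
    pderiv (s, y) (∏ i, X (f i, u i) : T K V b) = 0 := by
  refine Finset.prod_induction _ (fun P : T K V b => pderiv (s, y) P = 0) ?_ ?_ ?_
  · intro P Q hP hQ
    rw [Derivation.leibniz, hP, hQ, smul_zero, smul_zero, add_zero]
  · exact Derivation.map_one_eq_zero _
  · intro i _
    rw [pderiv_X_of_ne]
    intro h
    exact hf i (congrArg Prod.fst h)

end quantum

section q2
variable {n : ℕ}

lemma two_tors {σ : Type} (x : MvPolynomial σ Kc) (h : x = -x) : x = 0 := by
  have h1 : (2 : Kc) • x = 0 := by
    rw [two_smul]; nth_rw 1 [h]; simp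
  have h2 : (algebraMap ℂ Kc (1/2)) * 2 = 1 := by
    have : (2 : Kc) = algebraMap ℂ Kc 2 := (map_ofNat (algebraMap ℂ Kc) 2).symm
    rw [this, ← map_mul]; norm_num
  rw [← one_smul Kc x, ← h2, mul_smul, h1, smul_zero]

lemma alpha_anti {k : ℕ} (i j : Fin k) (P : Tens n k) : alphaOp n k i j P = - alphaOp n k j i P := by
  rw [alpha_apply, alpha_apply, ← smul_neg, ← Finset.sum_neg_distrib]
  congr 1
  refine Finset.sum_congr rfl fun r _ => ?_
  simp only [Dop_apply, neg_sub]
  rw [pderiv_comm (i, pVar n r), pderiv_comm (i, qVar n r)]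

/-- linear in slot `s` -/
def Lin {k : ℕ} (s : Fin k) (P : Tens n k) : Prop :=
  ∀ v, Dop n k s v P ∈ (Indep s : Submodule Kc _)

lemma Lin.alpha_right {k : ℕ} {i j : Fin k} {P : Tens n k} (h : Lin j P) :
    alphaOp n k i j P ∈ (Indep j : Submodule Kc _) := by
  rw [alpha_apply]
  exact Submodule.smul_mem _ _ (Submodule.sum_mem _ fun r _ => sub_mem (Dop_mem_indep (h _))
    (Dop_mem_indep (h _)))

lemma Lin.alpha_left {k : ℕ} {i j : Fin k} {P : Tens n k} (h : Lin i P) :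
    alphaOp n k i j P ∈ (Indep i : Submodule Kc _) := by
  rw [alpha_anti]
  exact neg_mem h.alpha_right

lemma io_lin {k : ℕ} (η : (Fin k → Fin (2*n)) → Apol n) (s : Fin (k+1)) (hs : s.val ≠ 0) :
    Lin (n := n) s (io η) := by
  intro w
  unfold io
  rw [map_sum]
  refine Submodule.sum_mem _ fun v _ => ?_
  obtain ⟨i, rfl⟩ := Fin.exists_succ_eq.2 (fun h : s = 0 => hs (by rw [h]; rfl))
  rw [Dop_apply, ← Finset.mul_prod_erase _ _ (Finset.mem_univ i), pderiv_ren' _ hs]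
  have hG : sz {i.succ} (∏ x ∈ Finset.univ.erase i, X (Fin.succ x, v x) : Tens n (k+1)) =
      ∏ x ∈ Finset.univ.erase i, X (Fin.succ x, v x) := by
    rw [map_prod]
    refine Finset.prod_congr rfl fun j hj => ?_
    rw [sz_X, if_neg]
    rw [Finset.mem_singleton]
    intro h
    exact (Finset.mem_erase.1 hj).1 (Fin.succ_injective _ h)
  rw [pderiv_X_mul]
  · rw [mem_Indep, map_mul, sz_rename _ hs]
    split_ifs
    · rw [hG]
    · rw [map_zero]
  · exact Dop_indep (mem_Indep.2 hG)

lemma fidx_Deg {k : ℕ} (i : Fin k) {P : Tens n (k+2)}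
    (h1 : P ∈ (Indep i.succ.castSucc : Submodule Kc _)) (h2 : P ∈ (Indep i.succ.succ : Submodule Kc _)) :
    rn (fidx k i.succ.castSucc) P ∈ Deg Kc (Fin (2*n)) (k+1) := by
  apply Indep_le_Deg (s := i.succ) (by simp)
  rw [mem_Indep] at *
  have h3 : sz {i.succ.castSucc, i.succ.succ} P = P := by
    rw [Finset.insert_eq, ← sz_sz, h2, h1]
  rw [sz_rn]
  have : (Finset.univ.filter fun u => fidx k i.succ.castSucc u ∈ ({i.succ} : Finset (Fin (k+1)))) =
      {i.succ.castSucc, i.succ.succ} := by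
    ext u
    have := u.2
    have := i.2
    simp only [Finset.mem_filter, Finset.mem_univ, true_and, Finset.mem_singleton,
      Finset.mem_insert, Fin.ext_iff, fidx_val, Fin.val_castSucc, Fin.val_succ]
    split_ifs <;> omega
  rw [this, h3]

lemma io_alpha_sq {k : ℕ} (η : (Fin (k+1) → Fin (2*n)) → Apol n) (j : Fin (k+2)) (m : ℕ) (hm : 2 ≤ m) :
    (alphaOp n (k+2) j (nx j) ^ m) (io η) = 0 := by
  obtain ⟨m, rfl⟩ := Nat.exists_eq_add_of_le' hm
  rw [pow_add, Module.End.mul_apply]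
  have : (alphaOp n (k+2) j (nx j) ^ 2) (io η) = 0 := by
    rw [pow_two, Module.End.mul_apply]
    by_cases hj : j.val = 0
    · apply alpha_indep_right
      apply Lin.alpha_right
      apply io_lin
      rw [nx_val]
      split_ifs <;> omega
    · apply alpha_indep_left
      apply Lin.alpha_left
      exact io_lin _ _ hj
  rw [this, map_zero]

/-- partner index -/
def st {n : ℕ} (a : Fin (2*n)) : Fin (2*n) :=
  ⟨if a.val % 2 = 0 then a.val + 1 else a.val - 1, by have := a.2; split_ifs <;> omega⟩

/-- sign -/
def sg {n : ℕ} (a : Fin (2*n)) : ℤ := if a.val % 2 = 0 then -1 else 1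

lemma st_st (a : Fin (2*n)) : st (st a) = a := by
  apply Fin.ext
  simp only [st]
  split_ifs <;> omega

lemma sg_sg (a : Fin (2*n)) : sg a * sg a = 1 := by
  unfold sg; split_ifs <;> rfl

/-- bracket with a coordinate -/
def Db (a : Fin (2*n)) : Apol n →ₗ[Kc] Apol n := sg a • (pderiv (st a)).toLinearMap

lemma Db_apply (a : Fin (2*n)) (f : Apol n) : Db a f = sg a • pderiv (st a) f := rfl

lemma Db_sum (a : Fin (2*n)) (F : Fin (2*n) → Tens n k') :
    ∑ r : Fin n, ((if a = qVar n r then F (pVar n r) else 0) -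
      (if a = pVar n r then F (qVar n r) else 0)) = sg a • F (st a) := by
  have ha := a.2
  rw [Finset.sum_eq_single ⟨a.val / 2, by omega⟩]
  · by_cases h : a.val % 2 = 0
    · have h1 : a = pVar n ⟨a.val / 2, by omega⟩ := by apply Fin.ext; simp only [pVar]; omega
      have h2 : st a = qVar n ⟨a.val / 2, by omega⟩ := by
        apply Fin.ext; simp only [qVar, st]; rw [if_pos h]; omega
      have h3 : a ≠ qVar n ⟨a.val / 2, by omega⟩ := by
        intro hh; have := congrArg Fin.val hh; simp only [qVar] at this; omega
      rw [if_neg h3, if_pos h1, h2, sg, if_pos h]; simp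
    · have h1 : a = qVar n ⟨a.val / 2, by omega⟩ := by apply Fin.ext; simp only [qVar]; omega
      have h2 : st a = pVar n ⟨a.val / 2, by omega⟩ := by
        apply Fin.ext; simp only [pVar, st]; rw [if_neg h]; omega
      have h3 : a ≠ pVar n ⟨a.val / 2, by omega⟩ := by
        intro hh; have := congrArg Fin.val hh; simp only [pVar] at this; omega
      rw [if_neg h3, if_pos h1, h2, sg, if_neg h]; simp
  · intro r _ hr
    rw [if_neg, if_neg, sub_zero]
    · intro h; apply hr; apply Fin.ext; have := congrArg Fin.val h; simp only [pVar] at this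
      change r.val = a.val / 2
      omega
    · intro h; apply hr; apply Fin.ext; have := congrArg Fin.val h; simp only [qVar] at this
      change r.val = a.val / 2
      omega
  · simp

lemma alpha_mon {k : ℕ} (s : Fin (k+1)) (hs : s.val ≠ 0) (a : Fin (2*n)) (f : Apol n) (G : Tens n (k+1))
    (h0 : ∀ y, pderiv ((0 : Fin (k+1)), y) G = 0) (h1 : ∀ y, pderiv (s, y) G = 0) :
    alphaOp n (k+1) 0 s (rename (fun x => ((0 : Fin (k+1)), x)) f * (X (s, a) * G)) =
      algebraMap ℂ Kc (1/2) • (rename (fun x => ((0 : Fin (k+1)), x)) (Db a f) * G) := by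
  rw [alpha_apply]
  congr 1
  have h2 : ∀ v w, Dop n (k+1) 0 v (Dop n (k+1) s w
      (rename (fun x => ((0 : Fin (k+1)), x)) f * (X (s, a) * G))) =
      if a = w then rename (fun x => ((0 : Fin (k+1)), x)) (pderiv v f) * G else 0 := by
    intro v w
    rw [Dop_apply, Dop_apply, pderiv_ren' _ hs, pderiv_X_mul _ _ _ (h1 w)]
    by_cases h : a = w
    · subst h
      rw [if_pos rfl, if_pos rfl, pderiv_ren _ _ _ (h0 v)]
    · rw [if_neg h, if_neg, mul_zero, map_zero]
      intro hh; exact h (congrArg Prod.snd hh)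
  simp only [h2]
  rw [Db_sum a (fun x => rename (fun x => ((0 : Fin (k+1)), x)) (pderiv x f) * G), Db_apply,
    map_zsmul, smul_mul_assoc]

end q2
end HW

namespace HW

section q3
variable {n : ℕ}

/-- `rename` into slot zero -/
abbrev r0 {b : ℕ} (f : Apol n) : Tens n (b+1) := rename (fun x => ((0 : Fin (b+1)), x)) f

lemma io_cons {k : ℕ} (η : (Fin (k+1) → Fin (2*n)) → Apol n) :
    io η = ∑ a, ∑ u : Fin k → Fin (2*n), r0 (η (Fin.cons a u)) *
      (X ((0 : Fin (k+1)).succ, a) * ∏ i : Fin k, X (i.succ.succ, u i) : Tens n (k+2)) := by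
  unfold io
  rw [← (Fin.consEquiv (fun _ : Fin (k+1) => Fin (2*n))).sum_comp, Fintype.sum_prod_type]
  refine Finset.sum_congr rfl fun a _ => Finset.sum_congr rfl fun u _ => ?_
  rw [Fin.prod_univ_succ]
  rfl

lemma io_snoc {k : ℕ} (η : (Fin (k+1) → Fin (2*n)) → Apol n) :
    io η = ∑ a, ∑ u : Fin k → Fin (2*n), r0 (η (Fin.snoc u a)) *
      (X ((Fin.last k).succ, a) * ∏ i : Fin k, X (i.castSucc.succ, u i) : Tens n (k+2)) := by
  unfold io
  rw [← (Fin.snocEquiv (fun _ : Fin (k+1) => Fin (2*n))).sum_comp, Fintype.sum_prod_type]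
  refine Finset.sum_congr rfl fun a _ => Finset.sum_congr rfl fun u _ => ?_
  rw [Fin.prod_univ_castSucc, mul_comm (X _)]
  congr 1
  congr 1
  · refine Finset.prod_congr rfl fun i _ => ?_
    simp [Fin.snocEquiv]
  · simp [Fin.snocEquiv]

lemma alt_snoc {M : Type} [AddCommGroup M] {V : Type} {k : ℕ} {η : (Fin (k+1) → V) → M} (h : Alt η) (u : Fin k → V) (a : V) :
    η (Fin.snoc u a) = (-1 : ℤ)^k • η (Fin.cons a u) := by
  have : (Fin.snoc u a : Fin (k+1) → V) = (Fin.cons a u : Fin (k+1) → V) ∘ finRotate (k+1) := by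
    rw [Fin.snoc_eq_cons_rotate]; rfl
  rw [this, h, sign_finRotate]
  simp

lemma rn_r0 {b c : ℕ} (g : Fin (b+1) → Fin (c+1)) (hg : g 0 = 0) (f : Apol n) :
    rn g (r0 f : Tens n (b+1)) = r0 f := by
  induction f using MvPolynomial.induction_on with
  | C c => simp [r0]
  | add p q hp hq => simp only [r0, map_add] at *; rw [hp, hq]
  | mul_X p x hp =>
    simp only [r0, map_mul, rename_X] at *
    rw [hp, rn_X, hg]

lemma fidx_0 {k : ℕ} (j : Fin (k+2)) : fidx k j 0 = 0 := by
  apply Fin.ext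
  rw [fidx_val]
  simp

/-- the Poisson differential -/
def dl {k : ℕ} (η : (Fin (k+1) → Fin (2*n)) → Apol n) (u : Fin k → Fin (2*n)) : Apol n :=
  ∑ a, Db a (η (Fin.cons a u))

lemma rn_first {k : ℕ} (f : Apol n) (u : Fin k → Fin (2*n)) (P : Tens n (k+2)) :
    rn (fidx k 0) (r0 f * (P * ∏ i : Fin k, X (i.succ.succ, u i)) : Tens n (k+2)) =
    r0 f * (rn (fidx k 0) P * ∏ i : Fin k, X (i.succ, u i)) := by
  rw [map_mul, map_mul, rn_r0 _ (fidx_0 _), map_prod]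
  congr 2
  refine Finset.prod_congr rfl fun i _ => ?_
  rw [rn_X]
  congr 2

lemma rn_lst {k : ℕ} (f : Apol n) (u : Fin k → Fin (2*n)) (P : Tens n (k+2)) :
    rn (fidx k (Fin.last (k+1))) (r0 f * (P * ∏ i : Fin k, X (i.castSucc.succ, u i)) : Tens n (k+2)) =
    r0 f * (rn (fidx k (Fin.last (k+1))) P * ∏ i : Fin k, X (i.succ, u i)) := by
  rw [map_mul, map_mul, rn_r0 _ (fidx_0 _), map_prod]
  congr 2
  refine Finset.prod_congr rfl fun i _ => ?_
  rw [rn_X]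
  congr 2
  apply Fin.ext
  rw [fidx_val]
  have := i.2
  simp
  omega

lemma face0_first {k : ℕ} (η : (Fin (k+1) → Fin (2*n)) → Apol n) :
    rn (fidx k 0) (io η) = ∑ a, ∑ u : Fin k → Fin (2*n), r0 (η (Fin.cons a u)) *
      (X ((0 : Fin (k+1)), a) * ∏ i : Fin k, X (i.succ, u i) : Tens n (k+1)) := by
  rw [io_cons, map_sum]
  refine Finset.sum_congr rfl fun a _ => ?_
  rw [map_sum]
  refine Finset.sum_congr rfl fun u _ => ?_
  rw [rn_first, rn_X]
  congr 4

lemma face0_lst {k : ℕ} {η : (Fin (k+1) → Fin (2*n)) → Apol n} (h : Alt η) :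
    rn (fidx k (Fin.last (k+1))) (io η) = (-1 : ℤ)^k • ∑ a, ∑ u : Fin k → Fin (2*n), r0 (η (Fin.cons a u)) *
      (X ((0 : Fin (k+1)), a) * ∏ i : Fin k, X (i.succ, u i) : Tens n (k+1)) := by
  rw [io_snoc, map_sum, Finset.smul_sum]
  refine Finset.sum_congr rfl fun a _ => ?_
  rw [map_sum, Finset.smul_sum]
  refine Finset.sum_congr rfl fun u _ => ?_
  have h1 : fidx k (Fin.last (k+1)) (Fin.last k).succ = 0 := by
    apply Fin.ext
    rw [fidx_val]
    simp
  have h2 : (r0 ((-1 : ℤ)^k • η (Fin.cons a u)) : Tens n (k+1)) = (-1 : ℤ)^k • r0 (η (Fin.cons a u)) :=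
    map_zsmul _ _ _
  rw [rn_lst, rn_X, alt_snoc h, h1, h2, smul_mul_assoc]

lemma face1_first {k : ℕ} (η : (Fin (k+1) → Fin (2*n)) → Apol n) :
    rn (fidx k 0) (alphaOp n (k+2) 0 (nx 0) (io η)) = algebraMap ℂ Kc (1/2) • io (dl η) := by
  have hnx : nx (0 : Fin (k+2)) = (0 : Fin (k+1)).succ := nx_castSucc (0 : Fin (k+1))
  have : io (dl η) = ∑ a, ∑ u : Fin k → Fin (2*n), r0 (Db a (η (Fin.cons a u))) *
      (∏ i : Fin k, X (i.succ, u i) : Tens n (k+1)) := by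
    rw [Finset.sum_comm]
    unfold io dl
    refine Finset.sum_congr rfl fun u _ => ?_
    rw [map_sum, Finset.sum_mul]
  rw [this, io_cons, map_sum, map_sum, Finset.smul_sum]
  refine Finset.sum_congr rfl fun a _ => ?_
  rw [map_sum, map_sum, Finset.smul_sum]
  refine Finset.sum_congr rfl fun u _ => ?_
  rw [hnx, alpha_mon]
  · rw [map_smul]
    congr 1
    have := rn_first (Db a (η (Fin.cons a u))) u 1
    rw [map_one, one_mul, one_mul] at this
    exact this
  · simp
  · intro y
    exact pderiv_prod _ _ (fun i : Fin k => i.succ.succ) (fun i => Fin.succ_ne_zero _) _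
  · intro y
    exact pderiv_prod _ _ (fun i : Fin k => i.succ.succ) (fun i h => by
      have := congrArg Fin.val h; simp at this) _

lemma face1_lst {k : ℕ} {η : (Fin (k+1) → Fin (2*n)) → Apol n} (h : Alt η) :
    rn (fidx k (Fin.last (k+1))) (alphaOp n (k+2) (Fin.last (k+1)) (nx (Fin.last (k+1))) (io η)) =
      (-1 : ℤ)^(k+1) • algebraMap ℂ Kc (1/2) • io (dl η) := by
  have hnx : nx (Fin.last (k+1)) = 0 := nx_last _
  have : io (dl η) = ∑ a, ∑ u : Fin k → Fin (2*n), r0 (Db a (η (Fin.cons a u))) *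
      (∏ i : Fin k, X (i.succ, u i) : Tens n (k+1)) := by
    rw [Finset.sum_comm]
    unfold io dl
    refine Finset.sum_congr rfl fun u _ => ?_
    rw [map_sum, Finset.sum_mul]
  rw [this, hnx, alpha_anti, map_neg, pow_succ, mul_neg_one, neg_smul, io_snoc]
  congr 1
  rw [map_sum, map_sum, Finset.smul_sum, Finset.smul_sum]
  refine Finset.sum_congr rfl fun a _ => ?_
  rw [map_sum, map_sum, Finset.smul_sum, Finset.smul_sum]
  refine Finset.sum_congr rfl fun u _ => ?_
  rw [alt_snoc h, ← Fin.succ_last, alpha_mon]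
  · rw [map_smul, smul_comm]
    congr 1
    have := rn_lst (Db a ((-1:ℤ)^k • η (Fin.cons a u))) u 1
    rw [map_one, one_mul, one_mul] at this
    rw [Fin.succ_last]
    refine this.trans ?_
    rw [← smul_mul_assoc]
    congr 1
    simp only [r0, map_zsmul]
  · simp
  · intro y
    exact pderiv_prod _ _ (fun i : Fin k => i.castSucc.succ) (fun i => Fin.succ_ne_zero _) _
  · intro y
    exact pderiv_prod _ _ (fun i : Fin k => i.castSucc.succ) (fun i h => by
      have := congrArg Fin.val h; simp at this; have := i.2; omega) _

lemma face0_mid {k : ℕ} {η : (Fin (k+1) → Fin (2*n)) → Apol n} (h : Alt η) (i : Fin k) :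
    rn (fidx k i.succ.castSucc) (io η) = 0 := by
  apply two_tors
  conv_lhs => unfold io
  conv_rhs => unfold io
  rw [map_sum, ← Finset.sum_neg_distrib]
  let s : Equiv.Perm (Fin (k+1)) := Equiv.swap i.castSucc i.succ
  have hs : s * s = 1 := Equiv.swap_mul_self _ _
  have hss : ∀ x, s (s x) = x := fun x => by rw [← Equiv.Perm.mul_apply, hs]; rfl
  refine Finset.sum_bij' (fun v _ => v ∘ s) (fun v _ => v ∘ s) (by simp) (by simp)
    (fun v _ => by funext x; simp [hss])
    (fun v _ => by funext x; simp [hss]) ?_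
  intro v _
  rw [h]
  have : (Equiv.Perm.sign s : ℤ) = -1 := by
    rw [Equiv.Perm.sign_swap (Fin.castSucc_lt_succ).ne]; rfl
  rw [this, neg_one_smul, map_neg, neg_mul, map_neg, neg_neg, map_mul, map_mul, map_prod, map_prod]
  congr 1
  rw [← Equiv.prod_comp s]
  refine Finset.prod_congr rfl fun x _ => ?_
  rw [rn_X, rn_X]
  have : fidx k i.succ.castSucc (s x).succ = fidx k i.succ.castSucc x.succ := by
    have h1 : fidx k i.succ.castSucc i.castSucc.succ = fidx k i.succ.castSucc i.succ.succ := by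
      apply Fin.ext
      have := i.2
      rw [fidx_val, fidx_val]
      simp only [Fin.val_succ, Fin.val_castSucc]
      split_ifs <;> omega
    by_cases hx : x = i.castSucc
    · rw [hx]
      simp only [s, Equiv.swap_apply_left]
      rw [h1]
    · by_cases hx' : x = i.succ
      · rw [hx']
        simp only [s, Equiv.swap_apply_right]
        rw [h1]
      · simp only [s, Equiv.swap_apply_of_ne_of_ne hx hx']
  rw [this]; rfl

lemma dm0_io {k : ℕ} {η : (Fin (k+1) → Fin (2*n)) → Apol n} (h : Alt η) :
    dm n 0 (k+1) (io η) = 0 := by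
  rw [dm_succ, Fin.sum_univ_castSucc, Fin.sum_univ_succ]
  simp only [pow_zero, Module.End.one_apply, face0_mid h, smul_zero, Finset.sum_const_zero,
    add_zero, face0_lst h]
  rw [Fin.castSucc_zero, face0_first, smul_smul, ← pow_add]
  simp only [Fin.val_zero, pow_zero, one_smul, Fin.val_last]
  rw [Odd.neg_one_pow ⟨k, by ring⟩, neg_one_smul, add_neg_cancel]

lemma dm1_io {k : ℕ} {η : (Fin (k+1) → Fin (2*n)) → Apol n} (h : Alt η) :
    dm n 1 (k+1) (io η) - io (dl η) ∈ Deg Kc (Fin (2*n)) (k+1) := by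
  rw [dm_succ, Fin.sum_univ_castSucc, Fin.sum_univ_succ]
  simp only [pow_one, face1_lst h]
  rw [Fin.castSucc_zero, face1_first, smul_smul, ← pow_add]
  simp only [Fin.val_zero, pow_zero, one_smul, Fin.val_last]
  rw [Even.neg_one_pow ⟨k+1, by ring⟩, one_smul]
  have h2 : io (dl η) = algebraMap ℂ Kc (1/2) • io (dl η) + algebraMap ℂ Kc (1/2) • io (dl η) := by
    rw [← add_smul, ← map_add, add_halves, map_one, one_smul]
  have h3 : ∑ x : Fin k, (-1 : ℤ) ^ (x.succ.castSucc).1 • rn (fidx k x.succ.castSucc)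
      (alphaOp n (k+2) x.succ.castSucc (nx x.succ.castSucc) (io η)) ∈ Deg Kc (Fin (2*n)) (k+1) := by
    refine Submodule.sum_mem _ fun i _ => zsmul_mem (fidx_Deg i ?_ ?_) _
    · exact Lin.alpha_left (io_lin _ _ (by simp))
    · have : nx i.succ.castSucc = i.succ.succ := nx_castSucc i.succ
      rw [this]
      exact Lin.alpha_right (io_lin _ _ (by simp))
  have h4 : ∀ A B : Tens n (k+1), A + B + A - (A + A) = B := fun A B => by abel
  nth_rw 3 [h2]
  rw [h4]
  exact h3

lemma dmm_io {k : ℕ} (η : (Fin (k+1) → Fin (2*n)) → Apol n) (m : ℕ) (hm : 2 ≤ m) :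
    dm n m (k+1) (io η) = 0 := by
  rw [dm_succ]
  refine Finset.sum_eq_zero fun j _ => ?_
  rw [io_alpha_sq _ _ _ hm, map_zero, smul_zero]

lemma cm_one : cm 1 = eps := by simp [cm]

theorem dd_io {k : ℕ} {η : (Fin (k+1) → Fin (2*n)) → Apol n} (h : Alt η) :
    dd n (k+1) (io η) - eps • io (dl η) ∈ Deg Kc (Fin (2*n)) (k+1) := by
  rw [dd_eq (k+1) ((io η).totalDegree + 2) _ (by omega), Finset.sum_range_succ', Finset.sum_range_succ']
  rw [Finset.sum_eq_zero (fun m _ => by rw [dmm_io _ _ (by omega), smul_zero]), dm0_io h, smul_zero,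
    add_zero, zero_add, zero_add, cm_one, ← smul_sub]
  exact Submodule.smul_mem _ _ (dm1_io h)

end q3
end HW

namespace HW

section poinc
variable {n : ℕ}

lemma gen_neg {A : Type} [CommRing A] (m : ℤ) (x y : A) : m • (x * -y) = -(m • (x * y)) := by
  rw [mul_neg, smul_neg]

/-- dual coordinate -/
def ys (a : Fin (2*n)) : Apol n := sg a • X (st a)

lemma Db_leib (a : Fin (2*n)) (f g : Apol n) : Db a (f * g) = Db a f * g + f * Db a g := by
  rw [Db_apply, Db_apply, Db_apply, Derivation.leibniz, smul_eq_mul, smul_eq_mul, smul_add, add_comm,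
    mul_comm g, smul_mul_assoc, mul_smul_comm]

lemma st_inj {a b : Fin (2*n)} (h : st a = st b) : a = b := by
  rw [← st_st a, h, st_st]

lemma Db_ys (a b : Fin (2*n)) : Db a (ys b) = if b = a then 1 else 0 := by
  rw [ys, map_zsmul, Db_apply, smul_smul]
  by_cases h : b = a
  · subst h
    rw [if_pos rfl, sg_sg, one_smul, pderiv_X_self]
  · rw [if_neg h, pderiv_X_of_ne (fun hh => h (st_inj hh)), smul_zero]

lemma euler {f : Apol n} {d : ℕ} (h : f.IsHomogeneous d) : ∑ a, ys a * Db a f = (d : Kc) • f := by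
  have h1 : ∀ a : Fin (2*n), ys a * Db a f = X (st a) * pderiv (st a) f := by
    intro a
    rw [ys, Db_apply, smul_mul_assoc, mul_smul_comm, smul_smul, sg_sg, one_smul]
  simp only [h1]
  let e : Equiv.Perm (Fin (2*n)) := ⟨st, st, st_st, st_st⟩
  have := Equiv.sum_comp e (fun a => X a * pderiv a f)
  refine this.trans ?_
  rw [h.sum_X_mul_pderiv]
  rw [Nat.cast_smul_eq_nsmul]

/-- Poincare homotopy -/
def hh {k : ℕ} (ω : (Fin k → Fin (2*n)) → Apol n) (v : Fin (k+1) → Fin (2*n)) : Apol n :=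
  ∑ j : Fin (k+1), (-1:ℤ)^j.val • (ys (v j) * ω (Fin.removeNth j v))

lemma hh_alt {k : ℕ} {ω : (Fin k → Fin (2*n)) → Apol n} (h : Alt ω) : Alt (hh ω) := by
  apply Alt.of_adj
  intro i v
  unfold hh
  let s : Equiv.Perm (Fin (k+1)) := Equiv.swap i.castSucc i.succ
  have hss : ∀ x, s (s x) = x := fun x => by
    rw [← Equiv.Perm.mul_apply, Equiv.swap_mul_self]; rfl
  rw [← Equiv.sum_comp s, ← Finset.sum_neg_distrib]
  refine Finset.sum_congr rfl fun j _ => ?_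
  change (-1:ℤ)^(s j).val • (ys (v (s (s j))) * ω (Fin.removeNth (s j) (v ∘ s))) = _
  rw [hss]
  by_cases hj : j = i.castSucc
  · subst hj
    have h1 : s i.castSucc = i.succ := Equiv.swap_apply_left _ _
    have h2 : Fin.removeNth i.succ (v ∘ s) = Fin.removeNth i.castSucc v := by
      funext x
      change v (s (i.succ.succAbove x)) = v (i.castSucc.succAbove x)
      congr 1
      simp only [s, Equiv.swap_apply_def, Fin.succAbove, Fin.lt_def, Fin.ext_iff]
      split_ifs <;> simp only [Fin.val_succ, Fin.val_castSucc, Fin.ext_iff] at * <;> omega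
    rw [h1, h2, Fin.val_succ, Fin.val_castSucc, pow_succ, mul_neg_one, neg_smul]
  · by_cases hj' : j = i.succ
    · subst hj'
      have h1 : s i.succ = i.castSucc := Equiv.swap_apply_right _ _
      have h2 : Fin.removeNth i.castSucc (v ∘ s) = Fin.removeNth i.succ v := by
        funext x
        change v (s (i.castSucc.succAbove x)) = v (i.succ.succAbove x)
        congr 1
        simp only [s, Equiv.swap_apply_def, Fin.succAbove, Fin.lt_def, Fin.ext_iff]
        split_ifs <;> simp only [Fin.val_succ, Fin.val_castSucc, Fin.ext_iff] at * <;> omega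
      rw [h1, h2, Fin.val_succ, Fin.val_castSucc, pow_succ, mul_neg_one, neg_smul, neg_neg]
    · have h1 : s j = j := Equiv.swap_apply_of_ne_of_ne hj hj'
      obtain ⟨p, hp⟩ := Fin.exists_succAbove_eq (Ne.symm hj)
      obtain ⟨q, hq⟩ := Fin.exists_succAbove_eq (Ne.symm hj')
      have hpq : p ≠ q := by
        rintro rfl
        exact (Fin.castSucc_lt_succ (i := i)).ne (hp.symm.trans hq)
      have h2 : Fin.removeNth j (v ∘ s) = Fin.removeNth j v ∘ Equiv.swap p q := by
        funext x
        change v (s (j.succAbove x)) = v (j.succAbove (Equiv.swap p q x))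
        congr 1
        simp only [s]
        rw [← hp, ← hq]
        exact Function.Injective.swap_apply Fin.succAbove_right_injective _ _ _
      have h3 : ((Equiv.Perm.sign (Equiv.swap p q) : ℤˣ) : ℤ) = -1 := by
        rw [Equiv.Perm.sign_swap hpq]; rfl
      have h4 : ω (Fin.removeNth j v ∘ Equiv.swap p q) = - ω (Fin.removeNth j v) := by
        refine (h (Equiv.swap p q) (Fin.removeNth j v)).trans ?_
        rw [h3]
        exact neg_one_smul ℤ (ω (Fin.removeNth j v))
      rw [h1, h2, h4]
      exact gen_neg _ _ _

lemma alt_removeNth {k : ℕ} {ω : (Fin (k+1) → Fin (2*n)) → Apol n} (h : Alt ω) (u : Fin (k+1) → Fin (2*n))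
    (j : Fin (k+1)) : ω (Fin.cons (u j) (Fin.removeNth j u)) = (-1:ℤ)^j.val • ω u := by
  have := Fin.cons_removeNth_eq_comp_cycleRange_symm u j
  rw [this, h, Equiv.Perm.sign_symm, Fin.sign_cycleRange]
  simp

lemma dl_hh_zero {d : ℕ} {ω : (Fin 0 → Fin (2*n)) → Apol n} (hω : ∀ v, (ω v).IsHomogeneous d)
    (u : Fin 0 → Fin (2*n)) : dl (hh ω) u = ((2*n + d : ℕ) : Kc) • ω u := by
  unfold dl hh
  simp only [Fin.sum_univ_succ, Finset.univ_eq_empty, Finset.sum_empty, add_zero, Fin.val_zero, pow_zero,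
    one_smul, Fin.cons_zero, Db_leib, Db_ys, if_true, one_mul, Finset.sum_add_distrib]
  have : ∀ a : Fin (2*n), Fin.removeNth 0 (Fin.cons a u : Fin 1 → Fin (2*n)) = u := fun a => Subsingleton.elim _ _
  simp only [this]
  rw [euler (hω u), Nat.cast_add, add_smul, Nat.cast_smul_eq_nsmul, Nat.cast_smul_eq_nsmul,
    Finset.sum_const, Finset.card_univ, Fintype.card_fin]

lemma dl_hh {k d : ℕ} {ω : (Fin (k+1) → Fin (2*n)) → Apol n} (h : Alt ω)
    (hω : ∀ v, (ω v).IsHomogeneous d)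
    (u : Fin (k+1) → Fin (2*n)) : dl (hh ω) u + hh (dl ω) u =
      (((2*n + d : ℕ) : Kc) - ((k+1 : ℕ) : Kc)) • ω u := by
  have h1 : ∀ a : Fin (2*n), hh ω (Fin.cons a u) = ys a * ω u - ∑ j : Fin (k+1),
      (-1:ℤ)^j.val • (ys (u j) * ω (Fin.cons a (Fin.removeNth j u))) := by
    intro a
    unfold hh
    rw [Fin.sum_univ_succ, sub_eq_add_neg, ← Finset.sum_neg_distrib]
    congr 1
    · rw [Fin.val_zero, pow_zero, one_smul, Fin.cons_zero, Fin.removeNth_zero, Fin.tail_cons]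
    · refine Finset.sum_congr rfl fun j _ => ?_
      have : Fin.removeNth j.succ (Fin.cons a u : Fin (k+2) → Fin (2*n)) =
          (Fin.cons a (Fin.removeNth j u) : Fin (k+1) → Fin (2*n)) := by
        funext x
        refine Fin.cases ?_ (fun y => ?_) x
        · simp [Fin.removeNth_apply]
        · simp [Fin.removeNth_apply]
      rw [this, Fin.cons_succ, Fin.val_succ, pow_succ, mul_neg_one, neg_smul]
  have h2 : ∀ a : Fin (2*n), Db a (hh ω (Fin.cons a u)) = (ω u + ys a * Db a (ω u)) -
      ∑ j : Fin (k+1), ((-1:ℤ)^j.val • ((if u j = a then ω (Fin.cons a (Fin.removeNth j u)) else 0)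
        + ys (u j) * Db a (ω (Fin.cons a (Fin.removeNth j u))))) := by
    intro a
    rw [h1, map_sub, map_sum, Db_leib, Db_ys, if_pos rfl, one_mul]
    congr 1
    refine Finset.sum_congr rfl fun j _ => ?_
    rw [map_zsmul, Db_leib, Db_ys, ite_mul, one_mul, zero_mul]
  have h3 : dl (hh ω) u = ∑ a, Db a (hh ω (Fin.cons a u)) := rfl
  rw [h3]
  simp only [h2]
  rw [Finset.sum_sub_distrib, Finset.sum_add_distrib, euler (hω u), Finset.sum_comm]
  have h4 : ∀ j : Fin (k+1), ∑ a, ((-1:ℤ)^j.val • ((if u j = a then ω (Fin.cons a (Fin.removeNth j u)) else 0)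
        + ys (u j) * Db a (ω (Fin.cons a (Fin.removeNth j u))))) =
      ω u + (-1:ℤ)^j.val • (ys (u j) * dl ω (Fin.removeNth j u)) := by
    intro j
    rw [← Finset.smul_sum, Finset.sum_add_distrib, Finset.sum_ite_eq, if_pos (Finset.mem_univ _),
      alt_removeNth h, smul_add, smul_smul, ← pow_add, Even.neg_one_pow ⟨j.val, rfl⟩, one_smul,
      ← Finset.mul_sum]
    rfl
  simp only [h4]
  rw [Finset.sum_add_distrib]
  have h5 : hh (dl ω) u = ∑ j : Fin (k+1), (-1:ℤ)^j.val • (ys (u j) * dl ω (Fin.removeNth j u)) := rfl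
  rw [← h5]
  simp only [Finset.sum_const, Finset.card_univ, Fintype.card_fin]
  rw [sub_smul, Nat.cast_smul_eq_nsmul, Nat.cast_smul_eq_nsmul, Nat.cast_smul_eq_nsmul, add_smul (2*n) d]
  abel

end poinc
end HW

namespace HW

section loop
variable {n : ℕ}

/-- degree bound -/
def Low {σ : Type} (N : ℕ) (P : MvPolynomial σ Kc) : Prop :=
  ∀ e, N ≤ e → homogeneousComponent e P = 0

lemma Low.exists {σ : Type} (P : MvPolynomial σ Kc) : ∃ N, Low N P :=
  ⟨P.totalDegree + 1, fun e he => homogeneousComponent_eq_zero _ _ (by omega)⟩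

lemma Low.zero {σ : Type} {P : MvPolynomial σ Kc} (h : Low 0 P) : P = 0 :=
  hc_ext fun e => by rw [h e (Nat.zero_le _), map_zero]

lemma Low.sub {σ : Type} {N : ℕ} {P Q : MvPolynomial σ Kc} (hP : Low N P) (hQ : Low N Q) : Low N (P - Q) :=
  fun e he => by rw [map_sub, hP e he, hQ e he, sub_zero]

lemma Low.mono {σ : Type} {N M : ℕ} {P : MvPolynomial σ Kc} (hP : Low N P) (h : N ≤ M) : Low M P :=
  fun e he => hP e (h.trans he)

lemma Low.hom {σ : Type} {N : ℕ} {P : MvPolynomial σ Kc} (hP : P.IsHomogeneous N) : Low (N+1) P :=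
  fun e he => hom_iff.1 hP e (by omega)

lemma hc_hc {σ : Type} (N : ℕ) (P : MvPolynomial σ Kc) :
    homogeneousComponent N (homogeneousComponent N P) = homogeneousComponent N P := by
  rw [homogeneousComponent_of_mem (homogeneousComponent_isHomogeneous N P), if_pos rfl]

lemma hc_dd (k e : ℕ) {P : Tens n (k+1)} (h : Low (e+2) P) :
    homogeneousComponent e (dd n k P) = d0 k (homogeneousComponent e P) := by
  rw [dd_eq k (P.totalDegree + 1) P (Nat.lt_succ_self _), map_sum, Finset.sum_range_succ']
  rw [Finset.sum_eq_zero, zero_add, map_smul, shift_dm, dm_zero_eq]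
  · simp [cm]
  · intro m _
    rw [map_smul, shift_dm, h _ (by omega), map_zero, smul_zero]

lemma Low.dd {k N : ℕ} {P : Tens n (k+1)} (h : Low N P) : Low N (dd n k P) := by
  intro e he
  rw [hc_dd k e (h.mono (by omega)), h e he, map_zero]

lemma Alt.zero {M V : Type} [AddCommGroup M] {k : ℕ} : Alt (0 : (Fin k → V) → M) := by
  intro σ v
  simp

lemma step {k N : ℕ} {P : Tens n (k+1)} (hP : Low (N+1) P)
    (h : d0 k (homogeneousComponent N P) ∈ Deg Kc (Fin (2*n)) k) :
    ∃ (ω : (Fin k → Fin (2*n)) → Apol n) (Q : Tens n (k+2)) (P2 : Tens n (k+1)), Alt ω ∧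
      (N < k → ω = 0) ∧ (∀ a, N = a + k → ∀ v, (ω v).IsHomogeneous a) ∧ Low N P2 ∧
      P - dd n (k+1) Q - io ω - P2 ∈ Deg Kc (Fin (2*n)) (k+1) := by
  obtain ⟨ω, hω, Q, hQ⟩ := hkr_surj h
  have h1 := hc_Deg hQ N
  rw [map_sub, map_sub, hc_hc, shift_d0, add_zero] at h1
  set Q' := homogeneousComponent N Q with hQ'
  have hQL : Low (N+1) Q' := Low.hom (homogeneousComponent_isHomogeneous _ _)
  obtain ⟨ω', hA, hz, hh', hio⟩ : ∃ ω' : (Fin k → Fin (2*n)) → Apol n, Alt ω' ∧ (N < k → ω' = 0) ∧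
      (∀ a, N = a + k → ∀ v, (ω' v).IsHomogeneous a) ∧ io ω' = homogeneousComponent N (io ω) := by
    by_cases hk : k ≤ N
    · refine ⟨fun v => homogeneousComponent (N - k) (ω v), ?_, fun h => by omega, ?_, ?_⟩
      · intro σ v
        change homogeneousComponent (N - k) (ω (v ∘ σ)) = _
        rw [hω, map_zsmul]
      · intro a ha v
        have := homogeneousComponent_isHomogeneous (N - k) (ω v)
        rwa [show N - k = a by omega] at this ⊢
      · rw [hc_io, if_pos hk]
    · refine ⟨0, Alt.zero, fun _ => rfl, fun a ha => by omega, ?_⟩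
      rw [hc_io, if_neg hk, io_zero]
  rw [← hio] at h1
  have hioL : Low (N+1) (io ω') := by
    rw [hio]; exact Low.hom (homogeneousComponent_isHomogeneous _ _)
  set P1 := P - dd n (k+1) Q' - io ω' with hP1
  have hP1L : Low (N+1) P1 := (hP.sub hQL.dd).sub hioL
  have hP1c : homogeneousComponent N P1 ∈ Deg Kc (Fin (2*n)) (k+1) := by
    have : homogeneousComponent N P1 = homogeneousComponent N P - io ω' - d0 (k+1) Q' := by
      rw [hP1, map_sub, map_sub, hc_dd _ _ (hQL.mono (by omega)), hQ', hc_hc, hio, hc_hc]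
      exact sub_right_comm _ _ _
    rw [this]; exact h1
  refine ⟨ω', Q', P1 - homogeneousComponent N P1, hA, hz, hh', ?_, ?_⟩
  · intro e he
    by_cases h2 : e = N
    · rw [h2, map_sub, hc_hc, sub_self]
    · rw [map_sub, hP1L e (by omega), hom_iff.1 (homogeneousComponent_isHomogeneous N P1) e h2, sub_zero]
  · rw [← hP1, sub_sub_cancel]
    exact hP1c

lemma hom_zero {f : Apol n} (h : f.IsHomogeneous 0) : f = C (coeff 0 f) :=
  totalDegree_eq_zero_iff_eq_C.1 (Nat.le_zero.1 h.totalDegree_le)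

lemma dl_const {k : ℕ} {ω : (Fin (k+1) → Fin (2*n)) → Apol n} (h : ∀ v, (ω v).IsHomogeneous 0) :
    dl ω = 0 := by
  funext u
  refine Finset.sum_eq_zero fun a _ => ?_
  rw [hom_zero (h _), Db_apply, pderiv_C, smul_zero]

lemma dl_hom {k a : ℕ} {ω : (Fin (k+1) → Fin (2*n)) → Apol n} (h : ∀ v, (ω v).IsHomogeneous (a+1))
    (u : Fin k → Fin (2*n)) : (dl ω u).IsHomogeneous a := by
  refine IsHomogeneous.sum _ _ _ fun b _ => ?_
  rw [Db_apply]
  have h1 : (pderiv (st b) (ω (Fin.cons b u))).IsHomogeneous a := (h _).pderiv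
  rw [hom_iff] at h1 ⊢
  intro e he
  rw [map_zsmul, h1 e he, smul_zero]

lemma dl_smul {k : ℕ} (c : Kc) (ω : (Fin (k+1) → Fin (2*n)) → Apol n) : dl (c • ω) = c • dl ω := by
  funext u
  simp only [dl, Pi.smul_apply, Finset.smul_sum, map_smul]

lemma Alt.smul {k : ℕ} (c : Kc) {ω : (Fin k → Fin (2*n)) → Apol n} (h : Alt ω) : Alt (c • ω) := by
  intro σ v
  rw [Pi.smul_apply, Pi.smul_apply, h, smul_comm]

/-- closed forms -/
def Cl : (k : ℕ) → ((Fin k → Fin (2*n)) → Apol n) → Prop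
  | 0, _ => True
  | (_+1), ω => dl ω = 0

lemma hh_zero {k : ℕ} : hh (0 : (Fin k → Fin (2*n)) → Apol n) = 0 := by
  funext u
  simp [hh]

lemma dl_hh_cl {k d : ℕ} {ω : (Fin k → Fin (2*n)) → Apol n} (h : Alt ω) (hc : Cl k ω)
    (hω : ∀ v, (ω v).IsHomogeneous d) : dl (hh ω) = (((2*n + d : ℕ) : Kc) - (k : Kc)) • ω := by
  funext u
  cases k with
  | zero => rw [dl_hh_zero hω, Nat.cast_zero, sub_zero]; rfl
  | succ k =>
    have := dl_hh h hω u
    have hc' : dl ω = 0 := hc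
    rw [hc', hh_zero, Pi.zero_apply, add_zero] at this
    exact this

/-- inverse of eps -/
lemma eps_inv : ∃ ei : Kc, ei * eps = 1 :=
  ⟨LaurentPolynomial.T (-1), by rw [eps, ← LaurentPolynomial.T_add]; simp⟩

lemma exact_form {k d : ℕ} {ω : (Fin k → Fin (2*n)) → Apol n} (h : Alt ω) (hc : Cl k ω)
    (hω : ∀ v, (ω v).IsHomogeneous d) (hk : 2*n+d ≠ k) :
    ∃ Q : Tens n (k+2), io ω - dd n (k+1) Q ∈ Deg Kc (Fin (2*n)) (k+1) := by
  obtain ⟨c, hc'⟩ : ∃ c : Kc, c * (((2*n + d : ℕ) : Kc) - (k : Kc)) = 1 := by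
    refine ⟨algebraMap ℂ Kc ((((2*n + d : ℕ) : ℂ) - (k : ℂ))⁻¹), ?_⟩
    have h1 : (((2*n + d : ℕ) : ℂ) - (k : ℂ)) ≠ 0 := by
      rw [sub_ne_zero]; exact_mod_cast hk
    have h2 : (((2*n + d : ℕ) : Kc) - (k : Kc)) = algebraMap ℂ Kc (((2*n + d : ℕ) : ℂ) - (k : ℂ)) := by
      rw [map_sub, map_natCast, map_natCast]
    rw [h2, ← map_mul, inv_mul_cancel₀ h1, map_one]
  obtain ⟨ei, hei⟩ := eps_inv
  have h3 : dl (c • hh ω) = ω := by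
    rw [dl_smul, dl_hh_cl h hc hω, smul_smul, hc', one_smul]
  have h4 := dd_io ((hh_alt h).smul c)
  rw [h3] at h4
  refine ⟨ei • io (c • hh ω), ?_⟩
  have h5 := Submodule.smul_mem _ (-ei) h4
  rw [smul_sub, smul_smul, neg_mul, hei, neg_smul, neg_smul, one_smul, sub_neg_eq_add] at h5
  rw [map_smul, sub_eq_neg_add]
  exact h5

/-- constant forms, zero outside the top degree -/
def Top (k : ℕ) (ω : (Fin k → Fin (2*n)) → Apol n) : Prop :=
  Alt ω ∧ (∀ v, (ω v).IsHomogeneous 0) ∧ (k ≠ 2*n → ω = 0)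

lemma Top.zero (k : ℕ) : Top k (0 : (Fin k → Fin (2*n)) → Apol n) :=
  ⟨Alt.zero, fun _ => isHomogeneous_zero _ _ _, fun _ => rfl⟩

lemma Top.add {k : ℕ} {ω η : (Fin k → Fin (2*n)) → Apol n} (h : Top k ω) (h' : Top k η) : Top k (ω + η) := by
  refine ⟨fun σ v => ?_, fun v => (h.2.1 v).add (h'.2.1 v), fun hk => ?_⟩
  · rw [Pi.add_apply, Pi.add_apply, h.1, h'.1, smul_add]
  · rw [h.2.2 hk, h'.2.2 hk, add_zero]

lemma Top.dd {k : ℕ} {ω : (Fin k → Fin (2*n)) → Apol n} (h : Top k ω) :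
    dd n k (io ω) ∈ Deg Kc (Fin (2*n)) k := by
  cases k with
  | zero => rw [dd_zero]; exact zero_mem _
  | succ k =>
    have := dd_io h.1
    rwa [dl_const h.2.1, io_zero, smul_zero, sub_zero] at this

lemma alt_big {k : ℕ} {ω : (Fin k → Fin (2*n)) → Apol n} (h : Alt ω) (hk : 2*n < k) : ω = 0 := by
  funext v
  refine h.eq_zero two_tors fun hi => ?_
  have := Fintype.card_le_of_injective v hi
  simp at this
  omega

lemma closed_form {k d : ℕ} {ω : (Fin k → Fin (2*n)) → Apol n} (h : Alt ω) (hc : Cl k ω)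
    (hω : ∀ v, (ω v).IsHomogeneous d) :
    ∃ (ω0 : (Fin k → Fin (2*n)) → Apol n) (Q : Tens n (k+2)), Top k ω0 ∧
      io ω - io ω0 - dd n (k+1) Q ∈ Deg Kc (Fin (2*n)) (k+1) := by
  by_cases hk : 2*n+d = k
  · by_cases hd : d = 0
    · subst hd
      refine ⟨ω, 0, ⟨h, hω, fun h => by omega⟩, ?_⟩
      rw [sub_self, map_zero, sub_zero]; exact zero_mem _
    · refine ⟨0, 0, Top.zero k, ?_⟩
      rw [alt_big h (by omega), sub_self, map_zero, sub_zero]; exact zero_mem _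
  · obtain ⟨Q, hQ⟩ := exact_form h hc hω hk
    refine ⟨0, Q, Top.zero k, ?_⟩
    rw [io_zero, sub_zero]; exact hQ

lemma form_closed {k a : ℕ} {ω : (Fin k → Fin (2*n)) → Apol n} (h : Alt ω)
    (hω : ∀ v, (ω v).IsHomogeneous a) {P2 : Tens n (k+1)} (hP : Low (a+k) P2)
    (hd : dd n k (io ω) + dd n k P2 ∈ Deg Kc (Fin (2*n)) k) : Cl k ω := by
  cases k with
  | zero => trivial
  | succ k =>
    change dl ω = 0
    cases a with
    | zero => exact dl_const hω
    | succ a =>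
      have h1 := sub_mem hd (dd_io h)
      have h2 : ∀ A B D : Tens n (k+1), A + B - (A - D) = D + B := fun A B D => by abel
      rw [h2] at h1
      have h3 := hc_Deg h1 (a + k)
      rw [map_add, map_smul, hc_dd _ _ (hP.mono (by omega)),
        homogeneousComponent_of_mem (io_hom (dl_hom hω)), if_pos rfl] at h3
      obtain ⟨ei, hei⟩ := eps_inv
      apply hkr_inj (Q := -(ei • homogeneousComponent (a+k) P2))
      have h4 := Submodule.smul_mem _ ei h3
      rw [smul_add, smul_smul, hei, one_smul] at h4
      rw [map_neg, sub_neg_eq_add, map_smul]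
      exact h4

theorem cycles {k : ℕ} (N : ℕ) : ∀ {P : Tens n (k+1)}, Low N P → dd n k P ∈ Deg Kc (Fin (2*n)) k →
    ∃ (ω0 : (Fin k → Fin (2*n)) → Apol n) (Q : Tens n (k+2)), Top k ω0 ∧
      P - io ω0 - dd n (k+1) Q ∈ Deg Kc (Fin (2*n)) (k+1) := by
  induction N with
  | zero =>
    intro P hP _
    refine ⟨0, 0, Top.zero k, ?_⟩
    rw [hP.zero, io_zero, map_zero, sub_zero, sub_zero]; exact zero_mem _
  | succ N ih =>
    intro P hP hd
    have h0 := hc_Deg hd N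
    rw [hc_dd k N (hP.mono (by omega))] at h0
    obtain ⟨ω, Q, P2, hA, hz, hh', hL, hD⟩ := step hP h0
    have h1 := dd_Deg k hD
    rw [map_sub, map_sub, map_sub, dd_dd, sub_zero] at h1
    have h2 : dd n k (io ω) + dd n k P2 ∈ Deg Kc (Fin (2*n)) k := by
      have := sub_mem hd h1
      have e : ∀ A B D : Tens n k, A - (A - B - D) = B + D := fun A B D => by abel
      rwa [e] at this
    obtain ⟨ω1, Q1, hT1, hD1⟩ : ∃ (ω0 : (Fin k → Fin (2*n)) → Apol n) (Q : Tens n (k+2)), Top k ω0 ∧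
        io ω - io ω0 - dd n (k+1) Q ∈ Deg Kc (Fin (2*n)) (k+1) := by
      by_cases hk : N < k
      · refine ⟨0, 0, Top.zero k, ?_⟩
        rw [hz hk, sub_self, map_zero, sub_zero]; exact zero_mem _
      · have hN : N = (N - k) + k := by omega
        have hom := hh' _ hN
        refine closed_form hA (form_closed hA hom (P2 := P2) ?_ h2) hom
        rwa [← hN]
    have h3 := dd_Deg k hD1
    rw [map_sub, map_sub, dd_dd, sub_zero] at h3
    have h4 : dd n k P2 ∈ Deg Kc (Fin (2*n)) k := by
      have := sub_mem (sub_mem h2 h3) hT1.dd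
      have e : ∀ A B D : Tens n k, A + B - (A - D) - D = B := fun A B D => by abel
      rwa [e] at this
    obtain ⟨ω2, Q2, hT2, hD2⟩ := ih hL h4
    refine ⟨ω1 + ω2, Q + Q1 + Q2, hT1.add hT2, ?_⟩
    have := add_mem (add_mem hD hD1) hD2
    rw [map_add, map_add, io_add]
    have e : ∀ a b c d e f g h : Tens n (k+1), a - b - c - d + (c - e - f) + (d - g - h) =
      a - (e + g) - (b + f + h) := fun a b c d e f g h => by abel
    rwa [e] at this

theorem uniq {ω0 : (Fin (2*n) → Fin (2*n)) → Apol n} (h0 : ∀ v, (ω0 v).IsHomogeneous 0) (N : ℕ) :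
    ∀ {Q : Tens n (2*n+2)}, Low N Q → io ω0 - dd n (2*n+1) Q ∈ Deg Kc (Fin (2*n)) (2*n+1) → ω0 = 0 := by
  have hio : (io ω0).IsHomogeneous (0 + 2*n) := io_hom h0
  rw [zero_add] at hio
  induction N with
  | zero =>
    intro Q hQ hD
    rw [hQ.zero, map_zero] at hD
    apply hkr_inj (Q := 0)
    rwa [map_zero]
  | succ N ih =>
    intro Q hQ hD
    by_cases hN : N + 1 ≤ 2*n+2
    · have := hc_Deg hD (2*n)
      rw [map_sub, hc_dd _ _ (hQ.mono hN), homogeneousComponent_of_mem hio, if_pos rfl] at this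
      exact hkr_inj this
    · have := hc_Deg hD N
      rw [map_sub, hc_dd _ _ (hQ.mono (by omega)), homogeneousComponent_of_mem hio, if_neg (by omega),
        zero_sub, neg_mem_iff] at this
      obtain ⟨ω, Q', P2, hA, hz, hh', hL, hD'⟩ := step hQ this
      rw [alt_big hA (by omega), io_zero, sub_zero] at hD'
      have h1 := dd_Deg _ hD'
      rw [map_sub, map_sub, dd_dd, sub_zero] at h1
      apply ih hL
      have h2 := add_mem hD h1
      rwa [sub_add_sub_cancel] at h2

end loop
end HW

namespace HW

section final
variable {n : ℕ}

lemma setZeroS_eq (k : ℕ) (S : Finset (Fin k)) (P : Tens n k) : setZeroS n k S P = sz S P := rfl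

lemma projI_eq (k : ℕ) (P : Tens n (k+1)) : projI n k P = proj Kc (Fin (2*n)) (k+1) P := by
  rw [proj_apply, projI]
  refine Finset.sum_congr ?_ fun S _ => by rw [setZeroS_eq]
  ext S
  rw [mem_adm, Finset.mem_filter]
  constructor
  · rintro ⟨_, h⟩ s hs h0
    apply h
    have : s = 0 := Fin.ext h0
    rwa [← this]
  · intro h
    exact ⟨Finset.mem_univ _, fun h0 => h 0 h0 rfl⟩

lemma norm_iff (k : ℕ) (P : Tens n (k+1)) : IsNormT n k P ↔ P ∈ Nm Kc (Fin (2*n)) (k+1) := by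
  rw [mem_Nm]
  constructor
  · intro h s hs
    exact h s (fun h0 => hs (by rw [h0]; rfl))
  · intro h s hs
    exact h s (fun h0 => hs (Fin.ext h0))

lemma cycle_iff (k : ℕ) (P : Tens n (k+1)) : IsCycleT n k P ↔ dd n k P ∈ Deg Kc (Fin (2*n)) k := by
  cases k with
  | zero => 
    rw [dd_zero]
    exact ⟨fun _ => zero_mem _, fun _ => trivial⟩
  | succ k =>
    change projI n k (dH n k P) = 0 ↔ _
    rw [projI_eq, dH_eq]
    exact ⟨fun h => Deg_of_proj h, fun h => proj_Deg h⟩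

lemma bdry (k : ℕ) (Q : Tens n (k+2)) : ∃ Q' : Tens n (k+2), IsNormT n (k+1) Q' ∧
    projI n k (dH n k Q') = proj Kc (Fin (2*n)) (k+1) (dd n (k+1) Q) := by
  refine ⟨proj Kc (Fin (2*n)) (k+2) Q, (norm_iff _ _).2 (proj_mem_Nm _), ?_⟩
  rw [projI_eq, dH_eq, ← sub_eq_zero, ← map_sub, ← map_sub]
  apply proj_Deg
  apply dd_Deg
  rw [← neg_sub, neg_mem_iff]
  exact sub_proj_mem _

lemma io_top {ω : (Fin (2*n) → Fin (2*n)) → Apol n} (h : Alt ω) (h0 : ∀ v, (ω v).IsHomogeneous 0) :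
    io ω = coeff 0 (ω id) • c2n n := by
  unfold io c2n
  rw [Finset.smul_sum]
  symm
  refine Finset.sum_of_injOn (fun σ : Equiv.Perm (Fin (2*n)) => (σ : Fin (2*n) → Fin (2*n))) ?_ ?_ ?_ ?_
  · intro σ _ τ _ h
    exact DFunLike.coe_injective h
  · intro σ _
    simp
  · intro v _ hv
    have : ω v = 0 := by
      refine h.eq_zero two_tors fun hi => hv ?_
      refine ⟨Equiv.ofBijective v (Finite.injective_iff_bijective.1 hi), by simp, ?_⟩
      rfl
    rw [this, map_zero, zero_mul]
  · intro σ _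
    have h1 : ω σ = C ((Equiv.Perm.sign σ : ℤ) • coeff 0 (ω id)) := by
      have h2 := h σ id
      rw [Function.id_comp] at h2
      rw [h2]
      conv_lhs => rw [hom_zero (h0 id)]
      rw [map_zsmul]
    have h3 : elemT (Fin.cons 1 (fun i : Fin (2*n) => (X (σ i) : Apol n))) =
        (∏ i : Fin (2*n), X (i.succ, σ i) : Tens n (2*n+1)) := by
      unfold elemT embA
      rw [Fin.prod_univ_succ, Fin.cons_zero, map_one, one_mul]
      refine Finset.prod_congr rfl fun i _ => ?_
      rw [Fin.cons_succ, rename_X]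
    rw [h1, rename_C, h3, ← smul_eq_C_mul, smul_comm, smul_assoc]

/-- volume form -/
def vol (n : ℕ) (v : Fin (2*n) → Fin (2*n)) : Apol n :=
  ∑ τ : Equiv.Perm (Fin (2*n)), if (τ : Fin (2*n) → Fin (2*n)) = v then (Equiv.Perm.sign τ : ℤ) • 1 else 0

lemma vol_alt : Alt (vol n) := by
  intro σ v
  unfold vol
  rw [← Equiv.sum_comp (Equiv.mulRight σ), Finset.smul_sum]
  refine Finset.sum_congr rfl fun τ _ => ?_
  rw [Equiv.coe_mulRight, smul_ite, smul_zero, smul_smul]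
  have : ((τ * σ : Equiv.Perm (Fin (2*n))) : Fin (2*n) → Fin (2*n)) = v ∘ σ ↔ 
      (τ : Fin (2*n) → Fin (2*n)) = v := by
    rw [Equiv.Perm.coe_mul]
    exact σ.surjective.right_cancellable
  simp only [this, Equiv.Perm.sign_mul, Units.val_mul]
  rw [mul_comm (Equiv.Perm.sign τ : ℤ)]

lemma vol_hom (v : Fin (2*n) → Fin (2*n)) : (vol n v).IsHomogeneous 0 := by
  refine IsHomogeneous.sum _ _ _ fun τ _ => ?_
  split_ifs
  · have : (1 : Apol n).IsHomogeneous 0 := isHomogeneous_one _ _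
    rw [hom_iff] at this ⊢
    intro e he
    rw [map_zsmul, this e he, smul_zero]
  · exact isHomogeneous_zero _ _ _

lemma vol_id : vol n id = 1 := by
  unfold vol
  rw [Finset.sum_eq_single 1]
  · simp
  · intro τ _ h
    rw [if_neg]
    intro h'
    exact h (DFunLike.coe_injective h')
  · simp

lemma vol_top : Top (2*n) (vol n) := ⟨vol_alt, vol_hom, fun h => absurd rfl h⟩

lemma c2n_eq : c2n n = io (vol n) := by
  rw [io_top vol_alt vol_hom, vol_id, coeff_zero_one, one_smul]

lemma io_Nm {k : ℕ} (ω : (Fin k → Fin (2*n)) → Apol n) : io ω ∈ Nm Kc (Fin (2*n)) (k+1) := by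
  rw [mem_Nm]
  intro s hs
  obtain ⟨i, rfl⟩ := Fin.exists_succ_eq.2 (fun h : s = 0 => hs (by rw [h]; rfl))
  unfold io
  rw [map_sum]
  refine Finset.sum_eq_zero fun v _ => ?_
  rw [map_mul, map_prod]
  have : ∏ x : Fin k, sz {i.succ} (X (x.succ, v x) : Tens n (k+1)) = 0 := by
    apply Finset.prod_eq_zero (Finset.mem_univ i)
    rw [sz_X, if_pos (Finset.mem_singleton_self _)]
  rw [this, mul_zero]

end final
end HW

open HW

/-- the Hochschild homology of the polynomial Weyl algebra (computed by the
normalized Hochschild chain complex) vanishes in every degree `k ≠ 2n`, and in degree `2n`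
it is a free `K`-module of rank one generated by the class of `c_{2n}`. -/
theorem hochschild_homology_weyl (n : ℕ) :
    IsNormT n (2*n) (c2n n) ∧
    IsCycleT n (2*n) (c2n n) ∧
    (∀ k : ℕ, k ≠ 2*n → ∀ P : Tens n (k+1), IsNormT n k P → IsCycleT n k P →
      ∃ Q : Tens n (k+2), IsNormT n (k+1) Q ∧ projI n k (dH n k Q) = P) ∧
    (∀ P : Tens n (2*n+1), IsNormT n (2*n) P → IsCycleT n (2*n) P →
      ∃! c : Kc, ∃ Q : Tens n (2*n+2), IsNormT n (2*n+1) Q ∧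
        P = c • c2n n + projI n (2*n) (dH n (2*n) Q)) := by
  refine ⟨?_, ?_, ?_, ?_⟩
  · rw [norm_iff, c2n_eq]
    exact io_Nm _
  · rw [cycle_iff, c2n_eq]
    exact vol_top.dd
  · intro k hk P hN hC
    rw [norm_iff] at hN
    rw [cycle_iff] at hC
    obtain ⟨N, hL⟩ := Low.exists P
    obtain ⟨ω0, Q, hT, hD⟩ := cycles N hL hC
    rw [hT.2.2 hk, io_zero, sub_zero] at hD
    obtain ⟨Q', h1, h2⟩ := bdry k Q
    refine ⟨Q', h1, ?_⟩
    have h3 := proj_Deg hD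
    rw [map_sub, proj_of_Nm hN, sub_eq_zero] at h3
    rw [h2, h3]
  · intro P hN hC
    rw [norm_iff] at hN
    rw [cycle_iff] at hC
    obtain ⟨N, hL⟩ := Low.exists P
    obtain ⟨ω0, Q, hT, hD⟩ := cycles N hL hC
    rw [io_top hT.1 hT.2.1] at hD
    obtain ⟨Q', h1, h2⟩ := bdry (2*n) Q
    have hc : c2n n ∈ Nm Kc (Fin (2*n)) (2*n+1) := by
      rw [c2n_eq]; exact io_Nm _
    have h3 := proj_Deg hD
    rw [map_sub, map_sub, map_smul, proj_of_Nm hN, proj_of_Nm hc, ← h2, sub_sub, sub_eq_zero] at h3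
    refine ⟨coeff 0 (ω0 id), ⟨Q', h1, h3⟩, ?_⟩
    rintro c ⟨Q2, -, hQ2⟩
    have h4 : (c - coeff 0 (ω0 id)) • c2n n = projI n (2*n) (dH n (2*n) Q') - projI n (2*n) (dH n (2*n) Q2) := by
      rw [sub_smul, sub_eq_sub_iff_add_eq_add, ← hQ2, h3]
      exact add_comm _ _
    rw [projI_eq, projI_eq, dH_eq, dH_eq, ← map_sub, ← map_sub] at h4
    obtain ⟨M, hM⟩ := Low.exists (Q' - Q2)
    have h5 : io ((c - coeff 0 (ω0 id)) • vol n) - dd n (2*n+1) (Q' - Q2) ∈ Deg Kc (Fin (2*n)) (2*n+1) := by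
      rw [io_smul, ← c2n_eq, h4, ← neg_sub, neg_mem_iff]
      exact sub_proj_mem _
    have h6 := uniq (fun v => by
      have := vol_hom v
      rw [hom_iff] at this ⊢
      intro e he
      rw [Pi.smul_apply, map_smul, this e he, smul_zero]) M hM h5
    have h7 := congrFun h6 id
    rw [Pi.smul_apply, vol_id, Pi.zero_apply] at h7
    have h8 := congrArg (coeff 0) h7
    rw [coeff_smul, coeff_zero_one, smul_eq_mul, mul_one, coeff_zero, sub_eq_zero] at h8
    exact h8

end
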